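/- arXiv:2105.02442 — 2 statements merged into one kernel-verified Lean document; each statement's English description precedes it below -/
import Mathlib

section
/- Let q be an odd prime power, let J be a fixed invertible antisymmetric 4×4 matrix over F_q (e.g. the standard symplectic form matrix), let Sp_4(q) = {A ∈ GL_4(F_q) : A J Aᵀ = J} and GSp_4(q) = {A ∈ GL_4(F_q) : A J Aᵀ = λJ for some λ ∈ F_q^*}, and let L and Ĝ be the images of Sp_4(q) and GSp_4(q) respectively in the quotient of GSp_4(q) by its subgroup of scalar matrices (so L ≅ PSp_4(q) is normal in Ĝ ≅ PGSp_4(q)). Then for every involution x ∈ Ĝ there exist g_1, g_2, g_3, g_4 ∈ L such that 5 divides the order of the subgroup ⟨x^{g_1}, x^{g_2}, x^{g_3}, x^{g_4}⟩. -/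
/-!
Let `V` be the five-dimensional space of trace-zero matrices `X` with `X J = J Xᵀ`. Each such `X` has
a scalar square, which makes `V` a quadratic space, and conjugation identifies `PGSp₄(q)` with
`SO(V)`. Let `A` be a similitude representing the involution, so that `A² = μ` and `A J Aᵀ = ± μ J`.
In each case, up to a change of basis, `A` depends only on `μ` and on the sign
(`normal_form_selfAdjoint`, `normal_form_antiSelfAdjoint`), so it is enough to treat one
representative. It is shown that a product of four conjugates of `A` under `Sp₄(q)` can be made to
have order exactly five modulo scalars (`Good`), which gives the divisibility by Lagrange.

* Sign `+`: `A` is itself an element of `V` and acts as minus a reflection. When `5 ≠ 0` in the field,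
  four vectors of `V` forming simple roots of type `A₄`, all of norm `μ`, are conjugate to `A`, and
  their product lifts the Coxeter element of the symmetric group `S₅`, which has order five
  (`good_reflection`).

* Sign `-`: a symplectic `T` of order five with `T A T = A` generates with `A` a dihedral group
  modulo scalars, and `A · T⁻¹AT · A · T⁻¹AT` is `μ² T⁴` (`good_of_inverts`). If `5` is a nonzero square,
  `T` is built from `2 × 2` blocks of trace `(√5 - 1) / 2`. If `5` is not a square, `A` is, up to
  scaling, one of the two complementary products `e₁ e₂`, `e₃ m` of an orthogonal frame of an `A₄`
  root system, and a bipartite Coxeter element is inverted by both of them (`exists_inverted`).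

In characteristic five, the dihedral construction applies for both signs, with `T` a unipotent
element `1 + N`, `N² = 0`.
-/

open Matrix

private lemma sandwich {F : Type} [Field F] (x y S : Matrix (Fin 4) (Fin 4) F) :
    (x * y) * S * (x * y)ᵀ = x * (y * S * yᵀ) * xᵀ := by
  simp only [Matrix.transpose_mul, Matrix.mul_assoc]

variable (F : Type) [Field F] (J : Matrix (Fin 4) (Fin 4) F)

/-- The symplectic group `Sp₄(q) = {A ∈ GL₄(F_q) : A J Aᵀ = J}`. -/
def SpJ : Subgroup (GL (Fin 4) F) where
  carrier := {A | (A : Matrix (Fin 4) (Fin 4) F) * J * (A : Matrix (Fin 4) (Fin 4) F)ᵀ = J}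
  one_mem' := by simp
  mul_mem' := by
    intro a b ha hb
    simp only [Set.mem_setOf_eq, Units.val_mul] at *
    rw [sandwich, hb, ha]
  inv_mem' := by
    intro a ha
    simp only [Set.mem_setOf_eq] at *
    have hba : ((a⁻¹ : GL (Fin 4) F) : Matrix (Fin 4) (Fin 4) F) *
        (a : Matrix (Fin 4) (Fin 4) F) = 1 := by
      rw [← Units.val_mul, inv_mul_cancel, Units.val_one]
    calc ((a⁻¹ : GL (Fin 4) F) : Matrix (Fin 4) (Fin 4) F) * J *
          ((a⁻¹ : GL (Fin 4) F) : Matrix (Fin 4) (Fin 4) F)ᵀ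
        = ((a⁻¹ : GL (Fin 4) F) : Matrix (Fin 4) (Fin 4) F) *
          ((a : Matrix (Fin 4) (Fin 4) F) * J * (a : Matrix (Fin 4) (Fin 4) F)ᵀ) *
          ((a⁻¹ : GL (Fin 4) F) : Matrix (Fin 4) (Fin 4) F)ᵀ := by rw [ha]
      _ = (((a⁻¹ : GL (Fin 4) F) : Matrix (Fin 4) (Fin 4) F) * (a : Matrix (Fin 4) (Fin 4) F))
          * J * (((a⁻¹ : GL (Fin 4) F) : Matrix (Fin 4) (Fin 4) F) *
            (a : Matrix (Fin 4) (Fin 4) F))ᵀ := by rw [sandwich]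
      _ = J := by rw [hba]; simp

/-- The group `GSp₄(q)` of symplectic similitudes:
`{A ∈ GL₄(F_q) : A J Aᵀ = λ J for some λ ∈ F*}`. -/
def GSpJ : Subgroup (GL (Fin 4) F) where
  carrier := {A | ∃ c : F, c ≠ 0 ∧
    (A : Matrix (Fin 4) (Fin 4) F) * J * (A : Matrix (Fin 4) (Fin 4) F)ᵀ = c • J}
  one_mem' := ⟨1, one_ne_zero, by simp⟩
  mul_mem' := by
    rintro a b ⟨c, hc0, hc⟩ ⟨d, hd0, hd⟩
    refine ⟨d * c, mul_ne_zero hd0 hc0, ?_⟩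
    simp only [Units.val_mul]
    rw [sandwich, hd, Matrix.mul_smul, Matrix.smul_mul, hc, smul_smul]
  inv_mem' := by
    rintro a ⟨c, hc0, hc⟩
    refine ⟨c⁻¹, inv_ne_zero hc0, ?_⟩
    have hba : ((a⁻¹ : GL (Fin 4) F) : Matrix (Fin 4) (Fin 4) F) *
        (a : Matrix (Fin 4) (Fin 4) F) = 1 := by
      rw [← Units.val_mul, inv_mul_cancel, Units.val_one]
    have key : ((a⁻¹ : GL (Fin 4) F) : Matrix (Fin 4) (Fin 4) F) *
          ((a : Matrix (Fin 4) (Fin 4) F) * J * (a : Matrix (Fin 4) (Fin 4) F)ᵀ) *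
          ((a⁻¹ : GL (Fin 4) F) : Matrix (Fin 4) (Fin 4) F)ᵀ = J := by
      rw [← sandwich, hba]; simp
    rw [hc] at key
    rw [Matrix.mul_smul, Matrix.smul_mul] at key
    have goal' : ((a⁻¹ : GL (Fin 4) F) : Matrix (Fin 4) (Fin 4) F) * J *
        ((a⁻¹ : GL (Fin 4) F) : Matrix (Fin 4) (Fin 4) F)ᵀ =
        c⁻¹ • (c • (((a⁻¹ : GL (Fin 4) F) : Matrix (Fin 4) (Fin 4) F) * J *
          ((a⁻¹ : GL (Fin 4) F) : Matrix (Fin 4) (Fin 4) F)ᵀ)) := by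
      rw [smul_smul, inv_mul_cancel₀ hc0, one_smul]
    rw [goal', key]

/-- The subgroup of scalar matrices of `GSp₄(q)`. -/
def scalarGSpJ : Subgroup ↥(GSpJ F J) where
  carrier := {A | ∃ c : F, ((A : GL (Fin 4) F) : Matrix (Fin 4) (Fin 4) F) =
    c • (1 : Matrix (Fin 4) (Fin 4) F)}
  one_mem' := ⟨1, by simp⟩
  mul_mem' := by
    rintro a b ⟨c, hc⟩ ⟨d, hd⟩
    refine ⟨c * d, ?_⟩
    push_cast
    rw [hc, hd, Matrix.smul_mul, Matrix.one_mul, smul_smul]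
  inv_mem' := by
    rintro a ⟨c, hc⟩
    have hc0 : c ≠ 0 := by
      intro h
      have hba : ((a : GL (Fin 4) F) : Matrix (Fin 4) (Fin 4) F) *
          (((a : GL (Fin 4) F)⁻¹ : GL (Fin 4) F) : Matrix (Fin 4) (Fin 4) F) = 1 :=
        Units.mul_inv _
      rw [hc, h, zero_smul, Matrix.zero_mul] at hba
      exact one_ne_zero hba.symm
    refine ⟨c⁻¹, ?_⟩
    have hcoe : ((a⁻¹ : ↥(GSpJ F J)) : GL (Fin 4) F) = ((a : GL (Fin 4) F))⁻¹ := rfl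
    have hba : ((a : GL (Fin 4) F) : Matrix (Fin 4) (Fin 4) F) *
        (((a⁻¹ : ↥(GSpJ F J)) : GL (Fin 4) F) : Matrix (Fin 4) (Fin 4) F) = 1 := by
      rw [hcoe]
      exact Units.mul_inv _
    rw [hc, Matrix.smul_mul, Matrix.one_mul] at hba
    have h2 := congrArg (fun M => c⁻¹ • M) hba
    simp only [smul_smul, inv_mul_cancel₀ hc0, one_smul] at h2
    exact h2

instance scalarGSpJ_normal : (scalarGSpJ F J).Normal := by
  constructor
  rintro a ⟨c, hc⟩ g
  refine ⟨c, ?_⟩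
  have h1 : ((g * a * g⁻¹ : ↥(GSpJ F J)) : GL (Fin 4) F) =
      (g : GL (Fin 4) F) * (a : GL (Fin 4) F) * ((g : GL (Fin 4) F))⁻¹ := rfl
  show (((g * a * g⁻¹ : ↥(GSpJ F J)) : GL (Fin 4) F) : Matrix (Fin 4) (Fin 4) F) = c • 1
  rw [h1, Units.val_mul, Units.val_mul, hc, Matrix.mul_smul, Matrix.mul_one,
    Matrix.smul_mul]
  congr 1
  exact Units.mul_inv _

/-- `PGSp₄(q)`: the quotient of `GSp₄(q)` by its subgroup of scalar matrices. -/
abbrev PGSpJ : Type := ↥(GSpJ F J) ⧸ scalarGSpJ F J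

/-- The image `L ≅ PSp₄(q)` of `Sp₄(q)` in `PGSp₄(q)`. -/
def PSpJ : Subgroup (PGSpJ F J) :=
  Subgroup.map (QuotientGroup.mk' (scalarGSpJ F J))
    (Subgroup.comap (GSpJ F J).subtype (SpJ F J))

set_option linter.unusedSimpArgs false

/-! ### Anticommuting self-adjoint matrices -/

/-- The algebra of `4 × 4` matrices over `K`. -/
abbrev M4 (K : Type) := Matrix (Fin 4) (Fin 4) K

/-- If `t t' = t' t = k²` and `s = t + t'` satisfies `s² = k² - k s`, then `t / k` is a root of
`z⁴ + z³ + z² + z + 1 = z² ((z + z⁻¹)² + (z + z⁻¹) - 1)`; hence `t⁵ = k⁵`. -/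
theorem pow_five_of_quadratic {K : Type} [Field K] {t t' : M4 K} {k : K}
    (h1 : t * t' = (k * k) • 1) (h2 : t' * t = (k * k) • 1)
    (h3 : (t + t') * (t + t') = (k * k) • 1 - k • (t + t')) :
    t ^ 5 = (k ^ 5) • 1 := by
  have e1 : t * t + t' * t' = -(k * k) • 1 - k • t - k • t' := by
    have : (t + t') * (t + t') = t * t + t * t' + (t' * t + t' * t') := by noncomm_ring
    rw [this, h1, h2] at h3
    linear_combination (norm := module) h3
  have e2 : t * (t * (t * t + t' * t')) = t * (t * (-(k * k) • 1 - k • t - k • t')) := by rw [e1]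
  have e3 : t * (t * (t' * t')) = (k * k * (k * k)) • 1 := by
    rw [← mul_assoc t t' t', h1, smul_mul_assoc, one_mul, mul_smul_comm, h1, smul_smul]
  have e4 : t * (t * t') = (k * k) • t := by rw [h1, mul_smul_comm, mul_one]
  simp only [mul_add, mul_sub, mul_smul_comm, mul_one, e3, e4] at e2
  have e5 : t * (t * (t * t)) = -(k * k * (k * k)) • 1 - (k * k * k) • t - (k * k) • (t * t)
      - k • (t * (t * t)) := by
    linear_combination (norm := module) e2
  have e6 : t * (t * (t * (t * t))) = t * (-(k * k * (k * k)) • 1 - (k * k * k) • t - (k * k) • (t * t)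
      - k • (t * (t * t))) := by rw [← e5]
  have e7 : t ^ 5 = t * (t * (t * (t * t))) := by noncomm_ring
  rw [e7, e6]
  simp only [mul_sub, mul_smul_comm, mul_one, e5]
  module

/-- Four pairwise anticommuting matrices, self-adjoint for the alternating form `J`
(that is, `e J = J eᵀ`), with squares
`η, η, η, 5η`. In the five-dimensional quadratic space of trace-zero self-adjoint matrices, where
the quadratic form is given by squaring, they form an orthogonal family whose span
contains a root system of type `A₄` when `5 ≠ 0`. -/
structure Frame {K : Type} [Field K] (J e₁ e₂ e₃ m : M4 K) (η : K) : Prop where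
  sq1 : e₁ * e₁ = η • 1
  sq2 : e₂ * e₂ = η • 1
  sq3 : e₃ * e₃ = η • 1
  sq4 : m * m = (5 * η) • 1
  ac21 : e₂ * e₁ = -(e₁ * e₂)
  ac31 : e₃ * e₁ = -(e₁ * e₃)
  ac41 : m * e₁ = -(e₁ * m)
  ac32 : e₃ * e₂ = -(e₂ * e₃)
  ac42 : m * e₂ = -(e₂ * m)
  ac43 : m * e₃ = -(e₃ * m)
  sa1 : e₁ * J = J * e₁ᵀ
  sa2 : e₂ * J = J * e₂ᵀ
  sa3 : e₃ * J = J * e₃ᵀ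
  sa4 : m * J = J * mᵀ
  anti : Jᵀ = -J
  unit : IsUnit J

theorem assoc_sq {K : Type} [Field K] {e : M4 K} {η : K} (h : e * e = η • 1) (x : M4 K) :
    e * (e * x) = η • x := by rw [← mul_assoc, h, smul_mul_assoc, one_mul]

theorem assoc_ac {K : Type} [Field K] {e f : M4 K} (h : f * e = -(e * f)) (x : M4 K) :
    f * (e * x) = -(e * (f * x)) := by rw [← mul_assoc, h, neg_mul, mul_assoc]

/-- For simple roots `w₁, …, w₄` of type `A₄` in the span of a frame, the product
`c = w₁ w₂ w₃ w₄` is a lift of the Coxeter element. Its trace part `c + c'`, with `c'` the reversed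
product, is explicit, which gives the quadratic equation behind `c⁵` being scalar. -/
theorem coxeter {K : Type} [Field K] {J e₁ e₂ e₃ m : M4 K} {η : K} (F : Frame J e₁ e₂ e₃ m η)
    (w₁ w₂ w₃ w₄ : M4 K) (hw1 : w₁ = (2 : K) • e₁ - (2 : K) • e₂) (hw2 : w₂ = (2 : K) • e₂ - (2 : K) • e₃)
   (hw3 : w₃ = -((2 : K) • e₁) - (2 : K) • e₂) (hw4 : w₄ = e₁ + e₂ + e₃ + m) :
    w₁ * (w₂ * (w₃ * w₄)) + w₄ * (w₃ * (w₂ * w₁)) = (32 * η * η) • 1 - (32 : K) • (e₁ * (e₂ * (e₃ * m))) := by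
  subst hw1 hw2 hw3 hw4
  simp only [mul_add, add_mul, mul_sub, sub_mul, neg_mul, mul_neg, smul_mul_assoc, mul_smul_comm, mul_assoc,
    F.sq1, F.sq2, F.sq3, F.sq4, F.ac21, F.ac31, F.ac41, F.ac32, F.ac42, F.ac43,
    assoc_sq F.sq1, assoc_sq F.sq2, assoc_sq F.sq3, assoc_sq F.sq4,
    assoc_ac F.ac21, assoc_ac F.ac31, assoc_ac F.ac41, assoc_ac F.ac32, assoc_ac F.ac42, assoc_ac F.ac43, mul_one]
  module

/-! ### Four conjugates whose product has order five -/

/-- There are four elements `g i` of the symplectic group of `J`, with inverses `h i`, such that the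
product of the conjugates `h i * A * g i` has order five modulo scalars. No invertibility is
required of `A`, so that the notion makes sense for arbitrary matrices. -/
def Good {K : Type} [Field K] (J A : M4 K) : Prop :=
  ∃ g h : Fin 4 → M4 K, (∀ i, g i * h i = 1) ∧ (∀ i, g i * J * (g i)ᵀ = J) ∧
    (∃ c : K, (h 0 * A * g 0 * (h 1 * A * g 1) * (h 2 * A * g 2) * (h 3 * A * g 3)) ^ 5
      = c • (1 : M4 K)) ∧
    ¬ ∃ c : K, h 0 * A * g 0 * (h 1 * A * g 1) * (h 2 * A * g 2) * (h 3 * A * g 3)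
      = c • (1 : M4 K)

theorem Good.of_smul {K : Type} [Field K] {J A : M4 K} {c : K} (hc : c ≠ 0)
    (H : Good J (c • A)) : Good J A := by
  obtain ⟨g, h, h1, h2, ⟨d, h3⟩, h4⟩ := H
  have key : h 0 * (c • A) * g 0 * (h 1 * (c • A) * g 1) * (h 2 * (c • A) * g 2) *
      (h 3 * (c • A) * g 3) =
      (c ^ 4) • (h 0 * A * g 0 * (h 1 * A * g 1) * (h 2 * A * g 2) * (h 3 * A * g 3)) := by
    simp only [smul_mul_assoc, mul_smul_comm, smul_smul]
    congr 1
    ring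
  rw [key] at h3 h4
  refine ⟨g, h, h1, h2, ⟨(c ^ 20)⁻¹ * d, ?_⟩, ?_⟩
  · rw [smul_pow, ← pow_mul] at h3
    rw [mul_smul, ← h3, smul_smul, inv_mul_cancel₀ (pow_ne_zero _ hc), one_smul]
  · rintro ⟨e, he⟩
    exact h4 ⟨c ^ 4 * e, by rw [he, smul_smul]⟩

/-- Change of basis: `Good` is invariant under a congruence of forms intertwining the two
matrices. -/
theorem Good.of_conj {K : Type} [Field K] {J A J' A' P : M4 K} (hP : IsUnit P)
    (hJ : P * J * Pᵀ = J') (hA : P * A = A' * P) (H : Good J' A') : Good J A := by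
  obtain ⟨Q, hPQ, hQP⟩ := isUnit_iff_exists.1 hP
  obtain ⟨g, h, h1, h2, ⟨d, h3⟩, h4⟩ := H
  have hA' : A = Q * A' * P := by rw [mul_assoc, ← hA, ← mul_assoc, hQP, one_mul]
  have hJ' : J = Q * J' * Qᵀ := by
    have : Pᵀ * Qᵀ = 1 := by rw [← transpose_mul, hQP, transpose_one]
    rw [← hJ, mul_assoc, mul_assoc, this, mul_one, ← mul_assoc, hQP, one_mul]
  have cancel : ∀ x : M4 K, P * (Q * x) = x := fun x => by rw [← mul_assoc, hPQ, one_mul]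
  have cancelT : ∀ x : M4 K, Qᵀ * (Pᵀ * x) = x := fun x => by
    rw [← mul_assoc, ← transpose_mul, hPQ, transpose_one, one_mul]
  have key : (fun i => Q * h i * P) 0 * A * (fun i => Q * g i * P) 0 *
      ((fun i => Q * h i * P) 1 * A * (fun i => Q * g i * P) 1) *
      ((fun i => Q * h i * P) 2 * A * (fun i => Q * g i * P) 2) *
      ((fun i => Q * h i * P) 3 * A * (fun i => Q * g i * P) 3) =
      Q * (h 0 * A' * g 0 * (h 1 * A' * g 1) * (h 2 * A' * g 2) * (h 3 * A' * g 3)) * P := by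
    simp only [hA', mul_assoc, cancel]
  have hpow : ∀ (x : M4 K) (n : ℕ), (Q * x * P) ^ n = Q * x ^ n * P := by
    intro x n
    induction n with
    | zero => simp [hQP]
    | succ n ih => rw [pow_succ, ih, pow_succ]; simp only [mul_assoc, cancel]
  refine ⟨fun i => Q * g i * P, fun i => Q * h i * P, fun i => ?_, fun i => ?_, ⟨d, ?_⟩, ?_⟩
  · simp only [mul_assoc, cancel]
    rw [← mul_assoc (g i), h1, one_mul, hQP]
  · simp only [hJ', transpose_mul, mul_assoc, cancel, cancelT]
    congr 1
    have := h2 i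
    simp only [← mul_assoc] at this ⊢
    rw [this]
  · rw [key, hpow, h3, mul_smul_comm, mul_one, smul_mul_assoc, hQP]
  · rw [key]
    rintro ⟨c, hc⟩
    refine h4 ⟨c, ?_⟩
    generalize h 0 * A' * g 0 * (h 1 * A' * g 1) * (h 2 * A' * g 2) * (h 3 * A' * g 3) = t at *
    calc t = P * (Q * t * P) * Q := by simp only [mul_assoc, cancel, hPQ, mul_one]
      _ = c • 1 := by rw [hc, mul_smul_comm, mul_one, smul_mul_assoc, hPQ]

/-- The dihedral construction: if a symplectic `T` of order five satisfies `T A T = A`, then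
`A (T⁻¹ A T) A (T⁻¹ A T) = μ² T⁴`. -/
theorem good_of_inverts {K : Type} [Field K] {J A T : M4 K} {μ : K} (hJ : J ≠ 0) (hμ : μ ≠ 0)
    (hA : A * A = μ • 1) (hT : T * J * Tᵀ = J) (hT5 : T ^ 5 = 1) (hT1 : T ≠ 1)
    (hTA : T * A * T = A) : Good J A := by
  have e0 : A * T = T ^ 4 * A := by
    calc A * T = T ^ 5 * (A * T) := by rw [hT5, one_mul]
      _ = T ^ 4 * (T * A * T) := by noncomm_ring
      _ = T ^ 4 * A := by rw [hTA]
  have red : ∀ x : M4 K, T ^ 5 * x = x := fun x => by rw [hT5, one_mul]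
  have key : (1 * A * 1) * (T ^ 4 * A * T) * (1 * A * 1) * (T ^ 4 * A * T) = (μ * μ) • T ^ 4 := by
    have e1 : T ^ 4 * A * T = T ^ 3 * A := by
      rw [mul_assoc, e0, ← mul_assoc, ← pow_add, show 4 + 4 = 5 + 3 from rfl, pow_add, hT5, one_mul]
    have e2 : A * T ^ 3 = T ^ 2 * A := by
      have : A * T ^ 3 = T ^ 12 * A := by
        calc A * T ^ 3 = A * T * T * T := by noncomm_ring
          _ = T ^ 4 * A * T * T := by rw [e0]
          _ = T ^ 4 * (A * T) * T := by noncomm_ring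
          _ = T ^ 4 * (T ^ 4 * A) * T := by rw [e0]
          _ = T ^ 4 * T ^ 4 * (A * T) := by noncomm_ring
          _ = T ^ 4 * T ^ 4 * (T ^ 4 * A) := by rw [e0]
          _ = T ^ 12 * A := by noncomm_ring
      rw [this, show 12 = 5 + 5 + 2 from rfl, pow_add, pow_add, hT5, one_mul, one_mul]
    have e3 : A * (T ^ 3 * A) = μ • T ^ 2 := by
      rw [← mul_assoc, e2, mul_assoc, hA, mul_smul_comm, mul_one]
    rw [e1, one_mul, mul_one, e3, mul_assoc, e3, smul_mul_assoc, mul_smul_comm, smul_smul, ← pow_add]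
  refine ⟨![1, T, 1, T], ![1, T ^ 4, 1, T ^ 4], ?_, ?_, ⟨(μ * μ) ^ 5, ?_⟩, ?_⟩
  · have : T * T ^ 4 = 1 := by rw [← pow_succ', hT5]
    intro i; fin_cases i <;> simp [this]
  · intro i; fin_cases i <;> simp [hT]
  · show ((1 * A * 1) * (T ^ 4 * A * T) * (1 * A * 1) * (T ^ 4 * A * T)) ^ 5 = _
    rw [key, smul_pow, ← pow_mul, mul_comm 4 5, pow_mul, hT5, one_pow]
  · show ¬ ∃ c : K, (1 * A * 1) * (T ^ 4 * A * T) * (1 * A * 1) * (T ^ 4 * A * T) = _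
    rw [key]
    rintro ⟨c, hc⟩
    have hc1 : T ^ 4 = ((μ * μ)⁻¹ * c) • 1 := by
      rw [mul_smul, ← hc, smul_smul, inv_mul_cancel₀ (mul_ne_zero hμ hμ), one_smul]
    obtain ⟨d, hd⟩ : ∃ d : K, T = d • 1 := by
      refine ⟨((μ * μ)⁻¹ * c) ^ 4, ?_⟩
      have : T = (T ^ 4) ^ 4 := by
        rw [← pow_mul, show 4 * 4 = 5 + 5 + 5 + 1 from rfl, pow_add, pow_add, pow_add, hT5]; simp
      rw [this, hc1, smul_pow, one_pow]
    have hd2 : d * d = 1 := by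
      rw [hd] at hT
      simp only [transpose_smul, transpose_one, smul_mul_assoc, mul_smul_comm, one_mul, mul_one,
        smul_smul] at hT
      have : (d * d - 1) • J = 0 := by rw [sub_smul, hT, one_smul, sub_self]
      rcases smul_eq_zero.1 this with h | h
      · exact sub_eq_zero.1 h
      · exact absurd h hJ
    have hd5 : d ^ 5 = 1 := by
      have := hT5
      rw [hd, smul_pow, one_pow] at this
      have := congrFun (congrFun this 0) 0
      simpa using this
    -- A scalar `T` would satisfy `d² = 1` and `d⁵ = 1`, and `gcd (2, 5) = 1`.
    have : d = 1 := by linear_combination hd5 - (d ^ 3 + d) * hd2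
    exact hT1 (by rw [hd, this, one_smul])

/-! ### Coxeter elements of type `A₄` -/

/-- `u` and `v` are conjugate under the symplectic group of `J`. -/
def SpConj {K : Type} [Field K] (J u v : M4 K) : Prop :=
  ∃ g h : M4 K, g * h = 1 ∧ g * J * gᵀ = J ∧ h * u * g = v

theorem SpConj.refl {K : Type} [Field K] (J u : M4 K) : SpConj J u u :=
  ⟨1, 1, by simp, by simp, by simp⟩

theorem SpConj.trans {K : Type} [Field K] {J u v w : M4 K} (H : SpConj J u v)
    (H' : SpConj J v w) : SpConj J u w := by
  obtain ⟨g, h, h1, h2, h3⟩ := H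
  obtain ⟨g', h', h1', h2', h3'⟩ := H'
  refine ⟨g * g', h' * h, ?_, ?_, ?_⟩
  · rw [mul_assoc, ← mul_assoc g', h1', one_mul, h1]
  · calc g * g' * J * (g * g')ᵀ = g * (g' * J * g'ᵀ) * gᵀ := by
          simp only [transpose_mul, mul_assoc]
      _ = J := by rw [h2', h2]
  · rw [← h3', ← h3]
    simp only [mul_assoc]

/-- A self-adjoint matrix with scalar square `a` is a similitude of multiplier `a`; multiplying by it
on the left scales the multiplier by `a`. -/
theorem simil_mul {K : Type} [Field K] {J w x : M4 K} {a b : K} (hw : w * w = a • 1)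
    (hwJ : w * J = J * wᵀ) (hx : x * J * xᵀ = b • J) : (w * x) * J * (w * x)ᵀ = (a * b) • J := by
  calc (w * x) * J * (w * x)ᵀ = w * (x * J * xᵀ) * wᵀ := by
        simp only [transpose_mul, mul_assoc]
    _ = (a * b) • J := by
      rw [hx, mul_smul_comm, smul_mul_assoc, mul_assoc, ← hwJ, ← mul_assoc, hw, smul_mul_assoc,
        one_mul, smul_smul, mul_comm]

theorem simil_self {K : Type} [Field K] {J w : M4 K} {a : K} (hw : w * w = a • 1)
    (hwJ : w * J = J * wᵀ) : w * J * wᵀ = a • J := by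
  rw [mul_assoc, ← hwJ, ← mul_assoc, hw, smul_mul_assoc, one_mul]

/-- Two roots of equal norm joined by an edge of the Dynkin diagram are interchanged by the
product `v u` of the two reflections, which has multiplier `κ²` and can be rescaled into the
symplectic group. -/
theorem spConj_of_adjacent {K : Type} [Field K] {J u v : M4 K} {κ : K} (hκ : κ ≠ 0)
    (hu : u * u = κ • 1) (hv : v * v = κ • 1) (huv : u * v + v * u = -(κ • 1))
    (huJ : u * J = J * uᵀ) (hvJ : v * J = J * vᵀ) : SpConj J u v := by
  refine ⟨κ⁻¹ • (v * u), κ⁻¹ • (u * v), ?_, ?_, ?_⟩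
  · rw [smul_mul_smul_comm, mul_assoc, ← mul_assoc u, hu, smul_mul_assoc, mul_smul_comm, one_mul,
      hv, smul_smul, smul_smul]
    convert one_smul K (1 : M4 K) using 2
    field_simp
  · rw [transpose_smul, smul_mul_assoc, mul_smul_comm, smul_mul_assoc,
      simil_mul hv hvJ (simil_self hu huJ), smul_smul, smul_smul]
    convert one_smul K J using 2
    field_simp
  · have e1 : u * v = -(κ • 1) - v * u := by rw [← huv]; abel
    have e2 : u * v * u * (v * u) = (κ * κ) • v := by
      calc u * v * u * (v * u) = u * v * (u * v) * u := by simp only [mul_assoc]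
        _ = u * v * (-(κ • 1) - v * u) * u := by rw [← e1]
        _ = -κ • (u * v * u) - u * (v * v) * (u * u) := by
          simp only [mul_sub, sub_mul, mul_neg, neg_mul, mul_smul_comm, smul_mul_assoc, mul_one,
            mul_assoc, neg_smul]
        _ = -κ • ((-(κ • 1) - v * u) * u) - u * (v * v) * (u * u) := by rw [← e1]
        _ = _ := by
          rw [hu, hv, sub_mul, mul_assoc v u u, hu]
          simp only [mul_smul_comm, smul_mul_assoc, mul_one, neg_mul, one_mul]
          module
    rw [smul_mul_assoc, smul_mul_assoc, mul_smul_comm, e2, smul_smul, smul_smul]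
    convert one_smul K v using 2
    field_simp

/-- The product of the frame anticommutes with `e₁` and is invertible, so it is not a scalar. -/
theorem omega_not_scalar {K : Type} [Field K] {J e₁ e₂ e₃ m : M4 K} {η : K} (h2 : (2 : K) ≠ 0)
    (h5 : (5 : K) ≠ 0) (hη : η ≠ 0) (F : Frame J e₁ e₂ e₃ m η) (c : K)
    (h : e₁ * (e₂ * (e₃ * m)) = c • (1 : M4 K)) : False := by
  have e1 : e₁ * (e₁ * (e₂ * (e₃ * m))) = -(e₁ * (e₂ * (e₃ * m)) * e₁) := by
    simp only [mul_add, add_mul, mul_sub, sub_mul, neg_mul, mul_neg, smul_mul_assoc,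
      mul_smul_comm, mul_assoc, F.ac21, F.ac31, F.ac41, assoc_ac F.ac21, assoc_ac F.ac31, neg_neg]
  rw [h, mul_smul_comm, mul_one, smul_mul_assoc, one_mul] at e1
  have e2 : (2 * c) • e₁ = 0 := by
    linear_combination (norm := module) e1
  have e3 : (2 * c * η) • (1 : M4 K) = 0 := by
    rw [mul_smul, ← F.sq1, ← smul_mul_assoc, e2, zero_mul]
  have hc : c = 0 := by
    rcases smul_eq_zero.1 e3 with h' | h'
    · simpa [h2, hη] using h'
    · exact absurd h' one_ne_zero
  have e4 : (η * η * η * (5 * η)) • (1 : M4 K) = 0 := by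
    calc (η * η * η * (5 * η)) • (1 : M4 K) = e₁ * (e₂ * (e₃ * m)) * (m * (e₃ * (e₂ * e₁))) := by
          simp only [mul_assoc, assoc_sq F.sq4, assoc_sq F.sq3, assoc_sq F.sq2, F.sq1,
            mul_smul_comm, smul_smul]
          congr 1
          ring
      _ = 0 := by rw [h, hc, zero_smul, zero_mul]
  rcases smul_eq_zero.1 e4 with h' | h'
  · simp [h5, hη] at h'
  · exact one_ne_zero h'

/-- A matrix whose trace part `t + t'` involves `e₁ e₂ e₃ m` nontrivially is not a scalar. -/
theorem not_scalar_of_trace {K : Type} [Field K] {J e₁ e₂ e₃ m t t' : M4 K} {η k l d : K}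
    (h2 : (2 : K) ≠ 0) (h5 : (5 : K) ≠ 0) (hη : η ≠ 0) (F : Frame J e₁ e₂ e₃ m η) (hk : k ≠ 0)
    (h : t' * t = k • 1) (hl : l ≠ 0)
    (hs : t + t' = d • 1 + l • (e₁ * (e₂ * (e₃ * m)))) : ¬ ∃ c : K, t = c • (1 : M4 K) := by
  rintro ⟨c, hc⟩
  have e1 : c • t' = k • (1 : M4 K) := by
    rw [hc, mul_smul_comm, mul_one] at h
    exact h
  have hc0 : c ≠ 0 := by
    rintro rfl
    rw [zero_smul, eq_comm] at e1
    rcases smul_eq_zero.1 e1 with h' | h'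
    · exact hk h'
    · exact one_ne_zero h'
  have e2 : t' = (c⁻¹ * k) • (1 : M4 K) := by
    rw [mul_smul, ← e1, smul_smul, inv_mul_cancel₀ hc0, one_smul]
  have e3 : l • (e₁ * (e₂ * (e₃ * m))) = (c + c⁻¹ * k - d) • (1 : M4 K) := by
    rw [e2, hc] at hs
    linear_combination (norm := module) -hs
  refine omega_not_scalar h2 h5 hη F (l⁻¹ * (c + c⁻¹ * k - d)) ?_
  rw [mul_smul, ← e3, smul_smul, inv_mul_cancel₀ hl, one_smul]

/-- The root `w₁ = 2e₁ - 2e₂` of the `A₄` system is conjugate to the other simple roots, and the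
product of the four simple roots is a lift of the Coxeter element of `S₅`, a 5-cycle. -/
theorem good_reflection {K : Type} [Field K] {J e₁ e₂ e₃ m : M4 K} {η : K} (h2 : (2 : K) ≠ 0)
    (h5 : (5 : K) ≠ 0) (hη : η ≠ 0) (F : Frame J e₁ e₂ e₃ m η) :
    Good J ((2 : K) • e₁ - (2 : K) • e₂) := by
  obtain ⟨w₁, hw1⟩ : ∃ w, w = (2 : K) • e₁ - (2 : K) • e₂ := ⟨_, rfl⟩
  obtain ⟨w₂, hw2⟩ : ∃ w, w = (2 : K) • e₂ - (2 : K) • e₃ := ⟨_, rfl⟩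
  obtain ⟨w₃, hw3⟩ : ∃ w, w = -((2 : K) • e₁) - (2 : K) • e₂ := ⟨_, rfl⟩
  obtain ⟨w₄, hw4⟩ : ∃ w, w = e₁ + e₂ + e₃ + m := ⟨_, rfl⟩
  have hs := coxeter F w₁ w₂ w₃ w₄ hw1 hw2 hw3 hw4
  have sq : w₁ * w₁ = (8 * η) • 1 ∧ w₂ * w₂ = (8 * η) • 1 ∧ w₃ * w₃ = (8 * η) • 1 ∧
      w₄ * w₄ = (8 * η) • 1 ∧ w₁ * w₂ + w₂ * w₁ = -((8 * η) • 1) ∧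
      w₂ * w₃ + w₃ * w₂ = -((8 * η) • 1) ∧ w₃ * w₄ + w₄ * w₃ = -((8 * η) • 1) := by
    subst hw1 hw2 hw3 hw4
    refine ⟨?_, ?_, ?_, ?_, ?_, ?_, ?_⟩ <;>
    · simp only [mul_add, add_mul, mul_sub, sub_mul, neg_mul, mul_neg, smul_mul_assoc,
        mul_smul_comm, mul_assoc, F.sq1, F.sq2, F.sq3, F.sq4, F.ac21, F.ac31, F.ac41, F.ac32,
        F.ac42, F.ac43]
      module
  have sa : w₁ * J = J * w₁ᵀ ∧ w₂ * J = J * w₂ᵀ ∧ w₃ * J = J * w₃ᵀ ∧ w₄ * J = J * w₄ᵀ := by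
    subst hw1 hw2 hw3 hw4
    refine ⟨?_, ?_, ?_, ?_⟩ <;>
    simp only [mul_add, add_mul, mul_sub, sub_mul, neg_mul, mul_neg, smul_mul_assoc,
        mul_smul_comm, transpose_add, transpose_sub, transpose_neg, transpose_smul, F.sa1, F.sa2,
        F.sa3, F.sa4]
  obtain ⟨s1, s2, s3, s4, a12, a23, a34⟩ := sq
  obtain ⟨j1, j2, j3, j4⟩ := sa
  have h8 : (8 : K) * η ≠ 0 := by
    rw [show (8 : K) = 2 * 2 * 2 by norm_num]
    simp [h2, hη]
  have c1 := SpConj.refl J w₁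
  have c2 := spConj_of_adjacent h8 s1 s2 a12 j1 j2
  have c3 := c2.trans (spConj_of_adjacent h8 s2 s3 a23 j2 j3)
  have c4 := c3.trans (spConj_of_adjacent h8 s3 s4 a34 j3 j4)
  rw [← hw1]
  obtain ⟨g1, k1, p1, q1, r1⟩ := c1
  obtain ⟨g2, k2, p2, q2, r2⟩ := c2
  obtain ⟨g3, k3, p3, q3, r3⟩ := c3
  obtain ⟨g4, k4, p4, q4, r4⟩ := c4
  have t1 : w₁ * (w₂ * (w₃ * w₄)) * (w₄ * (w₃ * (w₂ * w₁))) =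
      (-(64 * η * η) * -(64 * η * η)) • 1 := by
    simp only [mul_assoc, assoc_sq s1, assoc_sq s2, assoc_sq s3, assoc_sq s4, s1, mul_smul_comm,
      smul_smul]
    congr 1
    ring
  have t2 : w₄ * (w₃ * (w₂ * w₁)) * (w₁ * (w₂ * (w₃ * w₄))) =
      (-(64 * η * η) * -(64 * η * η)) • 1 := by
    simp only [mul_assoc, assoc_sq s1, assoc_sq s2, assoc_sq s3, assoc_sq s4, s4, mul_smul_comm,
      smul_smul]
    congr 1
    ring
  have hk : -(64 * η * η) ≠ 0 := by
    rw [show -(64 * η * η) = -((8 * η) * (8 * η)) by ring]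
    exact neg_ne_zero.2 (mul_ne_zero h8 h8)
  refine ⟨![g1, g2, g3, g4], ![k1, k2, k3, k4], ?_, ?_, ?_⟩
  · intro i; fin_cases i <;> simp [*]
  · intro i; fin_cases i <;> simp [*]
  · show (∃ c : K, (k1 * w₁ * g1 * (k2 * w₁ * g2) * (k3 * w₁ * g3) * (k4 * w₁ * g4)) ^ 5 = _) ∧
      ¬ ∃ c : K, (k1 * w₁ * g1 * (k2 * w₁ * g2) * (k3 * w₁ * g3) * (k4 * w₁ * g4)) = _
    rw [r1, r2, r3, r4]
    simp only [mul_assoc w₁, mul_assoc w₂]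
    refine ⟨⟨_, pow_five_of_quadratic t1 t2 ?_⟩, ?_⟩
    · rw [hs]
      simp only [mul_add, add_mul, mul_sub, sub_mul, neg_mul, mul_neg, smul_mul_assoc,
        mul_smul_comm, mul_assoc, F.sq1, F.sq2, F.sq3, F.sq4, F.ac21, F.ac31, F.ac41, F.ac32,
        F.ac42, F.ac43, assoc_sq F.sq1, assoc_sq F.sq2, assoc_sq F.sq3, assoc_sq F.sq4,
        assoc_ac F.ac21, assoc_ac F.ac31, assoc_ac F.ac41, assoc_ac F.ac32, assoc_ac F.ac42,
        assoc_ac F.ac43, mul_one, one_mul]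
      module
    · refine not_scalar_of_trace (l := -32) (d := 32 * η * η) h2 h5 hη F
        (mul_ne_zero hk hk) t2 ?_ ?_
      · rw [show (-32 : K) = -(2 * 2 * 2 * 2 * 2) by norm_num]
        simp [h2]
      · rw [hs]; module

/-- The bipartite Coxeter element `(w₁ w₃)(w₂ w₄)` of type `A₄`, where `w₁ w₃` is proportional to
`e₁ e₂`, normalised to have multiplier one. It is inverted by `w₁ w₃`, hence by `e₁ e₂`, and also by
the complementary product `e₃ m`. -/
theorem exists_inverted {K : Type} [Field K] {J e₁ e₂ e₃ m : M4 K} {η : K} (h2 : (2 : K) ≠ 0)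
    (h5 : (5 : K) ≠ 0) (hη : η ≠ 0) (F : Frame J e₁ e₂ e₃ m η) :
    ∃ T : M4 K, T * J * Tᵀ = J ∧ T ^ 5 = 1 ∧ T ≠ 1 ∧ T * (e₁ * e₂) * T = e₁ * e₂ ∧
      T * (e₃ * m) * T = e₃ * m := by
  obtain ⟨w₂, hw2⟩ : ∃ w, w = (2 : K) • e₂ - (2 : K) • e₃ := ⟨_, rfl⟩
  obtain ⟨w₄, hw4⟩ : ∃ w, w = e₁ + e₂ + e₃ + m := ⟨_, rfl⟩
  have sq : w₂ * w₂ = (8 * η) • 1 ∧ w₄ * w₄ = (8 * η) • 1 := by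
    subst hw2 hw4
    refine ⟨?_, ?_⟩ <;>
    · simp only [mul_add, add_mul, mul_sub, sub_mul, neg_mul, mul_neg, smul_mul_assoc,
        mul_smul_comm, mul_assoc, F.sq1, F.sq2, F.sq3, F.sq4, F.ac21, F.ac31, F.ac41, F.ac32,
        F.ac42, F.ac43]
      module
  have sa : w₂ * J = J * w₂ᵀ ∧ w₄ * J = J * w₄ᵀ := by
    subst hw2 hw4
    refine ⟨?_, ?_⟩ <;>
    simp only [mul_add, add_mul, mul_sub, sub_mul, neg_mul, mul_neg, smul_mul_assoc,
        mul_smul_comm, transpose_add, transpose_sub, transpose_neg, transpose_smul, F.sa1, F.sa2,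
        F.sa3, F.sa4]
  obtain ⟨s2, s4⟩ := sq
  obtain ⟨j2, j4⟩ := sa
  have h8 : (8 : K) ≠ 0 := by
    rw [show (8 : K) = 2 * 2 * 2 by norm_num]
    simp [h2]
  obtain ⟨k, hk⟩ : ∃ k : K, k = -(8 * η * η) := ⟨_, rfl⟩
  have hk0 : k ≠ 0 := by simp [hk, h8, hη]
  have hs : e₁ * (e₂ * (w₂ * w₄)) + w₄ * (w₂ * (e₂ * e₁)) =
      (4 * η * η) • 1 - (4 : K) • (e₁ * (e₂ * (e₃ * m))) := by
    subst hw2 hw4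
    simp only [mul_add, add_mul, mul_sub, sub_mul, neg_mul, mul_neg, smul_mul_assoc,
      mul_smul_comm, mul_assoc, F.sq1, F.sq2, F.sq3, F.sq4, F.ac21, F.ac31, F.ac41, F.ac32,
      F.ac42, F.ac43, assoc_sq F.sq1, assoc_sq F.sq2, assoc_sq F.sq3, assoc_sq F.sq4,
      assoc_ac F.ac21, assoc_ac F.ac31, assoc_ac F.ac41, assoc_ac F.ac32, assoc_ac F.ac42,
      assoc_ac F.ac43, mul_one, one_mul]
    module
  have t1 : e₁ * (e₂ * (w₂ * w₄)) * (w₄ * (w₂ * (e₂ * e₁))) = (k * k) • 1 := by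
    simp only [mul_assoc, assoc_sq F.sq2, assoc_sq s2, assoc_sq s4, F.sq1, mul_smul_comm,
      smul_smul, hk]
    congr 1
    ring
  have t2 : w₄ * (w₂ * (e₂ * e₁)) * (e₁ * (e₂ * (w₂ * w₄))) = (k * k) • 1 := by
    simp only [mul_assoc, assoc_sq F.sq1, assoc_sq F.sq2, assoc_sq s2, s4, mul_smul_comm,
      smul_smul, hk]
    congr 1
    ring
  have t3 : (e₁ * (e₂ * (w₂ * w₄))) ^ 5 = (k ^ 5) • 1 := by
    refine pow_five_of_quadratic t1 t2 ?_
    rw [hs, hk]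
    simp only [mul_add, add_mul, mul_sub, sub_mul, neg_mul, mul_neg, smul_mul_assoc,
        mul_smul_comm, mul_assoc, F.sq1, F.sq2, F.sq3, F.sq4, F.ac21, F.ac31, F.ac41, F.ac32,
        F.ac42, F.ac43, assoc_sq F.sq1, assoc_sq F.sq2, assoc_sq F.sq3, assoc_sq F.sq4,
        assoc_ac F.ac21, assoc_ac F.ac31, assoc_ac F.ac41, assoc_ac F.ac32, assoc_ac F.ac42,
        assoc_ac F.ac43, mul_one, one_mul]
    module
  have t4 : (e₁ * (e₂ * (w₂ * w₄))) * J * (e₁ * (e₂ * (w₂ * w₄)))ᵀ = (k * k) • J := by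
    rw [simil_mul F.sq1 F.sa1 (simil_mul F.sq2 F.sa2 (simil_mul s2 j2 (simil_self s4 j4))), hk]
    congr 1
    ring
  have t5 : (e₁ * (e₂ * (w₂ * w₄))) * (e₁ * e₂) * (e₁ * (e₂ * (w₂ * w₄))) =
      (k * k) • (e₁ * e₂) ∧ (e₁ * (e₂ * (w₂ * w₄))) * (e₃ * m) * (e₁ * (e₂ * (w₂ * w₄))) =
      (k * k) • (e₃ * m) := by
    rw [hk]
    subst hw2 hw4
    constructor <;>
    · simp only [mul_add, add_mul, mul_sub, sub_mul, neg_mul, mul_neg, smul_mul_assoc,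
        mul_smul_comm, mul_assoc, F.sq1, F.sq2, F.sq3, F.sq4, F.ac21, F.ac31, F.ac41, F.ac32,
        F.ac42, F.ac43, assoc_sq F.sq1, assoc_sq F.sq2, assoc_sq F.sq3, assoc_sq F.sq4,
        assoc_ac F.ac21, assoc_ac F.ac31, assoc_ac F.ac41, assoc_ac F.ac32, assoc_ac F.ac42,
        assoc_ac F.ac43, mul_one, one_mul]
      module
  have t6 : ¬ ∃ c : K, e₁ * (e₂ * (w₂ * w₄)) = c • (1 : M4 K) := by
    refine not_scalar_of_trace (l := -4) (d := 4 * η * η) h2 h5 hη F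
        (mul_ne_zero hk0 hk0) t2 ?_ ?_
    · rw [show (-4 : K) = -(2 * 2) by norm_num]
      simp [h2]
    · rw [hs]; module
  generalize e₁ * (e₂ * (w₂ * w₄)) = t at *
  have kk : ∀ x : M4 K, (k⁻¹ * k⁻¹) • (k * k) • x = x := by
    intro x
    rw [smul_smul]
    convert one_smul K x using 2
    field_simp
  refine ⟨k⁻¹ • t, ?_, ?_, ?_, ?_, ?_⟩
  · rw [transpose_smul, smul_mul_assoc, mul_smul_comm, smul_mul_assoc, t4, smul_smul, kk]
  · rw [smul_pow, t3, smul_smul, ← mul_pow, inv_mul_cancel₀ hk0, one_pow, one_smul]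
  · intro h
    refine t6 ⟨k, ?_⟩
    rw [← h, smul_smul, mul_inv_cancel₀ hk0, one_smul]
  · rw [mul_smul_comm, smul_mul_assoc, smul_mul_assoc, t5.1, smul_smul, kk]
  · rw [mul_smul_comm, smul_mul_assoc, smul_mul_assoc, t5.2, smul_smul, kk]

/-- A nondegenerate diagonal binary quadratic form over a finite field of odd order represents
every element. -/
theorem exists_diag_quadratic {K : Type} [Field K] [Fintype K] (hK : Fintype.card K % 2 = 1)
    {u v : K} (hu : u ≠ 0) (hv : v ≠ 0) (w : K) : ∃ x y : K, u * x ^ 2 + v * y ^ 2 = w := by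
  open Polynomial in
  obtain ⟨x, y, h⟩ := FiniteField.exists_root_sum_quadratic
    (f := C u * X ^ 2 + C 0 * X + C (-w)) (g := C v * X ^ 2 + C 0 * X + C 0)
    (degree_quadratic hu) (degree_quadratic hv) hK
  refine ⟨x, y, ?_⟩
  simp at h
  linear_combination h

/-! ### Normal forms -/

/-- The block-diagonal matrix, with two companion blocks of `X² - μ`, to which every matrix with
square `μ` considered below is conjugate. -/
def stdA {K : Type} [Field K] (μ : K) : M4 K := !![0, 1, 0, 0; μ, 0, 0, 0; 0, 0, 0, 1; 0, 0, μ, 0]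

/-- An alternating form for which `stdA μ` is self-adjoint. -/
def stdJ₁ {K : Type} [Field K] (μ : K) : M4 K :=
  !![0, 0, 1, 0; 0, 0, 0, μ; -1, 0, 0, 0; 0, -μ, 0, 0]

/-- The standard alternating form, for which `stdA μ` is anti-self-adjoint. -/
def stdJ₂ {K : Type} [Field K] : M4 K :=
  !![0, 1, 0, 0; -1, 0, 0, 0; 0, 0, 0, 1; 0, 0, -1, 0]

theorem stdJ₁_isUnit {K : Type} [Field K] {μ : K} (hμ : μ ≠ 0) : IsUnit (stdJ₁ μ) := by
  refine IsUnit.of_mul_eq_one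
    (!![0, 0, -1, 0; 0, 0, 0, -μ⁻¹; 1, 0, 0, 0; 0, μ⁻¹, 0, 0]) ?_
  ext i j
  fin_cases i <;> fin_cases j <;> simp [stdJ₁, Matrix.mul_apply, Fin.sum_univ_four, hμ]

theorem stdJ₂_isUnit {K : Type} [Field K] : IsUnit (stdJ₂ : M4 K) := by
  refine IsUnit.of_mul_eq_one (-stdJ₂) ?_
  ext i j
  fin_cases i <;> fin_cases j <;> simp [stdJ₂, Matrix.mul_apply, Fin.sum_univ_four]

theorem isUnit_of_congr {K : Type} [Field K] {P J J' : M4 K} (h : P * J * Pᵀ = J')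
    (hJ' : IsUnit J') : IsUnit P := by
  rw [← h, Matrix.isUnit_iff_isUnit_det, det_mul, det_mul] at hJ'
  rw [Matrix.isUnit_iff_isUnit_det]
  exact isUnit_of_mul_isUnit_left (isUnit_of_mul_isUnit_left hJ')

theorem Good.to_conj {K : Type} [Field K] {J A J' A' P : M4 K} (hP : IsUnit P)
    (hJ : P * J * Pᵀ = J') (hA : P * A = A' * P) (H : Good J A) : Good J' A' := by
  obtain ⟨Q, hPQ, hQP⟩ := isUnit_iff_exists.1 hP
  refine Good.of_conj (P := Q) (isUnit_iff_exists.2 ⟨P, hQP, hPQ⟩) ?_ ?_ H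
  · have : Pᵀ * Qᵀ = 1 := by rw [← transpose_mul, hQP, transpose_one]
    rw [← hJ]
    simp only [mul_assoc, this, mul_one]
    rw [← mul_assoc, hQP, one_mul]
  · calc Q * A' = Q * (A' * P) * Q := by simp only [mul_assoc, hPQ, mul_one]
      _ = A * Q := by rw [← hA, ← mul_assoc, hQP, one_mul]

set_option maxHeartbeats 2000000 in
/-- Over a finite field of odd order a frame of any nonzero norm exists. The first three matrices
use a solution of `a² + b² = -1`, the last one a solution of `s² + η t² = 5 η`. -/
theorem exists_frame {K : Type} [Field K] [Fintype K] (hK : Fintype.card K % 2 = 1) {η : K}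
    (hη : η ≠ 0) : ∃ J e₁ e₂ e₃ m : M4 K, Frame J e₁ e₂ e₃ m η := by
  obtain ⟨a, b, hab⟩ := exists_diag_quadratic hK (one_ne_zero (α := K)) one_ne_zero (-1)
  obtain ⟨s, t, hst⟩ := exists_diag_quadratic hK (one_ne_zero (α := K)) hη (5 * η)
  refine ⟨!![0, η, 0, 0; -η, 0, 0, 0; 0, 0, 0, 1; 0, 0, -1, 0],
    !![0, 0, η * a, η * b; 0, 0, η * b, -(η * a); -a, -b, 0, 0; -b, a, 0, 0],
    !![0, 0, -(η * b), η * a; 0, 0, η * a, η * b; b, -a, 0, 0; -a, -b, 0, 0],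
    !![0, 0, η, 0; 0, 0, 0, η; 1, 0, 0, 0; 0, 1, 0, 0],
    !![s, 0, 0, η * t; 0, s, -(η * t), 0; 0, -t, -s, 0; t, 0, 0, -s],
    ?_, ?_, ?_, ?_, ?_, ?_, ?_, ?_, ?_, ?_, ?_, ?_, ?_, ?_, ?_, ?_⟩
  case refine_16 =>
    refine IsUnit.of_mul_eq_one
      (!![0, -η⁻¹, 0, 0; η⁻¹, 0, 0, 0; 0, 0, 0, -1; 0, 0, 1, 0]) ?_
    ext i j
    fin_cases i <;> fin_cases j <;> simp [Matrix.mul_apply, Fin.sum_univ_four, hη]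
  all_goals
    ext i j
    fin_cases i <;> fin_cases j <;> simp [Matrix.mul_apply, Fin.sum_univ_four] <;> grind

/-- The entries of `P J Pᵀ` form the Gram matrix of the rows of `P` for the bilinear form
`x, y ↦ x ⬝ᵥ (J *ᵥ y)`. -/
theorem mul_mul_transpose_apply {K : Type} [Field K] (J : M4 K) (r : Fin 4 → Fin 4 → K)
    (i j : Fin 4) : (Matrix.of r * J * (Matrix.of r)ᵀ) i j = r i ⬝ᵥ (J *ᵥ r j) := by
  rw [mul_assoc]; rfl

theorem bil_swap {K : Type} [Field K] {J : M4 K} (hJ : Jᵀ = -J) (x y : Fin 4 → K) :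
    x ⬝ᵥ (J *ᵥ y) = -(y ⬝ᵥ (J *ᵥ x)) := by
  rw [dotProduct_comm, ← vecMul_transpose, ← dotProduct_mulVec, hJ, neg_mulVec, dotProduct_neg]

theorem bil_left {K : Type} [Field K] (J A : M4 K) (x y : Fin 4 → K) :
    (x ᵥ* A) ⬝ᵥ (J *ᵥ y) = x ⬝ᵥ ((A * J) *ᵥ y) := by
  rw [← dotProduct_mulVec, mulVec_mulVec]

theorem bil_right {K : Type} [Field K] (J A : M4 K) (x y : Fin 4 → K) :
    x ⬝ᵥ (J *ᵥ (y ᵥ* A)) = x ⬝ᵥ ((J * Aᵀ) *ᵥ y) := by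
  rw [← mulVec_mulVec, mulVec_transpose]

theorem exists_bil_eq {K : Type} [Field K] {J : M4 K} (hJ : IsUnit J) (c : Fin 4 → K) :
    ∃ y, J *ᵥ y = c := by
  obtain ⟨Q, hPQ, -⟩ := isUnit_iff_exists.1 hJ
  exact ⟨Q *ᵥ c, by rw [mulVec_mulVec, hPQ, one_mulVec]⟩

/-- A matrix for which every row vector is an eigenvector is a scalar. -/
theorem exists_not_eigen {K : Type} [Field K] {A : M4 K} (hA : ¬ ∃ c : K, A = c • (1 : M4 K)) :
    ∃ e : Fin 4 → K, ∀ c : K, e ᵥ* A ≠ c • e := by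
  by_contra! H
  choose c hc using H
  have row : ∀ i j, A i j = c (Pi.single i 1) * (Pi.single i 1 : Fin 4 → K) j := by
    intro i j
    have := congrFun (hc (Pi.single i 1)) j
    simpa using this
  have same : ∀ i j, i ≠ j → c (Pi.single i 1) = c (Pi.single j 1) := by
    intro i j hij
    have e := hc (Pi.single i 1 + Pi.single j 1)
    rw [add_vecMul, hc, hc] at e
    have e1 := congrFun e i
    have e2 := congrFun e j
    simp [Pi.single_apply, hij, hij.symm] at e1 e2
    rw [e1, e2]
  refine hA ⟨c (Pi.single 0 1), ?_⟩
  ext i j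
  rw [row]
  by_cases hij : j = i
  · subst hij
    by_cases h0 : j = 0
    · subst h0; simp
    · simp [same j 0 h0]
  · simp [hij, Matrix.one_apply, Ne.symm hij, Pi.single_apply]

/-- If `e` is not a multiple of `v ≠ 0`, then some linear form kills `v` and takes the value `1`
at `e`. -/
theorem exists_separating {K : Type} [Field K] {e v : Fin 4 → K} (hv : v ≠ 0)
    (h : ∀ c : K, e ≠ c • v) : ∃ c : Fin 4 → K, e ⬝ᵥ c = 1 ∧ v ⬝ᵥ c = 0 := by
  obtain ⟨i, hi⟩ := Function.ne_iff.1 hv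
  obtain ⟨j, hj⟩ := Function.ne_iff.1 (h (e i / v i))
  simp only [Pi.zero_apply, Pi.smul_apply, smul_eq_mul] at hi hj
  have hd : e j - e i / v i * v j ≠ 0 := sub_ne_zero.2 hj
  refine ⟨(e j - e i / v i * v j)⁻¹ • (Pi.single j 1 - (v j / v i) • Pi.single i 1), ?_, ?_⟩
  · simp only [dotProduct_smul, dotProduct_sub, dotProduct_single, smul_eq_mul, mul_one]
    rw [← inv_mul_cancel₀ hd]
    ring
  · simp only [dotProduct_smul, dotProduct_sub, dotProduct_single, smul_eq_mul, mul_one]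
    field_simp
    simp

/-- In a basis of the form `e, eA, f, fA`, a matrix `A` with `A² = μ` becomes `stdA μ`. -/
theorem rows_mul {K : Type} [Field K] {A : M4 K} {μ : K} (hA : A * A = μ • 1)
    (e f : Fin 4 → K) :
    (Matrix.of ![e, e ᵥ* A, f, f ᵥ* A] : M4 K) * A = stdA μ * Matrix.of ![e, e ᵥ* A, f, f ᵥ* A] := by
  have hx : ∀ x : Fin 4 → K, x ᵥ* A ᵥ* A = μ • x := by
    intro x; rw [vecMul_vecMul, hA, vecMul_smul, vecMul_one]
  have key : ∀ i, ((Matrix.of ![e, e ᵥ* A, f, f ᵥ* A] : M4 K) * A) i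
     = (![e, e ᵥ* A, f, f ᵥ* A] i) ᵥ* A := fun i => rfl
  funext i
  rw [key]
  fin_cases i
  · ext j; simp [stdA, Matrix.mul_apply, Fin.sum_univ_four]
  · ext j; simp [stdA, Matrix.mul_apply, Fin.sum_univ_four, hx]
  · ext j; simp [stdA, Matrix.mul_apply, Fin.sum_univ_four]
  · ext j; simp [stdA, Matrix.mul_apply, Fin.sum_univ_four, hx]

theorem bil_self {K : Type} [Field K] {J : M4 K} (h2 : (2 : K) ≠ 0) (hJ : Jᵀ = -J)
    (x : Fin 4 → K) : x ⬝ᵥ (J *ᵥ x) = 0 := by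
  have := bil_swap hJ x x
  have h : 2 * (x ⬝ᵥ (J *ᵥ x)) = 0 := by linear_combination this
  simpa [h2] using h

/-- Self-adjoint case. For any `e` the vectors `e` and `eA` are orthogonal; if `e` is not an
eigenvector, a vector `f` with `⟨e, f⟩ = 1` and `⟨eA, f⟩ = 0` completes `e, eA, fA` to a basis with
the required Gram matrix. -/
theorem normal_form_selfAdjoint {K : Type} [Field K] {J A : M4 K} {μ : K} (h2 : (2 : K) ≠ 0)
    (hJ : Jᵀ = -J) (hJu : IsUnit J) (hμ : μ ≠ 0) (hA : A * A = μ • 1) (hAJ : A * J = J * Aᵀ)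
    (hs : ¬ ∃ c : K, A = c • (1 : M4 K)) :
    ∃ P : M4 K, IsUnit P ∧ P * J * Pᵀ = stdJ₁ μ ∧ P * A = stdA μ * P := by
  obtain ⟨e, he⟩ := exists_not_eigen hs
  have hx : ∀ x : Fin 4 → K, x ᵥ* A ᵥ* A = μ • x := by
    intro x; rw [vecMul_vecMul, hA, vecMul_smul, vecMul_one]
  have hadj : ∀ x y : Fin 4 → K, (x ᵥ* A) ⬝ᵥ (J *ᵥ y) = x ⬝ᵥ (J *ᵥ (y ᵥ* A)) := by
    intro x y; rw [bil_left, bil_right, hAJ]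
  have hself : ∀ x : Fin 4 → K, x ⬝ᵥ (J *ᵥ (x ᵥ* A)) = 0 := by
    intro x
    have h := hadj x x
    rw [bil_swap hJ (x ᵥ* A) x] at h
    have h' : 2 * (x ⬝ᵥ (J *ᵥ (x ᵥ* A))) = 0 := by linear_combination -h
    simpa [h2] using h'
  have hself' : ∀ x : Fin 4 → K, (x ᵥ* A) ⬝ᵥ (J *ᵥ x) = 0 := by
    intro x; rw [hadj, hself]
  have hv : e ᵥ* A ≠ 0 := by
    intro h; exact he 0 (by rw [h, zero_smul])
  obtain ⟨c, hc1, hc2⟩ := exists_separating (e := e) (v := e ᵥ* A) hv (by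
    intro c h
    have h' := congrArg (fun x => x ᵥ* A) h
    simp only [smul_vecMul, hx] at h'
    exact he (c * μ) (by rw [h', smul_smul]))
  obtain ⟨f, rfl⟩ := exists_bil_eq hJu c
  have q1 : e ⬝ᵥ (J *ᵥ (f ᵥ* A)) = 0 := by rw [← hadj, hc2]
  have q2 : (e ᵥ* A) ⬝ᵥ (J *ᵥ (f ᵥ* A)) = μ := by
    rw [hadj, hx, mulVec_smul, dotProduct_smul, hc1, smul_eq_mul, mul_one]
  have hP : (Matrix.of ![e, e ᵥ* A, f, f ᵥ* A] : M4 K) * J *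
      (Matrix.of ![e, e ᵥ* A, f, f ᵥ* A] : M4 K)ᵀ = stdJ₁ μ := by
    ext i j
    rw [mul_mul_transpose_apply]
    fin_cases i <;> fin_cases j <;>
      simp [stdJ₁, bil_self h2 hJ, hself, hself', hc1, hc2, q1, q2, bil_swap hJ f e,
        bil_swap hJ f (e ᵥ* A), bil_swap hJ (f ᵥ* A) e, bil_swap hJ (f ᵥ* A) (e ᵥ* A)]
  exact ⟨_, isUnit_of_congr hP (stdJ₁_isUnit hμ), hP, rows_mul hA e f⟩

/-- Anti-self-adjoint case. Here `q(x) = ⟨x, xA⟩` is a nondegenerate quadratic form with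
`q(xA) = -μ q(x)` and `x`, `xA` are orthogonal for it, so that on the span of `x` and `xA` it
represents `1` as soon as `q(x) ≠ 0`. This produces `e` with `q(e) = 1`, and then, in the orthogonal
complement of `e` and `eA`, a vector `f` with `q(f) = 1`. -/
theorem normal_form_antiSelfAdjoint {K : Type} [Field K] [Fintype K]
    (hK : Fintype.card K % 2 = 1) {J A : M4 K} {μ : K} (h2 : (2 : K) ≠ 0)
    (hJ : Jᵀ = -J) (hJu : IsUnit J) (hμ : μ ≠ 0) (hA : A * A = μ • 1)
    (hAJ : A * J = -(J * Aᵀ)) :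
    ∃ P : M4 K, IsUnit P ∧ P * J * Pᵀ = stdJ₂ ∧ P * A = stdA μ * P := by
  have hx : ∀ x : Fin 4 → K, x ᵥ* A ᵥ* A = μ • x := by
    intro x; rw [vecMul_vecMul, hA, vecMul_smul, vecMul_one]
  have hadj : ∀ x y : Fin 4 → K, (x ᵥ* A) ⬝ᵥ (J *ᵥ y) = -(x ⬝ᵥ (J *ᵥ (y ᵥ* A))) := by
    intro x y; rw [bil_left, bil_right, hAJ, neg_mulVec, dotProduct_neg]
  have hsymm : ∀ x y : Fin 4 → K, x ⬝ᵥ (J *ᵥ (y ᵥ* A)) = y ⬝ᵥ (J *ᵥ (x ᵥ* A)) := by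
    intro x y; rw [bil_swap hJ x, hadj, neg_neg]
  have hcomb : ∀ (x y : Fin 4 → K) (s t : K), (s • x + t • y) ⬝ᵥ (J *ᵥ ((s • x + t • y) ᵥ* A)) =
      s * s * (x ⬝ᵥ (J *ᵥ (x ᵥ* A))) + 2 * s * t * (x ⬝ᵥ (J *ᵥ (y ᵥ* A))) +
        t * t * (y ⬝ᵥ (J *ᵥ (y ᵥ* A))) := by
    intro x y s t
    simp only [add_vecMul, smul_vecMul, mulVec_add, mulVec_smul, dotProduct_add, add_dotProduct,
      smul_dotProduct, dotProduct_smul, smul_eq_mul, hsymm y x]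
    ring
  have hnondeg : ∀ y : Fin 4 → K, y ≠ 0 → ∃ z : Fin 4 → K, y ⬝ᵥ (J *ᵥ (z ᵥ* A)) ≠ 0 := by
    intro y hy
    obtain ⟨i, hi⟩ := Function.ne_iff.1 hy
    obtain ⟨w, hw⟩ := exists_bil_eq hJu (Pi.single i 1)
    refine ⟨μ⁻¹ • (w ᵥ* A), ?_⟩
    rw [smul_vecMul, hx, smul_smul, inv_mul_cancel₀ hμ, one_smul, hw, dotProduct_single, mul_one]
    exact hi
  have hrot : ∀ x : Fin 4 → K, (x ᵥ* A) ⬝ᵥ (J *ᵥ (x ᵥ* A ᵥ* A)) =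
      -μ * (x ⬝ᵥ (J *ᵥ (x ᵥ* A))) := by
    intro x
    rw [hx, mulVec_smul, dotProduct_smul, hadj, smul_eq_mul]; ring
  have hrot' : ∀ x : Fin 4 → K, x ⬝ᵥ (J *ᵥ (x ᵥ* A ᵥ* A)) = 0 := by
    intro x
    rw [hx, mulVec_smul, dotProduct_smul, bil_self h2 hJ, smul_zero]
  have hscale : ∀ x : Fin 4 → K, x ⬝ᵥ (J *ᵥ (x ᵥ* A)) ≠ 0 → ∃ s t : K,
      (s • x + t • (x ᵥ* A)) ⬝ᵥ (J *ᵥ ((s • x + t • (x ᵥ* A)) ᵥ* A)) = 1 := by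
    intro x hb
    obtain ⟨s, t, hst⟩ := exists_diag_quadratic hK hb (v := -μ * (x ⬝ᵥ (J *ᵥ (x ᵥ* A))))
      (mul_ne_zero (neg_ne_zero.2 hμ) hb) 1
    refine ⟨s, t, ?_⟩
    rw [hcomb, hrot, hrot']
    linear_combination hst
  obtain ⟨e₀, he₀⟩ : ∃ e : Fin 4 → K, e ⬝ᵥ (J *ᵥ (e ᵥ* A)) ≠ 0 := by
    by_contra! H
    obtain ⟨z, hz⟩ := hnondeg (Pi.single 0 1) (by simp)
    have := hcomb (Pi.single 0 1) z 1 1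
    rw [H, H, H] at this
    have h' : 2 * ((Pi.single 0 1 : Fin 4 → K) ⬝ᵥ (J *ᵥ (z ᵥ* A))) = 0 := by
      linear_combination -this
    exact hz (by simpa [h2] using h')
  obtain ⟨e, he⟩ : ∃ e : Fin 4 → K, e ⬝ᵥ (J *ᵥ (e ᵥ* A)) = 1 := by
    obtain ⟨s, t, h⟩ := hscale e₀ he₀
    exact ⟨_, h⟩
  obtain ⟨y, hy0, hy1, hy2⟩ : ∃ y : Fin 4 → K, y ≠ 0 ∧ e ⬝ᵥ (J *ᵥ y) = 0 ∧
      (e ᵥ* A) ⬝ᵥ (J *ᵥ y) = 0 := by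
    have hdet : (Matrix.of ![e, e ᵥ* A, 0, 0] : M4 K).det = 0 :=
      det_eq_zero_of_row_eq_zero 2 (fun j => by simp)
    obtain ⟨c, hc0, hc⟩ := Matrix.exists_mulVec_eq_zero_iff.2 hdet
    obtain ⟨y, hy⟩ := exists_bil_eq hJu c
    refine ⟨y, ?_, ?_, ?_⟩
    · rintro rfl
      exact hc0 (by rw [← hy, mulVec_zero])
    · rw [hy]; exact congrFun hc 0
    · rw [hy]; exact congrFun hc 1
  obtain ⟨f₀, hf₀, hf1, hf2⟩ : ∃ f : Fin 4 → K, f ⬝ᵥ (J *ᵥ (f ᵥ* A)) ≠ 0 ∧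
      e ⬝ᵥ (J *ᵥ f) = 0 ∧ (e ᵥ* A) ⬝ᵥ (J *ᵥ f) = 0 := by
    by_contra! H
    obtain ⟨z, hz⟩ := hnondeg y hy0
    have hy3 : y ⬝ᵥ (J *ᵥ (e ᵥ* A)) = 0 := by rw [bil_swap hJ, hy2, neg_zero]
    have hy4 : y ⬝ᵥ (J *ᵥ e) = 0 := by rw [bil_swap hJ, hy1, neg_zero]
    -- Projecting `z` to the complement of `e` and `eA` does not change its pairing with `y`.
    obtain ⟨w, hw⟩ : ∃ w, w = z + (e ᵥ* A ⬝ᵥ (J *ᵥ z)) • e - (e ⬝ᵥ (J *ᵥ z)) • (e ᵥ* A) :=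
      ⟨_, rfl⟩
    have hee : (e ᵥ* A) ⬝ᵥ (J *ᵥ e) = -1 := by rw [hadj, he]
    have hw1 : e ⬝ᵥ (J *ᵥ w) = 0 := by
      rw [hw]
      simp only [mulVec_add, mulVec_sub, mulVec_smul, dotProduct_add, dotProduct_sub,
        dotProduct_smul, smul_eq_mul, bil_self h2 hJ, he]
      ring
    have hw2 : (e ᵥ* A) ⬝ᵥ (J *ᵥ w) = 0 := by
      rw [hw]
      simp only [mulVec_add, mulVec_sub, mulVec_smul, dotProduct_add, dotProduct_sub,
        dotProduct_smul, smul_eq_mul, bil_self h2 hJ, hee]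
      ring
    have hyw : y ⬝ᵥ (J *ᵥ (w ᵥ* A)) = y ⬝ᵥ (J *ᵥ (z ᵥ* A)) := by
      rw [hw]
      simp only [add_vecMul, sub_vecMul, smul_vecMul, mulVec_add, mulVec_sub, mulVec_smul,
        dotProduct_add, dotProduct_sub, dotProduct_smul, smul_eq_mul, hx, hy3, hy4]
      ring
    have n1 : y ⬝ᵥ (J *ᵥ (y ᵥ* A)) = 0 := by
      by_contra h; exact H y h hy1 hy2
    have n2 : w ⬝ᵥ (J *ᵥ (w ᵥ* A)) = 0 := by
      by_contra h; exact H w h hw1 hw2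
    have n3 : ((1 : K) • y + (1 : K) • w) ⬝ᵥ (J *ᵥ (((1 : K) • y + (1 : K) • w) ᵥ* A)) = 0 := by
      by_contra h
      refine H _ h ?_ ?_ <;>
      simp only [mulVec_add, mulVec_smul, dotProduct_add, dotProduct_smul, hy1, hy2, hw1, hw2,
        smul_zero, add_zero]
    rw [hcomb, n1, n2, hyw] at n3
    have h' : 2 * (y ⬝ᵥ (J *ᵥ (z ᵥ* A))) = 0 := by linear_combination n3
    exact hz (by simpa [h2] using h')
  have hf3 : e ⬝ᵥ (J *ᵥ (f₀ ᵥ* A)) = 0 := by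
    have := hadj e f₀
    rw [hf2] at this
    linear_combination this
  have hf4 : (e ᵥ* A) ⬝ᵥ (J *ᵥ (f₀ ᵥ* A)) = 0 := by
    rw [hadj, hx, mulVec_smul, dotProduct_smul, hf1, smul_zero, neg_zero]
  obtain ⟨f, hf, hg1, hg2⟩ : ∃ f : Fin 4 → K, f ⬝ᵥ (J *ᵥ (f ᵥ* A)) = 1 ∧
      e ⬝ᵥ (J *ᵥ f) = 0 ∧ (e ᵥ* A) ⬝ᵥ (J *ᵥ f) = 0 := by
    obtain ⟨s, t, h⟩ := hscale f₀ hf₀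
    refine ⟨_, h, ?_, ?_⟩ <;>
    simp only [mulVec_add, mulVec_smul, dotProduct_add, dotProduct_smul, hf1, hf2, hf3, hf4,
        smul_zero, add_zero]
  have hg3 : e ⬝ᵥ (J *ᵥ (f ᵥ* A)) = 0 := by
    have := hadj e f
    rw [hg2] at this
    linear_combination this
  have hg4 : (e ᵥ* A) ⬝ᵥ (J *ᵥ (f ᵥ* A)) = 0 := by
    rw [hadj, hx, mulVec_smul, dotProduct_smul, hg1, smul_zero, neg_zero]
  have hP : (Matrix.of ![e, e ᵥ* A, f, f ᵥ* A] : M4 K) * J *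
      (Matrix.of ![e, e ᵥ* A, f, f ᵥ* A] : M4 K)ᵀ = stdJ₂ := by
    ext i j
    rw [mul_mul_transpose_apply]
    fin_cases i <;> fin_cases j <;>
      simp [stdJ₂, bil_self h2 hJ, he, hf, hg1, hg2, hg3, hg4, bil_swap hJ f e,
        bil_swap hJ f (e ᵥ* A), bil_swap hJ (f ᵥ* A) e, bil_swap hJ (f ᵥ* A) (e ᵥ* A),
        bil_swap hJ (e ᵥ* A) e, bil_swap hJ (f ᵥ* A) f]
  exact ⟨_, isUnit_of_congr hP stdJ₂_isUnit, hP, rows_mul hA e f⟩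

/-! ### The two classes of involutions -/

/-- In characteristic five, unipotent matrices with `N² = 0` have order dividing five. -/
theorem one_add_pow_five {K : Type} [Field K] {N : M4 K} (h5 : (5 : K) = 0) (hN : N * N = 0) :
    (1 + N) ^ 5 = 1 := by
  have h : (1 + N) ^ 5 = 1 + (5 : K) • N + N * N * (10 + 10 * N + 5 * N * N + N * N * N) := by
    rw [show (5 : K) = ((5 : ℕ) : K) by norm_num, Nat.cast_smul_eq_nsmul]
    noncomm_ring
  rw [h, hN, h5, zero_smul, zero_mul, add_zero, add_zero]

theorem one_add_ne_one {K : Type} [Field K] {N : M4 K} {i j : Fin 4} (h : N i j ≠ 0) :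
    1 + N ≠ 1 := by
  intro h'
  rw [add_eq_left] at h'
  exact h (by rw [h']; rfl)

theorem ne_zero_of_isUnit {K : Type} [Field K] {J : M4 K} (hJ : IsUnit J) : J ≠ 0 := by
  rintro rfl
  exact not_isUnit_zero hJ

/-- In characteristic five a unipotent `T` inverted by `stdA μ` is written down. Otherwise
`A` has the same normal form as the root `2e₁ - 2e₂` in a frame of norm `μ / 8`. -/
theorem good_selfAdjoint {K : Type} [Field K] [Fintype K] (hK : Fintype.card K % 2 = 1)
    (h2 : (2 : K) ≠ 0) {J A : M4 K} {μ : K}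
    (hJ : Jᵀ = -J) (hJu : IsUnit J) (hμ : μ ≠ 0) (hA : A * A = μ • 1) (hAJ : A * J = J * Aᵀ)
    (hs : ¬ ∃ c : K, A = c • (1 : M4 K)) : Good J A := by
  obtain ⟨P, hP, hPJ, hPA⟩ := normal_form_selfAdjoint h2 hJ hJu hμ hA hAJ hs
  refine Good.of_conj hP hPJ hPA ?_
  by_cases h5 : (5 : K) = 0
  · refine good_of_inverts (T := 1 + !![0,0,1,0;0,0,0,-1;0,0,0,0;0,0,0,0]) (μ := μ)
      (ne_zero_of_isUnit (stdJ₁_isUnit hμ)) hμ ?_ ?_ (one_add_pow_five h5 ?_)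
      (one_add_ne_one (i := 0) (j := 2) (by simp)) ?_ <;>
    · ext i j
      fin_cases i <;> fin_cases j <;>
        simp [stdJ₁, stdA, Matrix.mul_apply, Fin.sum_univ_four, Matrix.one_apply]
  · have h8 : (8 : K) ≠ 0 := by
      rw [show (8 : K) = 2 * 2 * 2 by norm_num]
      simp [h2]
    have hη : μ / 8 ≠ 0 := div_ne_zero hμ h8
    obtain ⟨J', e₁, e₂, e₃, m, hF⟩ := exists_frame hK hη
    have hA' : ((2 : K) • e₁ - (2 : K) • e₂) * ((2 : K) • e₁ - (2 : K) • e₂) = μ • 1 := by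
      have : μ = 8 * (μ / 8) := by field_simp
      rw [this]
      simp only [mul_sub, sub_mul, smul_mul_assoc, mul_smul_comm, hF.sq1, hF.sq2, hF.ac21]
      module
    have hAJ' : ((2 : K) • e₁ - (2 : K) • e₂) * J' = J' * ((2 : K) • e₁ - (2 : K) • e₂)ᵀ := by
      simp only [mul_sub, sub_mul, smul_mul_assoc, mul_smul_comm, transpose_sub, transpose_smul,
        hF.sa1, hF.sa2]
    have hs' : ¬ ∃ c : K, ((2 : K) • e₁ - (2 : K) • e₂) = c • (1 : M4 K) := by
      rintro ⟨c, hc⟩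
      have h1 : ((2 : K) • e₁ - (2 : K) • e₂) * e₃ + e₃ * ((2 : K) • e₁ - (2 : K) • e₂) = 0 := by
        simp only [mul_sub, sub_mul, smul_mul_assoc, mul_smul_comm, hF.ac31, hF.ac32]
        module
      rw [hc, smul_mul_assoc, mul_smul_comm, one_mul, mul_one, ← add_smul] at h1
      have h3 : (c + c) • (e₃ * e₃) = 0 := by rw [← smul_mul_assoc, h1, zero_mul]
      rw [hF.sq3, smul_smul] at h3
      have hc0 : c = 0 := by
        rcases smul_eq_zero.1 h3 with h | h
        · rcases mul_eq_zero.1 h with h | h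
          · have : 2 * c = 0 := by linear_combination h
            simpa [h2] using this
          · exact absurd h hη
        · exact absurd h one_ne_zero
      rw [hc, hc0, zero_smul, zero_mul, eq_comm] at hA'
      rcases smul_eq_zero.1 hA' with h | h
      · exact hμ h
      · exact one_ne_zero h
    obtain ⟨Q, hQ, hQJ, hQA⟩ := normal_form_selfAdjoint h2 hF.anti hF.unit hμ hA' hAJ' hs'
    exact (good_reflection h2 h5 hη hF).to_conj hQ hQJ hQA

theorem good_stdA_of_five_eq_zero {K : Type} [Field K] {μ : K} (hμ : μ ≠ 0) (h5 : (5 : K) = 0) :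
    Good stdJ₂ (stdA μ) := by
  refine good_of_inverts (T := 1 + !![1, 0, 2, 0; 0, -1, 0, -2; 2, 0, -1, 0; 0, -2, 0, 1])
      (μ := μ) (ne_zero_of_isUnit stdJ₂_isUnit) hμ ?_ ?_ (one_add_pow_five h5 ?_)
      (one_add_ne_one (i := 0) (j := 0) (by simp)) ?_ <;>
  · ext i j
    fin_cases i <;> fin_cases j <;>
      simp [stdJ₂, stdA, Matrix.mul_apply, Fin.sum_univ_four, Matrix.one_apply] <;> grind

set_option maxHeartbeats 1000000 in
/-- If `5 = s²`, then `2 a = (s - 1) / 2` is a root of `c² + c = 1`, so a matrix of determinant one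
and trace `2 a` has order five. With `p² - μ r² = a² - 1` the block `[a + p, r; -μ r, a - p]` is such
a matrix, and it is inverted by the companion matrix of `X² - μ`. -/
theorem good_stdA_of_isSquare_five {K : Type} [Field K] [Fintype K]
    (hK : Fintype.card K % 2 = 1) (h2 : (2 : K) ≠ 0) {μ : K} (hμ : μ ≠ 0) (h5 : (5 : K) ≠ 0)
    (hsq : IsSquare (5 : K)) : Good stdJ₂ (stdA μ) := by
  obtain ⟨s, hs⟩ := hsq
  obtain ⟨a, ha⟩ : ∃ a : K, 4 * a = s - 1 := by
    refine ⟨(s - 1) / (2 * 2), ?_⟩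
    field_simp
    ring
  have hc : 4 * (a * a) + 2 * a = 1 := by
    have : (4 : K) * (4 * (a * a) + 2 * a - 1) = 0 := by
      linear_combination (4 * a + s + 1) * ha - hs
    have h4 : (4 : K) ≠ 0 := by
      rw [show (4 : K) = 2 * 2 by norm_num]; simp [h2]
    have := (mul_eq_zero.1 this).resolve_left h4
    linear_combination this
  obtain ⟨p, r, hpr⟩ := exists_diag_quadratic hK one_ne_zero (neg_ne_zero.2 hμ) (a * a - 1)
  have h1 : (!![a + p, r, 0, 0; -(μ * r), a - p, 0, 0; 0, 0, a + p, r; 0, 0, -(μ * r), a - p] :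
      M4 K) ^ 5 = 1 := by
    have := pow_five_of_quadratic (k := (1 : K))
      (t := !![a + p, r, 0, 0; -(μ * r), a - p, 0, 0; 0, 0, a + p, r; 0, 0, -(μ * r), a - p])
      (t' := !![a - p, -r, 0, 0; μ * r, a + p, 0, 0; 0, 0, a - p, -r; 0, 0, μ * r, a + p])
      ?_ ?_ ?_
    · rw [this, one_pow, one_smul]
    all_goals
      ext i j
      fin_cases i <;> fin_cases j <;>
        simp [Matrix.mul_apply, Fin.sum_univ_four, Matrix.one_apply] <;> grind
  refine good_of_inverts (T := _) (μ := μ) (ne_zero_of_isUnit stdJ₂_isUnit) hμ ?_ ?_ h1 ?_ ?_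
  case refine_3 =>
    intro h
    have e0 := congrFun (congrFun h 0) 0
    have e1 := congrFun (congrFun h 1) 1
    simp at e0 e1
    have h6 : 2 * a = 2 := by linear_combination e0 + e1
    exact h5 (by linear_combination hc - (2 * a + 3) * h6)
  all_goals
    ext i j
    fin_cases i <;> fin_cases j <;>
      simp [stdJ₂, stdA, Matrix.mul_apply, Fin.sum_univ_four, Matrix.one_apply] <;> grind

theorem isSquare_mul_of_not {K : Type} [Field K] [Fintype K] {a b : K} (ha : ¬ IsSquare a)
    (hb : ¬ IsSquare b) : IsSquare (a * b) := by
  classical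
  have ha0 : a ≠ 0 := by rintro rfl; exact ha (IsSquare.zero)
  have hb0 : b ≠ 0 := by rintro rfl; exact hb (IsSquare.zero)
  rw [← quadraticChar_one_iff_isSquare (mul_ne_zero ha0 hb0), map_mul,
    quadraticChar_neg_one_iff_not_isSquare.2 ha, quadraticChar_neg_one_iff_not_isSquare.2 hb]
  norm_num

/-- If `5` is not a square, then `-μ` or `-5μ` is a square, so that after rescaling `stdA μ` has
the normal form of `e₁ e₂` (square `-1`) or of `e₃ m` (square `-5`) in a frame of norm one. Both are
inverted by the element of order five from `exists_inverted`. -/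
theorem good_stdA_of_not_isSquare_five {K : Type} [Field K] [Fintype K]
    (hK : Fintype.card K % 2 = 1) (h2 : (2 : K) ≠ 0) {μ : K} (hμ : μ ≠ 0) (h5 : ¬ IsSquare (5 : K)) :
    Good stdJ₂ (stdA μ) := by
  have h50 : (5 : K) ≠ 0 := by intro h; rw [h] at h5; exact h5 IsSquare.zero
  obtain ⟨J', e₁, e₂, e₃, m, hF⟩ := exists_frame hK (one_ne_zero (α := K))
  obtain ⟨T, hT, hT5, hT1, hTA, hTB⟩ := exists_inverted h2 h50 one_ne_zero hF
  have hJ2 : stdJ₂ᵀ = -(stdJ₂ : M4 K) := by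
    ext i j
    fin_cases i <;> fin_cases j <;> simp [stdJ₂]
  have hA2 : stdA μ * stdA μ = μ • 1 := by
    ext i j
    fin_cases i <;> fin_cases j <;> simp [stdA, Matrix.mul_apply, Fin.sum_univ_four]
  have hAJ2 : stdA μ * stdJ₂ = -(stdJ₂ * (stdA μ)ᵀ) := by
    ext i j
    fin_cases i <;> fin_cases j <;>
      simp [stdA, stdJ₂, Matrix.mul_apply, Fin.sum_univ_four, Matrix.vecMul, dotProduct]
  have hanti : ∀ {e f : M4 K}, e * J' = J' * eᵀ → f * J' = J' * fᵀ → f * e = -(e * f) →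
      (e * f) * J' = -(J' * (e * f)ᵀ) := by
    intro e f he hf hfe
    rw [transpose_mul, ← mul_assoc J', ← hf, mul_assoc f, ← he, ← mul_assoc f, hfe, neg_mul,
      neg_neg]
  have main : ∀ {B : M4 K} {ν k : K}, ν ≠ 0 → k ≠ 0 → μ = ν * (k * k) → B * B = ν • 1 →
      B * J' = -(J' * Bᵀ) → T * B * T = B → Good stdJ₂ (stdA μ) := by
    intro B ν k hν hk hμk hB hBJ hTB
    have hG := good_of_inverts (ne_zero_of_isUnit hF.unit) hν hB hT hT5 hT1 hTB
    obtain ⟨P, hP, hPJ, hPB⟩ := normal_form_antiSelfAdjoint hK h2 hF.anti hF.unit hν hB hBJ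
    obtain ⟨Q, hQ, hQJ, hQA⟩ := normal_form_antiSelfAdjoint (A := k⁻¹ • stdA μ) hK h2 hJ2
      stdJ₂_isUnit hν (by
        rw [smul_mul_smul_comm, hA2, smul_smul, hμk]
        congr 1
        field_simp) (by rw [smul_mul_assoc, hAJ2, transpose_smul, mul_smul_comm, smul_neg])
    exact ((hG.to_conj hP hPJ hPB).of_conj hQ hQJ hQA).of_smul (inv_ne_zero hk)
  have split : ∃ k : K, -μ = k * k ∨ -μ * 5 = k * k := by
    by_cases h : IsSquare (-μ)
    · obtain ⟨k, hk⟩ := h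
      exact ⟨k, Or.inl hk⟩
    · obtain ⟨k, hk⟩ := isSquare_mul_of_not h h5
      exact ⟨k, Or.inr hk⟩
  obtain ⟨k, hk | hk⟩ := split
  · refine main (B := e₁ * e₂) (ν := -1) (k := k) (neg_ne_zero.2 one_ne_zero) ?_ ?_ ?_
      (hanti hF.sa1 hF.sa2 hF.ac21) hTA
    · rintro rfl
      exact hμ (by linear_combination -hk)
    · linear_combination -hk
    · rw [mul_assoc, assoc_ac hF.ac21, hF.sq2, mul_neg, mul_smul_comm, mul_smul_comm, mul_one,
        hF.sq1]
      module
  · refine main (B := e₃ * m) (ν := -5) (k := k / 5) (neg_ne_zero.2 h50) ?_ ?_ ?_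
      (hanti hF.sa3 hF.sa4 hF.ac43) hTB
    · rintro h
      rw [div_eq_zero_iff] at h
      have hk0 := h.resolve_right h50
      rw [hk0] at hk
      simp [hμ, h50] at hk
    · field_simp
      linear_combination -hk
    · rw [mul_assoc, assoc_ac hF.ac43, hF.sq4, mul_neg, mul_smul_comm, mul_smul_comm]
      simp only [mul_one, hF.sq3]
      module

theorem good_antiSelfAdjoint {K : Type} [Field K] [Fintype K] (hK : Fintype.card K % 2 = 1)
    (h2 : (2 : K) ≠ 0) {J A : M4 K} {μ : K} (hJ : Jᵀ = -J) (hJu : IsUnit J) (hμ : μ ≠ 0)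
    (hA : A * A = μ • 1) (hAJ : A * J = -(J * Aᵀ)) : Good J A := by
  obtain ⟨P, hP, hPJ, hPA⟩ := normal_form_antiSelfAdjoint hK h2 hJ hJu hμ hA hAJ
  refine Good.of_conj hP hPJ hPA ?_
  by_cases h50 : (5 : K) = 0
  · exact good_stdA_of_five_eq_zero hμ h50
  by_cases h5 : IsSquare (5 : K)
  · exact good_stdA_of_isSquare_five hK h2 hμ h50 h5
  · exact good_stdA_of_not_isSquare_five hK h2 hμ h5

/-! ### Passage to the projective similitude group -/

/-- Taking multipliers in `A² = μ` gives `c² = μ²`; the sign of `c = ±μ` decides whether `A` is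
self-adjoint or anti-self-adjoint. -/
theorem good_of_similitude {K : Type} [Field K] [Fintype K] (hK : Fintype.card K % 2 = 1)
    (h2 : (2 : K) ≠ 0) {J A : M4 K} {μ c : K} (hJ : Jᵀ = -J) (hJu : IsUnit J) (hμ : μ ≠ 0)
    (hA : A * A = μ • 1) (hc : A * J * Aᵀ = c • J) (hs : ¬ ∃ c : K, A = c • (1 : M4 K)) :
    Good J A := by
  have e1 : μ • (J * Aᵀ) = c • (A * J) := by
    calc μ • (J * Aᵀ) = A * A * (J * Aᵀ) := by rw [hA, smul_mul_assoc, one_mul]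
      _ = A * (A * J * Aᵀ) := by simp only [mul_assoc]
      _ = c • (A * J) := by rw [hc, mul_smul_comm]
  have e2 : (μ * μ) • J = (c * c) • J := by
    have hAT : Aᵀ * Aᵀ = μ • 1 := by rw [← transpose_mul, hA, transpose_smul, transpose_one]
    calc (μ * μ) • J = μ • (J * Aᵀ) * Aᵀ := by
          rw [smul_mul_assoc, mul_assoc, hAT, mul_smul_comm, mul_one, smul_smul]
      _ = (c * c) • J := by rw [e1, smul_mul_assoc, hc, smul_smul]
  have e3 : (μ - c) * (μ + c) = 0 := by
    have : ((μ - c) * (μ + c)) • J = 0 := by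
      rw [show (μ - c) * (μ + c) = μ * μ - c * c by ring, sub_smul, e2, sub_self]
    exact (smul_eq_zero.1 this).resolve_right (ne_zero_of_isUnit hJu)
  rcases mul_eq_zero.1 e3 with h | h
  · obtain rfl : μ = c := sub_eq_zero.1 h
    exact good_selfAdjoint hK h2 hJ hJu hμ hA (smul_right_injective _ hμ e1).symm hs
  · obtain rfl : c = -μ := eq_neg_of_add_eq_zero_right h
    refine good_antiSelfAdjoint hK h2 hJ hJu hμ hA ?_
    rw [neg_smul, ← smul_neg] at e1
    rw [smul_right_injective _ hμ e1, neg_neg]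

theorem exists_conjugators_of_good {K : Type} [Field K] {J : M4 K} (A : GSpJ K J)
    (H : Good J ((A : GL (Fin 4) K) : M4 K)) :
    ∃ g : Fin 4 → PGSpJ K J, (∀ i, g i ∈ PSpJ K J) ∧
      orderOf ((g 0)⁻¹ * (A : PGSpJ K J) * g 0 * ((g 1)⁻¹ * (A : PGSpJ K J) * g 1) *
        ((g 2)⁻¹ * (A : PGSpJ K J) * g 2) * ((g 3)⁻¹ * (A : PGSpJ K J) * g 3)) = 5 := by
  obtain ⟨g, h, hgh, hgJ, ⟨d, h5⟩, hns⟩ := H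
  have hhg : ∀ i, h i * g i = 1 := fun i => mul_eq_one_comm.1 (hgh i)
  let G : Fin 4 → GSpJ K J := fun i => ⟨⟨g i, h i, hgh i, hhg i⟩, 1, one_ne_zero, by
    rw [one_smul]; exact hgJ i⟩
  let y : GSpJ K J := (G 0)⁻¹ * A * G 0 * ((G 1)⁻¹ * A * G 1) * ((G 2)⁻¹ * A * G 2) *
    ((G 3)⁻¹ * A * G 3)
  have hy : ((y : GL (Fin 4) K) : M4 K) = h 0 * (A : GL (Fin 4) K) * g 0 *
      (h 1 * (A : GL (Fin 4) K) * g 1) * (h 2 * (A : GL (Fin 4) K) * g 2) *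
      (h 3 * (A : GL (Fin 4) K) * g 3) := rfl
  refine ⟨fun i => (G i : PGSpJ K J), fun i => ⟨G i, hgJ i, rfl⟩, ?_⟩
  have : Fact (Nat.Prime 5) := ⟨by norm_num⟩
  change orderOf ((y : GSpJ K J) : PGSpJ K J) = 5
  refine orderOf_eq_prime ?_ ?_
  · rw [← QuotientGroup.mk_pow, QuotientGroup.eq_one_iff]
    refine ⟨d, ?_⟩
    rw [← h5, ← hy]
    rfl
  · rw [Ne, QuotientGroup.eq_one_iff]
    rintro ⟨c, hc⟩
    exact hns ⟨c, by rw [← hy, hc]⟩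

theorem statement_14 (q : ℕ) (hq : IsPrimePow q) (hqodd : Odd q)
    [Fintype F] (hF : Fintype.card F = q)
    (hJanti : Jᵀ = -J) (hJinv : IsUnit J)
    (x : PGSpJ F J) (hx : orderOf x = 2) :
    ∃ g : Fin 4 → PGSpJ F J, (∀ i, g i ∈ PSpJ F J) ∧
      5 ∣ Nat.card (Subgroup.closure (Set.range fun i => (g i)⁻¹ * x * g i) :
        Subgroup (PGSpJ F J)) := by
  have hK : Fintype.card F % 2 = 1 := by rw [hF]; exact Nat.odd_iff.1 hqodd
  have h2 : (2 : F) ≠ 0 := by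
    refine Ring.two_ne_zero fun h => ?_
    have := FiniteField.even_card_iff_char_two.1 h
    omega
  obtain ⟨A, rfl⟩ := QuotientGroup.mk_surjective x
  obtain ⟨c, -, hc⟩ := A.2
  obtain ⟨μ, hμ⟩ : ∃ μ : F, ((A : GL (Fin 4) F) : M4 F) * (A : GL (Fin 4) F) = μ • 1 := by
    have h1 : (A : PGSpJ F J) ^ 2 = 1 := by rw [← hx]; exact pow_orderOf_eq_one _
    rw [← QuotientGroup.mk_pow, QuotientGroup.eq_one_iff] at h1
    obtain ⟨μ, hμ⟩ := h1
    refine ⟨μ, ?_⟩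
    rw [← hμ, pow_two]
    rfl
  have hns : ¬ ∃ d : F, ((A : GL (Fin 4) F) : M4 F) = d • (1 : M4 F) := by
    intro h
    have h1 : (A : PGSpJ F J) = 1 := (QuotientGroup.eq_one_iff A).2 h
    rw [h1, orderOf_one] at hx
    omega
  have hμ0 : μ ≠ 0 := by
    rintro rfl
    have hu : IsUnit (((A : GL (Fin 4) F) : M4 F) * (A : GL (Fin 4) F)) :=
      (A : GL (Fin 4) F).isUnit.mul (A : GL (Fin 4) F).isUnit
    rw [hμ, zero_smul] at hu
    exact not_isUnit_zero hu
  obtain ⟨g, hg, h5⟩ := exists_conjugators_of_good A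
    (good_of_similitude hK h2 hJanti hJinv hμ0 hμ hc hns)
  refine ⟨g, hg, ?_⟩
  have hmem : ∀ i, (g i)⁻¹ * (A : PGSpJ F J) * g i ∈
      Subgroup.closure (Set.range fun i => (g i)⁻¹ * (A : PGSpJ F J) * g i) :=
    fun i => Subgroup.subset_closure ⟨i, rfl⟩
  have := Subgroup.orderOf_dvd_natCard _
    (mul_mem (mul_mem (mul_mem (hmem 0) (hmem 1)) (hmem 2)) (hmem 3))
  rwa [h5] at this
end

section
/- Let q ≥ 4 be a prime power and L = PSL_2(q). Let x ∈ Aut(L) be an element of prime order, let r be an odd prime, and let s be a prime divisor of |L| such that s = r if r divides |L|, and s > r otherwise. Then β_s(x,L) ≤ 3 if r = 3, and β_s(x,L) ≤ r−1 if r > 3. -/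
/-!
Write `x^g x⁻¹` for the product of a conjugate of `x` and of `x⁻¹`: it is the inner automorphism
given by `g⁻¹ x(g)`. Hence two conjugates of `x` suffice as soon as some `g⁻¹ x(g)` has order `s`,
and four suffice as soon as two conjugates of some `g⁻¹ x(g)` do (`betaLE_double`). Every
automorphism of `PSL₂(F)` has the form `g ↦ P σ(g) P⁻¹` (`exists_rep`), so `g⁻¹ x(g)` can be computed
with `2 × 2` matrices, and its order is detected by its trace: there is `c ≠ 0` such that every
noncentral element of trace `2 - c²` has order `s` modulo the centre (`exists_good`; `c = 1` for
`s = 3`).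

If `σ = 1`, write `P = α + J` with `J² = δ` (in odd characteristic). As `X² - δ Y²` represents every
element of `F`, the elements `g⁻¹ x(g)` realize every trace if `δ ≠ 0` (`exists_trace`), while if
`δ = 0` a product of two conjugates of `x` has trace `2 - c²`; in characteristic
`2`, unitriangular `g` (in a suitable basis) already realize every trace, as all elements of `F` are squares. So two conjugates suffice (`lemmaC`),
unless `x` is an involution and `c² = 4`. In that case, either some `g⁻¹ x(g)` has trace `1` and
four conjugates suffice (`betaLE_four_refl`), or `s = 3` is the characteristic, and an explicit
computation finds a transvection in the group generated by three conjugates (`betaLE_three_refl`).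

If `σ ≠ 1`, then `σ` has the same prime order as `x`, and Hilbert's theorem 90 shows that `x` is
conjugate to the field automorphism `g ↦ σ(g)` (`hilbert90`). Then `g⁻¹ x(g)` is a transvection for
`g` unitriangular, and four conjugates suffice by `lemmaC` (`betaLE_four_field`); for `s = 3`, a
product of two conjugate transvections has trace `1` for a suitable choice of conjugates
(`betaLE_three_field`).

The bounds follow, as `s ≥ r ≥ 5` and `r - 1 ≥ 4` when `r ≠ 3`, while `s = 3` when `r = 3` because
`3` divides `|PSL₂(F)|` (`three_dvd`).
-/

open Matrix

/-- The conjugate `x^g` of an automorphism `x` of `L` by the inner automorphism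
induced by `g ∈ L` (identifying `L` with its inner automorphisms in `Aut L`). -/
def autConj {L : Type} [Group L] (x : MulAut L) (g : L) : MulAut L :=
  (MulAut.conj g)⁻¹ * x * MulAut.conj g

/-- `betaLE x t m` says that `β_t(x, L) ≤ m`: there exist `g₁, …, g_m ∈ L` such that
`t` divides the order of the subgroup of `Aut L` generated by `x^{g₁}, …, x^{g_m}`. -/
def betaLE {L : Type} [Group L] (x : MulAut L) (t m : ℕ) : Prop :=
  ∃ g : Fin m → L,
    t ∣ Nat.card (Subgroup.closure (Set.range fun i => autConj x (g i)) : Subgroup (MulAut L))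

namespace PSLBeta

/-! ### Conjugates and generation in an abstract group -/

section Abstract

variable {L : Type} [Group L]

lemma betaLE_of_closure {x : MulAut L} {t m : ℕ} (S : Set (MulAut L)) (g : Fin m → L)
    (hS : S ⊆ Set.range fun i => autConj x (g i))
    (h : t ∣ Nat.card (Subgroup.closure S)) : betaLE x t m :=
  ⟨g, h.trans (Subgroup.card_dvd_of_le (Subgroup.closure_mono hS))⟩

lemma betaLE_mono {x : MulAut L} {t m n : ℕ} (hmn : m ≤ n) (hm : 0 < m)
    (h : betaLE x t m) : betaLE x t n := by
  obtain ⟨g, hg⟩ := h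
  refine betaLE_of_closure _ (fun i => if h : i.1 < m then g ⟨i.1, h⟩ else g ⟨0, hm⟩) ?_ hg
  rintro _ ⟨i, rfl⟩
  exact ⟨⟨i.1, by omega⟩, by simp⟩

/-- The value `β_t(x, L)` depends on `x` only up to conjugation in `Aut L`. -/
lemma betaLE_conj {x : MulAut L} {t m : ℕ} (φ : MulAut L)
    (h : betaLE (φ⁻¹ * x * φ) t m) : betaLE x t m := by
  obtain ⟨g, hg⟩ := h
  refine ⟨fun i => φ (g i), ?_⟩
  have key : ∀ i, autConj x (φ (g i)) = MulAut.conj φ (autConj (φ⁻¹ * x * φ) (g i)) := by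
    intro i
    ext l
    simp [autConj, MulAut.conj_apply]
  have : (Set.range fun i => autConj x (φ (g i))) =
      (MulAut.conj φ).toMonoidHom '' (Set.range fun i => autConj (φ⁻¹ * x * φ) (g i)) := by
    rw [← Set.range_comp]
    congr 1
    funext i
    exact key i
  rw [this, ← MonoidHom.map_closure, Subgroup.card_map_of_injective (MulAut.conj φ).injective]
  exact hg

/-- It is enough to find one element of order `s` in the subgroup generated by the
conjugates. -/
lemma betaLE_of_mem {x : MulAut L} {s m : ℕ} (hs : s.Prime) (g : Fin m → L)
    (z : MulAut L) (hz : z ∈ Subgroup.closure (Set.range fun i => autConj x (g i)))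
    (h1 : z ≠ 1) (hzs : z ^ s = 1) : betaLE x s m := by
  refine ⟨g, ?_⟩
  have := Fact.mk hs
  have : orderOf (⟨z, hz⟩ : Subgroup.closure (Set.range fun i => autConj x (g i))) = s := by
    apply orderOf_eq_prime
    · ext1; exact hzs
    · intro h; exact h1 (congrArg Subtype.val h)
  exact this ▸ orderOf_dvd_natCard _

lemma autConj_one (x : MulAut L) : autConj x 1 = x := by simp [autConj]

/-- Two conjugates of `x` generate the inner automorphism induced by `g⁻¹ x(g)`. -/
lemma autConj_mul_inv (x : MulAut L) (g : L) :
    autConj x g * x⁻¹ = MulAut.conj (g⁻¹ * x g) := by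
  ext l
  simp [autConj, mul_assoc]

/-- A conjugate of `x^g x⁻¹` is a product of two conjugates of `x` and their inverses, so passing
from `x` to the inner automorphism induced by `g⁻¹ x(g)` costs a factor of two. -/
lemma betaLE_double {x : MulAut L} {t m : ℕ} (g : L)
    (h : betaLE (MulAut.conj (g⁻¹ * x g)) t m) : betaLE x t (m + m) := by
  obtain ⟨k, hk⟩ := h
  refine ⟨Fin.append (fun i => g * k i) k, hk.trans (Subgroup.card_dvd_of_le ?_)⟩
  rw [Subgroup.closure_le]
  rintro _ ⟨i, rfl⟩
  have e : autConj (MulAut.conj (g⁻¹ * x g)) (k i)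
      = autConj x (g * k i) * (autConj x (k i))⁻¹ := by
    rw [← autConj_mul_inv]
    simp only [autConj, map_mul]
    group
  simp only [SetLike.mem_coe]
  rw [e]
  refine mul_mem (Subgroup.subset_closure ⟨Fin.castAdd m i, ?_⟩)
    (inv_mem (Subgroup.subset_closure ⟨Fin.natAdd m i, ?_⟩))
  · simp only [Fin.append_left]
  · simp only [Fin.append_right]

end Abstract

/-! ### Elements of `SL₂` and `PSL₂` -/

section Basics

variable {F : Type} [Field F]

/-- The group `SL₂(F)`. -/
abbrev S2 (F : Type) [Field F] : Type := Matrix.SpecialLinearGroup (Fin 2) F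

/-- The group `PSL₂(F)`. -/
abbrev P2 (F : Type) [Field F] : Type := Matrix.ProjectiveSpecialLinearGroup (Fin 2) F

/-- The ring of `2 × 2` matrices over `F`. -/
abbrev M2 (F : Type) : Type := Matrix (Fin 2) (Fin 2) F

/-- The projection `SL₂(F) → PSL₂(F)`. -/
def pr : S2 F →* P2 F := QuotientGroup.mk' _

lemma pr_surj (z : P2 F) : ∃ M : S2 F, pr M = z := QuotientGroup.mk'_surjective _ z

/-- The element of `SL₂(F)` with given entries. -/
def sm (a b c d : F) (h : a * d - b * c = 1) : S2 F :=
  ⟨!![a, b; c, d], by rw [Matrix.det_fin_two_of, h]⟩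

@[simp] lemma sm_val (a b c d : F) (h : a * d - b * c = 1) :
    (sm a b c d h).1 = !![a, b; c, d] := rfl

lemma det_eq (M : S2 F) : M.1 0 0 * M.1 1 1 - M.1 0 1 * M.1 1 0 = 1 := by
  rw [← Matrix.det_fin_two]; exact M.2

lemma m2_ext {F : Type} {A B : M2 F} (h00 : A 0 0 = B 0 0) (h01 : A 0 1 = B 0 1) (h10 : A 1 0 = B 1 0)
    (h11 : A 1 1 = B 1 1) : A = B := by
  ext i j; fin_cases i <;> fin_cases j <;> assumption

lemma sm_surj (M : S2 F) : ∃ a b c d h, M = sm a b c d h :=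
  ⟨_, _, _, _, det_eq M, Subtype.ext (Matrix.eta_fin_two M.1)⟩

lemma sm_inj {a b c d a' b' c' d' : F} {h h'} :
    sm a b c d h = sm a' b' c' d' h' ↔ a = a' ∧ b = b' ∧ c = c' ∧ d = d' := by
  constructor
  · intro e
    have e := congrArg Subtype.val e
    have e00 := congrFun (congrFun e 0) 0
    have e01 := congrFun (congrFun e 0) 1
    have e10 := congrFun (congrFun e 1) 0
    have e11 := congrFun (congrFun e 1) 1
    simp at e00 e01 e10 e11
    exact ⟨e00, e01, e10, e11⟩
  · rintro ⟨rfl, rfl, rfl, rfl⟩; rfl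

lemma sm_mul {a b c d a' b' c' d' : F} {h h'} :
    sm a b c d h * sm a' b' c' d' h' =
      sm (a * a' + b * c') (a * b' + b * d') (c * a' + d * c') (c * b' + d * d')
        (by linear_combination (a' * d' - b' * c') * h + h') := by
  apply Subtype.ext
  simp [Matrix.SpecialLinearGroup.coe_mul]

lemma sm_inv {a b c d : F} {h} :
    (sm a b c d h)⁻¹ = sm d (-b) (-c) a (by linear_combination h) := by
  apply Subtype.ext
  simp [Matrix.SpecialLinearGroup.coe_inv, Matrix.adjugate_fin_two]

lemma sm_neg {a b c d : F} {h} :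
    -(sm a b c d h) = sm (-a) (-b) (-c) (-d) (by linear_combination h) := by
  apply Subtype.ext
  simp [Matrix.SpecialLinearGroup.coe_neg]

lemma sm_one : (1 : S2 F) = sm 1 0 0 1 (by ring) := by
  apply Subtype.ext
  simp [Matrix.one_fin_two]

lemma pr_eq_one (M : S2 F) : pr M = 1 ↔ M = 1 ∨ M = -1 := by
  unfold pr
  rw [QuotientGroup.mk'_apply, QuotientGroup.eq_one_iff, Matrix.SpecialLinearGroup.mem_center_iff]
  obtain ⟨a, b, c, d, h, rfl⟩ := sm_surj M
  rw [sm_one, sm_neg, sm_inj, sm_inj]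
  constructor
  · rintro ⟨r, hr, e⟩
    simp only [Fintype.card_fin] at hr
    have e00 := congrFun (congrFun e 0) 0
    have e01 := congrFun (congrFun e 0) 1
    have e10 := congrFun (congrFun e 1) 0
    have e11 := congrFun (congrFun e 1) 1
    simp at e00 e01 e10 e11
    rcases (eq_or_eq_neg_of_sq_eq_sq r 1 (by rw [hr, one_pow])) with rfl | rfl
    · exact Or.inl ⟨e00.symm, e01.symm, e10.symm, e11.symm⟩
    · exact Or.inr ⟨e00.symm, by simp [← e01], by simp [← e10], e11.symm⟩
  · rintro (⟨rfl, rfl, rfl, rfl⟩ | ⟨rfl, rfl, rfl, rfl⟩)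
    · exact ⟨1, by simp, by simp [Matrix.one_fin_two]⟩
    · refine ⟨-1, by simp, ?_⟩
      ext i j; fin_cases i <;> fin_cases j <;> simp

lemma pr_eq (M N : S2 F) : pr M = pr N ↔ M = N ∨ M = -N := by
  have : pr M = pr N ↔ pr (M * N⁻¹) = 1 := by rw [map_mul, map_inv, mul_inv_eq_one]
  rw [this, pr_eq_one, mul_inv_eq_one]
  constructor
  · rintro (h | h)
    · exact Or.inl h
    · right; rw [mul_inv_eq_iff_eq_mul] at h; simpa using h
  · rintro (h | h)
    · exact Or.inl h
    · right; rw [mul_inv_eq_iff_eq_mul]; simpa using h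

lemma pr_neg (M : S2 F) : pr (-M) = pr M := (pr_eq _ _).2 (Or.inr rfl)

/-- A `2 × 2` matrix is nonscalar. -/
def NS (M : M2 F) : Prop := M 0 1 ≠ 0 ∨ M 1 0 ≠ 0 ∨ M 0 0 ≠ M 1 1

/-- The upper unitriangular element with off-diagonal entry `a`. -/
def uu (a : F) : S2 F := sm 1 a 0 1 (by ring)

/-- The lower unitriangular element with off-diagonal entry `a`. -/
def vv (a : F) : S2 F := sm 1 0 a 1 (by ring)

lemma uu_add (a b : F) : uu (a + b) = uu a * uu b := by
  simp [uu, sm_mul, add_comm]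

lemma vv_add (a b : F) : vv (a + b) = vv a * vv b := by
  simp [vv, sm_mul]

lemma pr_uu_inj {a b : F} (h : pr (uu a) = pr (uu b)) : a = b := by
  rw [pr_eq, uu, uu, sm_neg, sm_inj, sm_inj] at h
  rcases h with ⟨_, h, _⟩ | ⟨h0, h, _⟩
  · exact h
  · linear_combination h - b * h0

lemma pr_vv_inj {a b : F} (h : pr (vv a) = pr (vv b)) : a = b := by
  rw [pr_eq, vv, vv, sm_neg, sm_inj, sm_inj] at h
  rcases h with ⟨_, _, h, _⟩ | ⟨h0, _, h, _⟩
  · exact h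
  · linear_combination h - b * h0

/-- The centralizer in `PSL₂(F)` of a nontrivial upper unitriangular element is upper
unitriangular. -/
lemma comm_uu {M : S2 F} {n : F} (hn : n ≠ 0) (h : pr M * pr (uu n) = pr (uu n) * pr M) :
    M.1 1 0 = 0 ∧ M.1 0 0 = M.1 1 1 := by
  obtain ⟨a, b, c, d, hd, rfl⟩ := sm_surj M
  rw [← map_mul, ← map_mul, pr_eq] at h
  simp only [uu, sm_mul, sm_neg, sm_inj] at h
  simp only [sm_val, of_apply, cons_val]
  have h2 : (2 : F) ≠ 0 ∨ (2 : F) = 0 := (em _).symm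
  grind

/-- The centralizer in `PSL₂(F)` of a nontrivial lower unitriangular element is lower
unitriangular. -/
lemma comm_vv {M : S2 F} {n : F} (hn : n ≠ 0) (h : pr M * pr (vv n) = pr (vv n) * pr M) :
    M.1 0 1 = 0 ∧ M.1 0 0 = M.1 1 1 := by
  obtain ⟨a, b, c, d, hd, rfl⟩ := sm_surj M
  rw [← map_mul, ← map_mul, pr_eq] at h
  simp only [vv, sm_mul, sm_neg, sm_inj] at h
  simp only [sm_val, of_apply, cons_val]
  have h2 : (2 : F) ≠ 0 ∨ (2 : F) = 0 := (em _).symm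
  grind

/-- A nonscalar element of `SL₂(F)` induces a nontrivial inner automorphism of `PSL₂(F)`. -/
lemma conj_pr_ne_one {M : S2 F} (hM : NS M.1) : MulAut.conj (pr M) ≠ 1 := by
  intro h
  have key : ∀ z, pr M * z = z * pr M := fun z => by
    have := DFunLike.congr_fun h z
    simpa [MulAut.conj_apply, mul_inv_eq_iff_eq_mul] using this
  have h1 := comm_uu one_ne_zero (key _)
  have h2 := comm_vv one_ne_zero (key _)
  rcases hM with h | h | h
  · exact h h2.1
  · exact h h1.1
  · exact h h1.2

lemma ns_of_pr_ne_one {M : S2 F} (hM : pr M ≠ 1) : NS M.1 := by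
  by_contra h
  apply hM
  obtain ⟨a, b, c, d, hd, rfl⟩ := sm_surj M
  simp only [NS, sm_val, of_apply, cons_val, not_or, not_not] at h
  obtain ⟨rfl, rfl, rfl⟩ := h
  have : a ^ 2 = 1 := by linear_combination hd
  rw [pr_eq_one, sm_one, sm_neg, sm_inj, sm_inj]
  rcases eq_or_eq_neg_of_sq_eq_sq a 1 (by rw [this, one_pow]) with h | h <;> simp [h]

lemma ns_of_trace {M : S2 F} (h2 : M.1.trace ≠ 2) (h3 : M.1.trace ≠ -2) : NS M.1 := by
  by_contra h
  obtain ⟨a, b, c, d, hd, rfl⟩ := sm_surj M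
  simp only [NS, sm_val, of_apply, cons_val, not_or, not_not] at h
  simp only [Matrix.trace_fin_two, sm_val, of_apply, cons_val] at h2 h3
  obtain ⟨rfl, rfl, rfl⟩ := h
  have : (a - 1) * (a + 1) = 0 := by linear_combination hd
  rcases mul_eq_zero.1 this with h | h
  · exact h2 (by linear_combination 2 * h)
  · exact h3 (by linear_combination 2 * h)

end Basics
end PSLBeta

/-! ### Automorphisms induced by semilinear maps -/

namespace PSLBeta

section RepSec
variable {F : Type} [Field F]

/-- The automorphism `x` of `PSL₂(F)` is induced by the semilinear map with matrix `P` and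
field automorphism `σ`, that is, by `g ↦ P σ(g) P⁻¹`. The image is described by the relation
`h P = P σ(g)`, which avoids inverses and lifts to `SL₂(F)`. -/
def Rep (x : MulAut (P2 F)) (P : M2 F) (σ : F ≃+* F) : Prop :=
  P.det ≠ 0 ∧ ∀ g h : S2 F, h.1 * P = P * g.1.map σ → x (pr g) = pr h

lemma det_map (g : M2 F) (σ : F ≃+* F) : (g.map σ).det = σ g.det := by
  rw [Matrix.det_fin_two, Matrix.det_fin_two]; simp

lemma inv_mul' {P : M2 F} (hP : P.det ≠ 0) : P⁻¹ * P = 1 :=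
  Matrix.nonsing_inv_mul _ (isUnit_iff_ne_zero.2 hP)

lemma mul_inv' {P : M2 F} (hP : P.det ≠ 0) : P * P⁻¹ = 1 :=
  Matrix.mul_nonsing_inv _ (isUnit_iff_ne_zero.2 hP)

lemma map_mul' (A B : M2 F) (σ : F ≃+* F) : (A * B).map σ = A.map σ * B.map σ :=
  Matrix.map_mul

lemma exists_conj {P : M2 F} (hP : P.det ≠ 0) (σ : F ≃+* F) (g : S2 F) :
    ∃ h : S2 F, h.1 * P = P * g.1.map σ := by
  refine ⟨⟨P * g.1.map σ * P⁻¹, ?_⟩, ?_⟩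
  · rw [Matrix.det_mul, Matrix.det_mul, det_map, g.2, map_one, mul_one, ← Matrix.det_mul,
      mul_inv' hP, Matrix.det_one]
  · rw [Matrix.mul_assoc, inv_mul' hP, Matrix.mul_one]

lemma exists_conj' {P : M2 F} (hP : P.det ≠ 0) (g : S2 F) :
    ∃ h : S2 F, h.1 * P = P * g.1 := by
  obtain ⟨h, hh⟩ := exists_conj hP (RingEquiv.refl F) g
  exact ⟨h, by simpa using hh⟩

lemma Rep.mul {x y : MulAut (P2 F)} {P Q : M2 F} {σ τ : F ≃+* F} (hx : Rep x P σ)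
    (hy : Rep y Q τ) : Rep (x * y) (P * Q.map σ) (τ.trans σ) := by
  refine ⟨?_, fun g h e => ?_⟩
  · rw [Matrix.det_mul, det_map]
    exact mul_ne_zero hx.1 (by simpa using hy.1)
  · obtain ⟨k, hk⟩ := exists_conj hy.1 τ g
    rw [MulAut.mul_apply, hy.2 g k hk]
    apply hx.2
    have hQ : (Q.map σ).det ≠ 0 := by rw [det_map]; simpa using hy.1
    have h2 := congrArg (fun M : M2 F => M.map σ) hk
    simp only [map_mul'] at h2
    have h3 : (h.1 * P) * Q.map σ = (P * k.1.map σ) * Q.map σ := by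
      have e1 : (g.1.map τ).map σ = g.1.map (τ.trans σ) := rfl
      rw [Matrix.mul_assoc, e, Matrix.mul_assoc P (k.1.map σ), h2, Matrix.mul_assoc P, e1]
    have h4 := congrArg (fun M : M2 F => M * (Q.map σ)⁻¹) h3
    simpa only [Matrix.mul_assoc, mul_inv' hQ, Matrix.mul_one] using h4

lemma Rep.mul_refl {x y : MulAut (P2 F)} {P Q : M2 F} {σ : F ≃+* F} (hx : Rep x P σ)
    (hy : Rep y Q (RingEquiv.refl F)) : Rep (x * y) (P * Q.map σ) σ := hx.mul hy

/-- The automorphism of `SL₂(F)` given by conjugation with an invertible matrix. -/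
noncomputable def slConj (P : M2 F) (hP : P.det ≠ 0) : S2 F ≃* S2 F where
  toFun g := ⟨P * g.1 * P⁻¹, by
    rw [Matrix.det_mul, Matrix.det_mul, g.2, mul_one, ← Matrix.det_mul, mul_inv' hP,
      Matrix.det_one]⟩
  invFun g := ⟨P⁻¹ * g.1 * P, by
    rw [Matrix.det_mul, Matrix.det_mul, g.2, mul_one, ← Matrix.det_mul, inv_mul' hP,
      Matrix.det_one]⟩
  left_inv g := by
    apply Subtype.ext
    simp only [← Matrix.mul_assoc, inv_mul' hP, Matrix.one_mul]
    simp only [Matrix.mul_assoc, inv_mul' hP, Matrix.mul_one]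
  right_inv g := by
    apply Subtype.ext
    simp only [← Matrix.mul_assoc, mul_inv' hP, Matrix.one_mul]
    simp only [Matrix.mul_assoc, mul_inv' hP, Matrix.mul_one]
  map_mul' g h := by
    apply Subtype.ext
    change P * (g.1 * h.1) * P⁻¹ = (P * g.1 * P⁻¹) * (P * h.1 * P⁻¹)
    rw [Matrix.mul_assoc (P * g.1) P⁻¹, ← Matrix.mul_assoc P⁻¹ (P * h.1), ← Matrix.mul_assoc P⁻¹ P,
      inv_mul' hP, Matrix.one_mul]
    simp only [Matrix.mul_assoc]

/-- The inner-diagonal automorphism of `PSL₂(F)` induced by an invertible matrix. -/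
noncomputable def psl (P : M2 F) (hP : P.det ≠ 0) : MulAut (P2 F) :=
  QuotientGroup.congr _ _ (slConj P hP)
    (Subgroup.characteristic_iff_map_eq.1 inferInstance (slConj P hP))

lemma rep_psl (P : M2 F) (hP : P.det ≠ 0) : Rep (psl P hP) P (RingEquiv.refl F) := by
  refine ⟨hP, fun g h e => ?_⟩
  have : slConj P hP g = h := by
    apply Subtype.ext
    change P * g.1 * P⁻¹ = h.1
    have e' : h.1 * P = P * g.1 := by simpa using e
    rw [← e', Matrix.mul_assoc, mul_inv' hP, Matrix.mul_one]
  rw [← this]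
  rfl

lemma rep_psl_inv (P : M2 F) (hP : P.det ≠ 0) :
    Rep (psl P hP)⁻¹ P⁻¹ (RingEquiv.refl F) := by
  have hP' : (P⁻¹).det ≠ 0 := by
    intro h
    have := congrArg Matrix.det (mul_inv' hP)
    rw [Matrix.det_mul, h] at this
    simp at this
  refine ⟨hP', fun g h e => ?_⟩
  rw [MulAut.inv_apply, MulEquiv.symm_apply_eq]
  refine ((rep_psl P hP).2 h g ?_).symm
  have e' : h.1 * P⁻¹ = P⁻¹ * g.1 := by simpa using e
  have e2 : h.1.map (RingEquiv.refl F) = h.1 := by ext; simp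
  rw [e2]
  calc g.1 * P = P * (P⁻¹ * g.1) * P := by
        rw [← Matrix.mul_assoc, mul_inv' hP, Matrix.one_mul]
    _ = P * h.1 := by
        rw [← e', Matrix.mul_assoc, Matrix.mul_assoc, inv_mul' hP, Matrix.mul_one]

lemma rep_conj (M : S2 F) : Rep (MulAut.conj (pr M)) M.1 (RingEquiv.refl F) := by
  refine ⟨M.det_ne_zero, fun g h e => ?_⟩
  have e' : h * M = M * g := Subtype.ext (by simpa using e)
  rw [MulAut.conj_apply, mul_inv_eq_iff_eq_mul, ← map_mul, ← map_mul, e']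

lemma Rep.smul {x : MulAut (P2 F)} {P : M2 F} {σ : F ≃+* F} (hx : Rep x P σ) {k : F}
    (hk : k ≠ 0) : Rep x (k • P) σ := by
  refine ⟨by simp [hk, hx.1], fun g h e => hx.2 g h ?_⟩
  rw [Matrix.mul_smul, Matrix.smul_mul] at e
  exact smul_right_injective _ hk e

lemma Rep.ext {x y : MulAut (P2 F)} {P : M2 F} {σ : F ≃+* F} (hx : Rep x P σ) (hy : Rep y P σ) :
    x = y := by
  ext z
  obtain ⟨g, rfl⟩ := pr_surj z
  obtain ⟨h, hh⟩ := exists_conj hx.1 σ g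
  rw [hx.2 g h hh, hy.2 g h hh]

/-- Change of basis: conjugating `x` by the automorphism induced by `Q` replaces `P` by
`Q⁻¹ P σ(Q)`. -/
lemma Rep.conj {x : MulAut (P2 F)} {P Q P' : M2 F} {σ : F ≃+* F} (hx : Rep x P σ)
    (hQ : Q.det ≠ 0) (h : P * Q.map σ = Q * P') :
    Rep ((psl Q hQ)⁻¹ * x * psl Q hQ) P' σ := by
  have h1 := ((rep_psl_inv Q hQ).mul hx).mul_refl (rep_psl Q hQ)
  have e : Q⁻¹ * P.map (RingEquiv.refl F) * Q.map σ = P' := by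
    have : P.map (RingEquiv.refl F) = P := by ext; simp
    rw [this, Matrix.mul_assoc, h, ← Matrix.mul_assoc, inv_mul' hQ, Matrix.one_mul]
  rw [← e]
  exact h1

/-- It is enough to bound `β` after a change of basis. -/
lemma betaLE_rep {x : MulAut (P2 F)} {P Q P' : M2 F} {σ : F ≃+* F} {s m : ℕ} (hx : Rep x P σ)
    (hQ : Q.det ≠ 0) (h : P * Q.map σ = Q * P')
    (hb : ∀ y : MulAut (P2 F), Rep y P' σ → betaLE y s m) : betaLE x s m :=
  betaLE_conj (psl Q hQ) (hb _ (hx.conj hQ h))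

/-- Every nonscalar matrix is similar to a matrix with first column `(α, 1)`. -/
lemma normal_form {P : M2 F} (hP : NS P) (α : F) : ∃ Q : M2 F, Q.det ≠ 0 ∧
    P * Q = Q * !![α, α * (P.trace - α) - P.det; 1, P.trace - α] := by
  obtain ⟨a, b, c, d, rfl⟩ : ∃ a b c d, P = !![a, b; c, d] := ⟨_, _, _, _, Matrix.eta_fin_two P⟩
  have key : ∀ v w : F, v * (c * v + (d - α) * w) - w * ((a - α) * v + b * w) ≠ 0 →
      ∃ Q : M2 F, Q.det ≠ 0 ∧ !![a, b; c, d] * Q = Q * !![α, α * (!![a, b; c, d].trace - α) -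
        !![a, b; c, d].det; 1, !![a, b; c, d].trace - α] := by
    intro v w h
    refine ⟨!![v, (a - α) * v + b * w; w, c * v + (d - α) * w], ?_, ?_⟩
    · rw [Matrix.det_fin_two_of]
      intro h'; apply h; linear_combination h'
    · simp only [Matrix.trace_fin_two_of, Matrix.det_fin_two_of]
      apply m2_ext <;> simp [Matrix.mul_apply, Fin.sum_univ_two] <;> ring
  simp only [NS, of_apply, cons_val] at hP
  by_cases hc : c = 0
  · by_cases hb : b = 0
    · apply key 1 1
      subst hc hb
      have : a ≠ d := by simpa using hP
      intro h; apply this; linear_combination -h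
    · apply key 0 1
      simpa using hb
  · apply key 1 0
    simpa using hc

end RepSec
end PSLBeta

/-! ### Inner-diagonal automorphisms -/

namespace PSLBeta

section CSec
variable {F : Type} [Field F]

lemma betaLE_of_good {x : MulAut (P2 F)} {s m : ℕ} (hs : s.Prime) (g : Fin m → P2 F) (M : S2 F)
    (hM : NS M.1) (h1 : pr M ^ s = 1)
    (hm : MulAut.conj (pr M) ∈ Subgroup.closure (Set.range fun i => autConj x (g i))) :
    betaLE x s m :=
  betaLE_of_mem hs g _ hm (conj_pr_ne_one hM) (by rw [← map_pow, h1, map_one])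

/-- Two matrices with equal trace and determinant, both nonscalar, have the same powers equal
to the identity, being similar to the same companion matrix. -/
lemma pow_eq_one_of_similar {A B : M2 F} (hA : NS A) (hB : NS B) (ht : A.trace = B.trace)
    (hd : A.det = B.det) {n : ℕ} (h : A ^ n = 1) : B ^ n = 1 := by
  obtain ⟨Q, hQ, e⟩ := normal_form hA 0
  obtain ⟨R, hR, e'⟩ := normal_form hB 0
  rw [ht, hd] at e
  generalize !![0, 0 * (B.trace - 0) - B.det; 1, B.trace - 0] = C at e e'
  have e1 : Q * C ^ n = A ^ n * Q := SemiconjBy.pow_right (show SemiconjBy Q C A from e.symm) n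
  have e2 : R * C ^ n = B ^ n * R := SemiconjBy.pow_right (show SemiconjBy R C B from e'.symm) n
  have hC : C ^ n = 1 := by
    have := congrArg (fun M : M2 F => Q⁻¹ * M) e1
    simpa only [h, Matrix.one_mul, ← Matrix.mul_assoc, inv_mul' hQ] using this
  rw [hC, Matrix.mul_one] at e2
  have := congrArg (fun M : M2 F => M * R⁻¹) e2
  simpa only [Matrix.mul_assoc, mul_inv' hR, Matrix.mul_one] using this.symm

/-- A nonzero `c` such that all noncentral elements of `SL₂(F)` of trace `2 - c²` have order
dividing `s` modulo the centre. -/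
def Good (c : F) (s : ℕ) : Prop :=
  c ≠ 0 ∧ ∀ M : S2 F, NS M.1 → M.1.trace = 2 - c ^ 2 → pr M ^ s = 1

lemma pow_three_of_trace_one (M : S2 F) (ht : M.1.trace = 1) : pr M ^ 3 = 1 := by
  obtain ⟨a, b, c, d, h, rfl⟩ := sm_surj M
  rw [← map_pow, pr_eq_one]
  right
  rw [pow_succ, pow_two, sm_mul, sm_mul, sm_one, sm_neg, sm_inj]
  simp only [sm_val, Matrix.trace_fin_two_of] at ht
  obtain rfl : d = 1 - a := by linear_combination ht
  refine ⟨?_, ?_, ?_, ?_⟩ <;> grind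

lemma good_one_three : Good (1 : F) 3 :=
  ⟨one_ne_zero, fun M _ h => pow_three_of_trace_one M (by rw [h]; norm_num)⟩

lemma ns_rot : NS (sm (1 : F) (-1) 1 0 (by ring)).1 := by simp [NS]

lemma ns_neg {M : S2 F} (h : NS M.1) : NS (-M).1 := by
  obtain ⟨a, b, c, d, h', rfl⟩ := sm_surj M
  rw [sm_neg]
  simpa [NS] using h

/-- An element of order `s` has a lift `M₀` to `SL₂(F)` of odd order `s`, hence `M₀ = K²` with `K` a
power of `M₀`, and `c = tr K` is good because `tr (-M₀) = 2 - c²`. If `c² = 4` in characteristic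
`3`, then `2 - c² = 1`, which forces order `3`. -/
lemma exists_good [Finite F] {s : ℕ} (hs : s.Prime) (hodd : Odd s) (hd : s ∣ Nat.card (P2 F)) :
    ∃ c : F, Good c s ∧ (c ^ 2 = 4 → (3 : F) = 0 → s = 3) := by
  have := Fact.mk hs
  obtain ⟨z, hz⟩ := exists_prime_orderOf_dvd_card' s hd
  obtain ⟨M₀, rfl, h1⟩ : ∃ M : S2 F, pr M = z ∧ M ^ s = 1 := by
    obtain ⟨M, rfl⟩ := pr_surj z
    have h := pow_orderOf_eq_one (pr M)
    rw [hz, ← map_pow, pr_eq_one] at h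
    rcases h with h | h
    · exact ⟨M, rfl, h⟩
    · refine ⟨-M, pr_neg M, ?_⟩
      rw [hodd.neg_pow, h, neg_neg]
  have hne : pr M₀ ≠ 1 := by
    intro h
    rw [h, orderOf_one] at hz
    exact hs.one_lt.ne hz
  -- `K` is the square root of `M₀` in the cyclic group of odd order it generates.
  obtain ⟨K, hK⟩ : ∃ K : S2 F, K ^ 2 = M₀ := by
    obtain ⟨k, hk⟩ := hodd
    refine ⟨M₀ ^ (k + 1), ?_⟩
    rw [← pow_mul, show (k + 1) * 2 = s + 1 by omega, pow_succ, h1, one_mul]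
  have hgood : Good K.1.trace s := by
    have htr : M₀.1.trace = K.1.trace ^ 2 - 2 := by
      rw [← hK]
      obtain ⟨a, b, c, d, h, rfl⟩ := sm_surj K
      rw [pow_two, sm_mul]
      simp only [sm_val, Matrix.trace_fin_two_of]
      linear_combination -2 * h
    refine ⟨?_, fun M hM ht => ?_⟩
    · intro h0
      apply hne
      rw [← hK, pr_eq_one]
      right
      obtain ⟨a, b, c, d, h, rfl⟩ := sm_surj K
      simp only [sm_val, Matrix.trace_fin_two_of] at h0
      obtain rfl : d = -a := by linear_combination h0
      rw [pow_two, sm_mul, sm_one, sm_neg, sm_inj]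
      refine ⟨?_, ?_, ?_, ?_⟩
      · linear_combination -h
      · ring
      · ring
      · linear_combination -h
    · have e : (-M) ^ s = 1 := by
        apply Subtype.ext
        rw [Matrix.SpecialLinearGroup.coe_pow]
        refine pow_eq_one_of_similar (ns_of_pr_ne_one hne) (ns_neg hM) ?_ ?_ ?_
        · rw [htr, Matrix.SpecialLinearGroup.coe_neg, Matrix.trace_neg, ht]; ring
        · rw [M₀.2, (-M).2]
        · rw [← Matrix.SpecialLinearGroup.coe_pow, h1]; rfl
      rw [← pr_neg, ← map_pow, e, map_one]
  refine ⟨_, hgood, fun h4 h3 => ?_⟩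
  have e1 := hgood.2 _ ns_rot (by
    rw [h4]; simp only [sm_val, Matrix.trace_fin_two_of]; linear_combination h3)
  have e2 := pow_three_of_trace_one (sm (1 : F) (-1) 1 0 (by ring)) (by simp)
  have e3 : pr (sm (1 : F) (-1) 1 0 (by ring)) ≠ 1 := fun h =>
    conj_pr_ne_one ns_rot (by rw [h, map_one])
  rw [← orderOf_eq_prime e1 e3]
  have := Fact.mk Nat.prime_three
  exact orderOf_eq_prime e2 e3

lemma three_dvd : 3 ∣ Nat.card (P2 F) := by
  have e2 := pow_three_of_trace_one (sm (1 : F) (-1) 1 0 (by ring)) (by simp)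
  have e3 : pr (sm (1 : F) (-1) 1 0 (by ring)) ≠ 1 := fun h =>
    conj_pr_ne_one ns_rot (by rw [h, map_one])
  have := Fact.mk Nat.prime_three
  rw [← orderOf_eq_prime e2 e3]
  exact orderOf_dvd_natCard _

/-- If `x` acts as `g ↦ h` then `g⁻¹ h` is a product of two conjugates of `x^{±1}`. -/
lemma betaLE_two {x : MulAut (P2 F)} {P : M2 F} {σ : F ≃+* F} {s : ℕ} (hs : s.Prime)
    (hx : Rep x P σ) (g h : S2 F) (e : h.1 * P = P * g.1.map σ) (hM : NS (g⁻¹ * h).1)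
    (h1 : pr (g⁻¹ * h) ^ s = 1) : betaLE x s 2 := by
  refine betaLE_of_good hs ![pr g, 1] _ hM h1 ?_
  rw [map_mul, map_inv, ← hx.2 g h e, ← autConj_mul_inv]
  refine mul_mem (Subgroup.subset_closure ⟨0, rfl⟩) (inv_mem (Subgroup.subset_closure ⟨1, ?_⟩))
  simp [autConj_one]

/-- The trace of `g⁻¹ (P g P⁻¹)`, with denominators cleared. -/
lemma trace_formula {P : M2 F} {g h : S2 F} (e : h.1 * P = P * g.1) :
    (g⁻¹ * h).1.trace * P.det = ((g⁻¹).1 * (P * g.1 * P.adjugate)).trace := by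
  rw [← e, Matrix.mul_assoc h.1, Matrix.mul_adjugate, Matrix.mul_smul, Matrix.mul_one,
    Matrix.mul_smul, Matrix.trace_smul, smul_eq_mul, mul_comm]
  rfl

/-- In odd characteristic the binary form `X² - δ Y²` represents every element of a finite field. -/
lemma exists_norm [Fintype F] (h2 : (2 : F) ≠ 0) {δ : F} (hδ : δ ≠ 0) (t : F) :
    ∃ a b : F, a ^ 2 - δ * b ^ 2 = t := by
  open Polynomial in
  obtain ⟨a, b, h⟩ := FiniteField.exists_root_sum_quadratic (R := F)
    (f := X ^ 2 - C t) (g := C (-δ) * X ^ 2) (by compute_degree!)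
    (by compute_degree!)
    (FiniteField.odd_card_of_char_ne_two (by
      intro h; apply h2
      have := CharP.cast_eq_zero F (ringChar F)
      rw [h] at this; exact_mod_cast this))
  refine ⟨a, b, ?_⟩
  simp at h
  linear_combination h

/-- In characteristic `2` every element is a square, so already `g = u(z)` realizes any trace. -/
lemma lemmaC_char_two [Fintype F] (h2 : (2 : F) = 0) {x : MulAut (P2 F)} {P : M2 F} {c : F}
    {s : ℕ} (hs : s.Prime) (hx : Rep x P (RingEquiv.refl F)) (hP : NS P) (hc : Good c s) :
    betaLE x s 2 := by
  obtain ⟨Q, hQ, e⟩ := normal_form hP 0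
  refine betaLE_rep hx hQ (P' := !![0, 0 * (P.trace - 0) - P.det; 1, P.trace - 0])
    (by simpa using e) fun y hy => ?_
  generalize P.trace = τ at hy
  have hd : P.det ≠ 0 := hx.1
  generalize P.det = d at hy hd
  have hch : ringChar F = 2 := by
    have : ringChar F ∣ 2 := ringChar.dvd (by exact_mod_cast h2)
    rcases (Nat.dvd_prime Nat.prime_two).1 this with h | h
    · exact absurd h (CharP.ringChar_ne_one)
    · exact h
  obtain ⟨z, hz⟩ := FiniteField.isSquare_of_char_two hch (c ^ 2 * d)
  obtain ⟨h, hh⟩ := exists_conj' hy.1 (uu z)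
  have ht : ((uu z)⁻¹ * h).1.trace = 2 - c ^ 2 := by
    have h3 := trace_formula hh
    have h4 : (!![0, 0 * (τ - 0) - d; 1, τ - 0] : M2 F).det = d := by
      rw [Matrix.det_fin_two_of]; ring
    rw [h4] at h3
    apply mul_right_cancel₀ hd
    rw [h3]
    simp only [uu, sm_inv, sm_val, Matrix.adjugate_fin_two_of, Matrix.trace_fin_two,
      Matrix.mul_apply, Fin.sum_univ_two, of_apply, cons_val]
    linear_combination (c ^ 2 * d) * h2 - hz
  refine betaLE_two hs hy (uu z) h (by simpa using hh) ?_ ?_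
  · apply ns_of_trace <;> rw [ht]
    · intro h; exact hc.1 (pow_eq_zero_iff two_ne_zero |>.1 (by linear_combination -h))
    · intro h
      exact hc.1 (pow_eq_zero_iff two_ne_zero |>.1 (by linear_combination -h + 2 * h2))
  · refine hc.2 _ ?_ ht
    apply ns_of_trace <;> rw [ht]
    · intro h; exact hc.1 (pow_eq_zero_iff two_ne_zero |>.1 (by linear_combination -h))
    · intro h
      exact hc.1 (pow_eq_zero_iff two_ne_zero |>.1 (by linear_combination -h + 2 * h2))

/-- The unipotent case: `x` is conjugation by a transvection. -/
lemma lemmaC_unip {x : MulAut (P2 F)} {w : F} (hw : w ≠ 0)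
    {s : ℕ} {c : F} (hs : s.Prime) (hx : x = MulAut.conj (pr (vv w))) (hc : Good c s) :
    betaLE x s 2 := by
  have hM : NS ((uu (c / w))⁻¹ * vv w * uu (c / w) * vv w).1 := by
    left
    simp only [uu, vv, sm_inv, sm_mul]
    simp only [sm_val, of_apply, cons_val]
    have := hc.1
    field_simp
    simp
    exact ⟨fun h => hc.1 (pow_eq_zero_iff two_ne_zero |>.1 (by linear_combination -h)), hw⟩
  refine betaLE_of_good hs ![pr (uu (c / w)), 1] _ hM ?_ ?_
  · refine hc.2 _ hM ?_
    simp only [uu, vv, sm_inv, sm_mul]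
    simp only [sm_val, Matrix.trace_fin_two_of]
    field_simp
    ring
  · have e : MulAut.conj (pr ((uu (c / w))⁻¹ * vv w * uu (c / w) * vv w)) =
        autConj x (pr (uu (c / w))) * autConj x 1 := by
      rw [autConj_one, hx]
      simp only [autConj, map_mul, map_inv]
    rw [e]
    exact mul_mem (Subgroup.subset_closure ⟨0, rfl⟩) (Subgroup.subset_closure ⟨1, rfl⟩)

/-- Trace of the element attached to `g` for `P = α + J` with `J² = δ`. -/
lemma trace_nf {α δ p₁ p₂ q₁ q₂ m : F} (hp : p₁ ^ 2 - δ * p₂ ^ 2 = 1 + m)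
    (hq : q₁ ^ 2 - δ * q₂ ^ 2 = m) {h : S2 F}
    (H : (p₁ + q₁) * (p₁ - q₁) - δ * (p₂ - q₂) * (p₂ + q₂) = 1)
    (hh : h.1 * !![α, δ; 1, α] = !![α, δ; 1, α] *
      (sm (p₁ + q₁) (δ * (p₂ - q₂)) (p₂ + q₂) (p₁ - q₁) H).1) :
    ((sm (p₁ + q₁) (δ * (p₂ - q₂)) (p₂ + q₂) (p₁ - q₁) H)⁻¹ * h).1.trace * (α ^ 2 - δ) =
      2 * (α ^ 2 - δ) - 4 * m * δ := by
  have h3 := trace_formula hh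
  have h4 : (!![α, δ; 1, α] : M2 F).det = α ^ 2 - δ := by
    rw [Matrix.det_fin_two_of]; ring
  rw [h4] at h3
  rw [h3]
  simp only [sm_inv, sm_val, Matrix.adjugate_fin_two_of, Matrix.trace_fin_two,
      Matrix.mul_apply, Fin.sum_univ_two, of_apply, cons_val]
  linear_combination (2 * (α ^ 2 - δ)) * hp - (2 * (α ^ 2 + δ)) * hq

/-- Traces of `g⁻¹ x(g)` take every value. -/
lemma exists_trace [Fintype F] (h2 : (2 : F) ≠ 0) {α δ : F} (hδ : δ ≠ 0) (hd : α ^ 2 - δ ≠ 0)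
    (T : F) : ∃ g h : S2 F, h.1 * !![α, δ; 1, α] = !![α, δ; 1, α] * g.1 ∧
      (g⁻¹ * h).1.trace = T := by
  have h4 : (4 : F) ≠ 0 := by
    rw [show (4 : F) = 2 * 2 by norm_num]; exact mul_ne_zero h2 h2
  set m := (2 - T) * (α ^ 2 - δ) / (4 * δ) with hm
  obtain ⟨p₁, p₂, hp⟩ := exists_norm h2 hδ (1 + m)
  obtain ⟨q₁, q₂, hq⟩ := exists_norm h2 hδ m
  have H : (p₁ + q₁) * (p₁ - q₁) - δ * (p₂ - q₂) * (p₂ + q₂) = 1 := by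
    linear_combination hp - hq
  have hdet : (!![α, δ; 1, α] : M2 F).det ≠ 0 := by
    rw [Matrix.det_fin_two_of]; intro h; apply hd; linear_combination h
  obtain ⟨h, hh⟩ := exists_conj' hdet (sm _ _ _ _ H)
  refine ⟨_, h, hh, ?_⟩
  have := trace_nf hp hq H hh
  apply mul_right_cancel₀ hd
  rw [this, hm]
  field_simp
  ring

/-- If `g⁻¹ x(g)` were `-1`, then `P` would be conjugate to `-P`, so `tr P = 0`. -/
lemma ns_of_trace_neg_two (h2 : (2 : F) ≠ 0) {P : M2 F} (hP : P.trace ≠ 0) {g h : S2 F}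
    (e : h.1 * P = P * g.1) (ht : (g⁻¹ * h).1.trace = -2) : NS (g⁻¹ * h).1 := by
  by_contra hn
  have e1 : g⁻¹ * h = -1 := by
    generalize g⁻¹ * h = M at ht hn
    obtain ⟨a, b, c, d, hd, rfl⟩ := sm_surj M
    rw [sm_one, sm_neg, sm_inj]
    simp [NS] at hn
    simp at ht
    obtain ⟨rfl, rfl, rfl⟩ := hn
    have : a = -1 := mul_left_cancel₀ h2 (by linear_combination ht)
    simp [this]
  have e2 : h = -g := by
    rw [← mul_inv_cancel_left g h, e1, mul_neg, mul_one]
  rw [e2, Matrix.SpecialLinearGroup.coe_neg] at e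
  have e3 : (-g.1 * P * (g⁻¹).1).trace = (P * g.1 * (g⁻¹).1).trace := by rw [e]
  have e4 : g.1 * (g⁻¹).1 = 1 := by
    rw [← Matrix.SpecialLinearGroup.coe_mul, mul_inv_cancel]; rfl
  have e5 : (g⁻¹).1 * g.1 = 1 := by
    rw [← Matrix.SpecialLinearGroup.coe_mul, inv_mul_cancel]; rfl
  rw [Matrix.mul_assoc P, e4, Matrix.mul_one, Matrix.trace_mul_comm, Matrix.neg_mul,
    Matrix.mul_neg, ← Matrix.mul_assoc, e5, Matrix.one_mul, Matrix.trace_neg] at e3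
  exact hP (mul_left_cancel₀ h2 (by linear_combination -e3))

/-- Two conjugates of a nontrivial inner-diagonal automorphism generate a group of order divisible
by `s`: some `g⁻¹ x(g)`, or for unipotent `x` some product `x^g x`, has trace `2 - c²`. When that trace is `-2` and `tr P = 0`
(so that `x` is an involution), the element could be `-1`, and this case is excluded. -/
lemma lemmaC [Fintype F] {x : MulAut (P2 F)} {P : M2 F} {c : F}
    {s : ℕ} (hs : s.Prime) (hx : Rep x P (RingEquiv.refl F)) (hP : NS P) (hc : Good c s)
    (hex : c ^ 2 ≠ 4 ∨ P.trace ≠ 0) : betaLE x s 2 := by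
  by_cases h2 : (2 : F) = 0
  · exact lemmaC_char_two h2 hs hx hP hc
  obtain ⟨Q, hQ, e⟩ := normal_form hP (P.trace / 2)
  have h4 : P.trace - P.trace / 2 = P.trace / 2 := by field_simp; ring
  rw [h4] at e
  refine betaLE_rep hx hQ (P' := _) (by simpa using e) fun y hy => ?_
  obtain ⟨α, hα⟩ : ∃ α, P.trace / 2 = α := ⟨_, rfl⟩
  obtain ⟨δ, hδ⟩ : ∃ δ, α * α - P.det = δ := ⟨_, rfl⟩
  rw [hα, hδ] at hy
  have hd : α ^ 2 - δ ≠ 0 := by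
    have := hx.1
    intro h; apply this; linear_combination h - hδ
  by_cases hδ0 : δ = 0
  · have hα0 : α ≠ 0 := by rintro rfl; simp [hδ0] at hd
    refine lemmaC_unip (inv_ne_zero hα0) hs (hy.ext ?_) hc
    have := (rep_conj (vv α⁻¹)).smul hα0
    convert this using 1
    apply m2_ext <;> simp [vv, hδ0, hα0]
  · obtain ⟨g, h, hh, ht⟩ := exists_trace h2 hδ0 hd (2 - c ^ 2)
    have hM : NS (g⁻¹ * h).1 := by
      by_cases hc4 : c ^ 2 = 4
      · have htr : P.trace ≠ 0 := hex.resolve_left (by simpa using hc4)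
        refine ns_of_trace_neg_two h2 ?_ hh (by rw [ht, hc4]; norm_num)
        simp only [Matrix.trace_fin_two_of]
        rw [← hα]
        ring_nf
        simpa [h2] using htr
      · apply ns_of_trace <;> rw [ht]
        · intro h; exact hc.1 (pow_eq_zero_iff two_ne_zero |>.1 (by linear_combination -h))
        · intro h; exact hc4 (by linear_combination -h)
    exact betaLE_two hs hy g h (by simpa using hh) hM (hc.2 _ hM ht)

/-- Four conjugates always suffice for inner-diagonal automorphisms when `s ≠ 3`: in the excluded
case of `lemmaC`, some `g⁻¹ x(g)` has trace `1 ≠ 0`, and `lemmaC` applies to it. -/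
lemma betaLE_four_refl [Fintype F] {x : MulAut (P2 F)} {P : M2 F} {s : ℕ} (hs : s.Prime)
    (hodd : Odd s) (hd : s ∣ Nat.card (P2 F)) (h3 : s ≠ 3)
    (hx : Rep x P (RingEquiv.refl F)) (hP : NS P) : betaLE x s 4 := by
  obtain ⟨c, hc, hc3⟩ := exists_good hs hodd hd
  by_cases hex : c ^ 2 ≠ 4 ∨ P.trace ≠ 0
  · exact betaLE_mono (by norm_num) (by norm_num) (lemmaC hs hx hP hc hex)
  push Not at hex
  obtain ⟨hc4, htr⟩ := hex
  have h2 : (2 : F) ≠ 0 := by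
    intro h; apply hc.1
    exact pow_eq_zero_iff two_ne_zero |>.1 (by linear_combination hc4 + 2 * h)
  have h3F : (3 : F) ≠ 0 := fun h => h3 (hc3 hc4 h)
  obtain ⟨Q, hQ, e⟩ := normal_form hP 0
  rw [htr] at e
  refine betaLE_rep hx hQ (P' := _) (by simpa using e) fun y hy => ?_
  have hd0 : P.det ≠ 0 := hx.1
  obtain ⟨g, h, hh, ht⟩ := exists_trace h2 (α := 0) (δ := -P.det) (by simpa using hd0)
    (by simpa using hd0) 1
  have hM : NS (g⁻¹ * h).1 := by
    apply ns_of_trace <;> rw [ht]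
    · intro h; exact one_ne_zero (α := F) (by linear_combination -h)
    · intro h; exact h3F (by linear_combination h)
  refine betaLE_double (m := 2) (pr g) ?_
  rw [hy.2 g h (by simpa using hh), ← map_inv, ← map_mul]
  exact lemmaC hs (rep_conj _) hM hc (Or.inr (by rw [ht]; exact one_ne_zero))

end CSec
end PSLBeta

/-! ### Involutions in characteristic three -/

namespace PSLBeta

section DSec
variable {F : Type} [Field F]

lemma pow_three_of_trace_two (h3 : (3 : F) = 0) (M : S2 F) (ht : M.1.trace = 2) :
    pr M ^ 3 = 1 := by
  rw [← pr_neg]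
  apply pow_three_of_trace_one
  rw [Matrix.SpecialLinearGroup.coe_neg, Matrix.trace_neg, ht]
  linear_combination -h3

/-- In characteristic `3`, a nonsquare is a sum of two nonzero squares that are distinct; this is
where `|F| > 3` is needed. -/
lemma exists_sum_sq [Fintype F] (h3 : (3 : F) = 0) (hF : 4 ≤ Fintype.card F) {δ : F}
    (hδ : ¬ IsSquare δ) : ∃ u v : F, u ≠ 0 ∧ v ≠ 0 ∧ u ^ 2 ≠ v ^ 2 ∧ u ^ 2 + v ^ 2 = δ := by
  have h2 : (2 : F) ≠ 0 := fun h => one_ne_zero (α := F) (by linear_combination h3 - h)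
  obtain ⟨x, y, hxy⟩ := exists_norm h2 (neg_ne_zero.2 (one_ne_zero (α := F))) δ
  have hδ0 : δ ≠ 0 := by rintro rfl; exact hδ ⟨0, by simp⟩
  have key : ∀ u v : F, u ^ 2 + v ^ 2 = δ → u ≠ 0 := by
    rintro u v h rfl
    exact hδ ⟨v, by linear_combination -h⟩
  have hsum : x ^ 2 + y ^ 2 = δ := by linear_combination hxy
  by_cases hne : x ^ 2 = y ^ 2
  · classical
    -- Here `δ = -x²`, so `-1` is a nonsquare and is written as a sum of two different squares.
    have hx0 : x ≠ 0 := key x y hsum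
    have hm1 : ∀ z : F, z ^ 2 + 1 ≠ 0 := by
      intro z hz
      refine hδ ⟨x * z, ?_⟩
      linear_combination -hsum - hne - x ^ 2 * hz + x ^ 2 * h3
    obtain ⟨m, hm⟩ : ∃ m : F, m ∉ ({0, 1, -1} : Finset F) := by
      by_contra! hall
      have : Fintype.card F ≤ 3 := by
        rw [← Finset.card_univ]
        exact (Finset.card_le_card fun z _ => hall z).trans Finset.card_le_three
      omega
    simp only [Finset.mem_insert, Finset.mem_singleton, not_or] at hm
    obtain ⟨hm0, hm1', hm2⟩ := hm
    have hk := hm1 m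
    -- A rational parametrization of the conic `u² + v² = -1`.
    set u := (m ^ 2 - 1 - m) / (m ^ 2 + 1) with hu
    set v := (m ^ 2 - 1 + m) / (m ^ 2 + 1) with hv
    have huv : u ^ 2 + v ^ 2 = -1 := by
      rw [hu, hv]
      field_simp
      linear_combination (m ^ 4 + 1) * h3
    have e : (x * u) ^ 2 + (x * v) ^ 2 = δ := by
      linear_combination x ^ 2 * huv + hsum + hne - x ^ 2 * h3
    refine ⟨x * u, x * v, key _ _ e, key _ (x * u) (by rw [add_comm, e]), ?_, e⟩
    intro h
    have h5 : u ^ 2 = v ^ 2 := by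
      apply mul_left_cancel₀ (pow_ne_zero 2 hx0)
      linear_combination h
    rw [hu, hv, div_pow, div_pow, div_left_inj' (pow_ne_zero 2 hk)] at h5
    have h6 : m * ((m - 1) * (m + 1)) = 0 := by
      linear_combination -h5 - m * (m - 1) * (m + 1) * h3
    rcases mul_eq_zero.1 h6 with h | h
    · exact hm0 h
    · rcases mul_eq_zero.1 h with h | h
      · exact hm1' (by linear_combination h)
      · exact hm2 (by linear_combination h)
  · exact ⟨x, y, key x y hsum, key y x (by rw [add_comm, hsum]), hne, hsum⟩

/-- All matrices of trace `0` and determinant `-δ` with nonzero lower left entry are conjugate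
under `SL₂(F)`. -/
lemma exists_conj_trace_zero [Fintype F] (h2 : (2 : F) ≠ 0) {δ a b c : F} (hδ : δ ≠ 0)
    (h : a ^ 2 + b * c = δ) (hc : c ≠ 0) :
    ∃ k : S2 F, !![0, δ; 1, 0] * k.1 = k.1 * !![a, b; c, -a] := by
  obtain ⟨X, Y, hXY⟩ := exists_norm h2 hδ c⁻¹
  refine ⟨sm (c * Y * a + (X - a * Y) * c) (c * Y * b - (X - a * Y) * a) (c * Y) (X - a * Y) ?_, ?_⟩
  · have : c * (X ^ 2 - δ * Y ^ 2) = 1 := by rw [hXY, mul_inv_cancel₀ hc]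
    linear_combination this - c * Y ^ 2 * h
  · apply m2_ext <;> simp [Matrix.mul_apply, Fin.sum_univ_two]
    · linear_combination -(c * Y) * h
    · linear_combination -(X - a * Y) * h
    · ring

lemma rep_autConj {x : MulAut (P2 F)} {A B : M2 F} (hx : Rep x A (RingEquiv.refl F)) (k : S2 F)
    (h : A * k.1 = k.1 * B) : Rep (autConj x (pr k)) B (RingEquiv.refl F) := by
  have h1 := ((rep_conj k⁻¹).mul hx).mul_refl (rep_conj k)
  have e5 : (k⁻¹).1 * k.1 = 1 := by
    rw [← Matrix.SpecialLinearGroup.coe_mul, inv_mul_cancel]; rfl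
  have e : (k⁻¹).1 * A.map (RingEquiv.refl F) * k.1.map (RingEquiv.refl F) = B := by
    have hm : ∀ M : M2 F, M.map (RingEquiv.refl F) = M := fun M => by ext; simp
    rw [hm, hm, Matrix.mul_assoc, h, ← Matrix.mul_assoc, e5, Matrix.one_mul]
  have h2 : Rep (autConj x (pr k)) ((k⁻¹).1 * A.map (RingEquiv.refl F) *
      k.1.map (RingEquiv.refl F)) (RingEquiv.refl F) := by
    rw [map_inv, map_inv] at h1
    exact h1
  rwa [e] at h2

lemma mul_diag_val {p q r t μ : F} (H : p * t - q * r = 1) (h : μ⁻¹ * μ - 0 * 0 = 1) :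
    (sm p q r t H * (sm μ⁻¹ 0 0 μ h)⁻¹ * (sm μ⁻¹ 0 0 μ h)⁻¹).1 =
      !![p * μ ^ 2, q * μ⁻¹ ^ 2; r * μ ^ 2, t * μ⁻¹ ^ 2] := by
  rw [sm_inv, sm_mul, sm_mul, sm_val]
  apply m2_ext <;> simp <;> ring

/-- In characteristic `3`, for an involution `x` given by the antidiagonal `P` with `P² = δ` a
nonsquare. The product of `x` with a suitable conjugate is conjugation by the diagonal matrix
`D = diag(μ⁻¹, μ)`, and the matrix of a third conjugate has upper left entry `a`; it carries `D` to
`D'`, and `D' D⁻²` is a transvection, of order `3`, for the chosen `μ` and `a`. -/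
lemma betaLE_three_nonsq [Fintype F] (h3 : (3 : F) = 0) (hF : 4 ≤ Fintype.card F) {δ : F}
    (hδ : ¬ IsSquare δ) {x : MulAut (P2 F)} (hx : Rep x !![0, δ; 1, 0] (RingEquiv.refl F)) :
    betaLE x 3 3 := by
  have h2 : (2 : F) ≠ 0 := fun h => one_ne_zero (α := F) (by linear_combination h3 - h)
  have hδ0 : δ ≠ 0 := by rintro rfl; exact hδ ⟨0, by simp⟩
  obtain ⟨u, v, hu, hv, huv, huvd⟩ := exists_sum_sq h3 hF hδ
  have hp : u + v ≠ 0 := fun h => huv (by linear_combination (u - v) * h)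
  have hm : u - v ≠ 0 := fun h => huv (by linear_combination (u + v) * h)
  set μ := u / v with hμ
  have hμ0 : μ ≠ 0 := div_ne_zero hu hv
  set a := (u - v) ^ 2 / (u + v) with ha
  have ha0 : a ≠ 0 := div_ne_zero (pow_ne_zero 2 hm) hp
  obtain ⟨k, hk⟩ := exists_conj_trace_zero h2 hδ0 (a := 0) (b := δ * μ) (c := μ⁻¹)
    (by field_simp; ring) (inv_ne_zero hμ0)
  obtain ⟨l, hl⟩ := exists_conj_trace_zero h2 hδ0 (a := a) (b := δ - a ^ 2) (c := 1)
    (by ring) one_ne_zero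
  have hB := rep_autConj hx k hk
  have hC := rep_autConj hx l hl
  obtain ⟨D, hD⟩ : ∃ D : S2 F, D = sm μ⁻¹ 0 0 μ (by field_simp; ring) := ⟨_, rfl⟩
  have hAB : x * autConj x (pr k) = MulAut.conj (pr D) := by
    refine (hx.mul_refl hB).ext ?_
    convert (rep_conj D).smul hδ0 using 1
    apply m2_ext <;> simp [hD, Matrix.mul_apply, Fin.sum_univ_two]
  have H : (a ^ 2 * μ⁻¹ + (δ - a ^ 2) * μ) / δ * (((δ - a ^ 2) * μ⁻¹ + a ^ 2 * μ) / δ) -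
      (a * (δ - a ^ 2) * (μ⁻¹ - μ)) / δ * (a * (μ⁻¹ - μ) / δ) = 1 := by
    field_simp
    ring
  obtain ⟨D', hD'⟩ : ∃ D' : S2 F, D' = sm _ _ _ _ H := ⟨_, rfl⟩
  have hCD : autConj x (pr l) (pr D) = pr D' := by
    refine hC.2 _ _ ?_
    apply m2_ext <;> simp [hD, hD', Matrix.mul_apply, Fin.sum_univ_two] <;> field_simp <;> ring
  have hW : (D' * D⁻¹ * D⁻¹).1 = !![(a ^ 2 * μ⁻¹ + (δ - a ^ 2) * μ) / δ * μ ^ 2,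
      (a * (δ - a ^ 2) * (μ⁻¹ - μ)) / δ * μ⁻¹ ^ 2;
      (a * (μ⁻¹ - μ) / δ) * μ ^ 2, ((δ - a ^ 2) * μ⁻¹ + a ^ 2 * μ) / δ * μ⁻¹ ^ 2] := by
    rw [hD', hD]
    exact mul_diag_val _ _
  refine betaLE_of_good Nat.prime_three ![1, pr k, pr l] (D' * D⁻¹ * D⁻¹) ?_ ?_ ?_
  · right; left
    rw [hW]
    simp only [of_apply, cons_val]
    refine mul_ne_zero (div_ne_zero (mul_ne_zero ha0 ?_) hδ0) (pow_ne_zero 2 hμ0)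
    rw [hμ]
    intro h
    field_simp at h
    apply huv
    linear_combination -h
  · apply pow_three_of_trace_two h3
    rw [hW]
    simp only [Matrix.trace_fin_two_of]
    rw [hμ, ha, ← huvd]
    rw [← huvd] at hδ0
    field_simp
    grind
  · set K := Subgroup.closure (Set.range fun i => autConj x (![1, pr k, pr l] i)) with hK
    have m0 : autConj x 1 ∈ K := Subgroup.subset_closure ⟨0, rfl⟩
    have m1 : autConj x (pr k) ∈ K := Subgroup.subset_closure ⟨1, rfl⟩
    have m2 : autConj x (pr l) ∈ K := Subgroup.subset_closure ⟨2, rfl⟩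
    rw [autConj_one] at m0
    have mD : MulAut.conj (pr D) ∈ K := hAB ▸ mul_mem m0 m1
    have mD' : MulAut.conj (pr D') ∈ K := by
      have : MulAut.conj (pr D') =
          autConj x (pr l) * MulAut.conj (pr D) * (autConj x (pr l))⁻¹ := by
        rw [← hCD]
        ext z
        simp [MulAut.conj_apply]
      rw [this]
      exact mul_mem (mul_mem m2 mD) (inv_mem m2)
    simp only [map_mul, map_inv]
    exact mul_mem (mul_mem mD' (inv_mem mD)) (inv_mem mD)

/-- Three conjugates suffice for inner-diagonal automorphisms and `s = 3`. Elements of trace `1` have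
order `3`, so the case left by `lemmaC` is that of involutions in characteristic `3`. -/
lemma betaLE_three_refl [Fintype F] (hF : 4 ≤ Fintype.card F) {x : MulAut (P2 F)} {P : M2 F}
    (hx : Rep x P (RingEquiv.refl F)) (hP : NS P) : betaLE x 3 3 := by
  by_cases hex : (1 : F) ^ 2 ≠ 4 ∨ P.trace ≠ 0
  · exact betaLE_mono (by norm_num) (by norm_num)
      (lemmaC Nat.prime_three hx hP good_one_three hex)
  push Not at hex
  obtain ⟨h4, htr⟩ := hex
  have h3 : (3 : F) = 0 := by linear_combination -h4
  have h2 : (2 : F) ≠ 0 := fun h => one_ne_zero (α := F) (by linear_combination h3 - h)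
  obtain ⟨Q, hQ, e⟩ := normal_form hP 0
  rw [htr] at e
  refine betaLE_rep hx hQ (P' := _) (by simpa using e) fun y hy => ?_
  have hd0 : -P.det ≠ 0 := neg_ne_zero.2 hx.1
  generalize -P.det = δ at hy hd0
  by_cases hsq : IsSquare δ
  -- For a square `δ`, an explicit `g` makes `g⁻¹ x(g)` a transvection.
  · obtain ⟨ε, rfl⟩ := hsq
    have hε : ε ≠ 0 := by rintro rfl; simp at hd0
    refine betaLE_mono (m := 2) (by norm_num) (by norm_num) (betaLE_two Nat.prime_three hy
      (sm (1 + ε) (-(ε * ε)) 1 (1 - ε) (by ring)) (sm (1 - ε) (ε * ε) (-1) (1 + ε) (by ring))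
      ?_ ?_ ?_)
    · apply m2_ext <;> simp [Matrix.mul_apply, Fin.sum_univ_two] <;> ring
    · left
      rw [sm_inv, sm_mul]
      simp only [sm_val, of_apply, cons_val]
      intro h
      have : 2 * (ε * ε) = 0 := by linear_combination h
      simp [h2, hε] at this
    · apply pow_three_of_trace_two h3
      rw [sm_inv, sm_mul]
      simp only [sm_val, Matrix.trace_fin_two_of]
      ring
  · exact betaLE_three_nonsq h3 hF hsq hy

end DSec
end PSLBeta

/-! ### Automorphisms are semilinear -/

namespace PSLBeta

section ESec
variable {F : Type} [Field F]

/-- An element of order `p` of `PSL₂(F)`, in characteristic `p`, lifts to a noncentral element of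
trace `2`, that is, to a transvection. -/
lemma exists_trace_two {p : ℕ} [Fact p.Prime] [CharP F p] {N : S2 F} (hN : pr N ≠ 1)
    (h : pr N ^ p = 1) : ∃ N' : S2 F, pr N' = pr N ∧ NS N'.1 ∧ N'.1.trace = 2 := by
  obtain ⟨N', e, h1⟩ : ∃ N' : S2 F, pr N' = pr N ∧ N' ^ p = 1 := by
    rw [← map_pow, pr_eq_one] at h
    rcases h with h | h
    · exact ⟨N, rfl, h⟩
    · rcases (Fact.out : p.Prime).eq_two_or_odd' with rfl | hodd
      · refine ⟨N, rfl, h.trans ?_⟩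
        have h2 : (1 : F) + 1 = 0 := by
          have := CharP.cast_eq_zero F 2
          push_cast at this
          linear_combination this
        rw [sm_one, sm_neg, sm_inj]
        exact ⟨by linear_combination -h2, by simp, by simp, by linear_combination -h2⟩
      · exact ⟨-N, pr_neg N, by rw [hodd.neg_pow, h, neg_neg]⟩
  refine ⟨N', e, ns_of_pr_ne_one (by rwa [e]), ?_⟩
  have h2 : (N'.1 - 1) ^ p = 0 := by
    rw [sub_pow_char_of_commute p (Commute.one_right _),
      ← Matrix.SpecialLinearGroup.coe_pow, h1, one_pow]
    simp
  have h3 : (N'.1 - 1).det = 0 := by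
    have := congrArg Matrix.det h2
    rw [Matrix.det_pow, Matrix.det_zero] at this
    exact pow_eq_zero_iff (Fact.out : p.Prime).ne_zero |>.1 this
  obtain ⟨a, b, c, d, hd, rfl⟩ := sm_surj N'
  simp only [sm_val, Matrix.det_fin_two, Matrix.sub_apply, of_apply, cons_val, Matrix.one_apply,
    Matrix.trace_fin_two] at h3 ⊢
  simp at h3
  linear_combination hd - h3

lemma uu_pow (a : F) (n : ℕ) : uu a ^ n = uu (n * a) := by
  induction n with
  | zero => rw [pow_zero, uu, sm_one, sm_inj]; simp
  | succ k ih => rw [pow_succ, ih, ← uu_add]; congr 1; push_cast; ring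

lemma vv_pow (a : F) (n : ℕ) : vv a ^ n = vv (n * a) := by
  induction n with
  | zero => rw [pow_zero, vv, sm_one, sm_inj]; simp
  | succ k ih => rw [pow_succ, ih, ← vv_add]; congr 1; push_cast; ring

lemma uu_zero : uu (0 : F) = 1 := by rw [uu, sm_one]
lemma vv_zero : vv (0 : F) = 1 := by rw [vv, sm_one]

/-- `SL₂(F)` is generated by unitriangular elements, so homomorphisms agreeing on these agree. -/
lemma hom_ext {G : Type} [Group G] {φ ψ : S2 F →* G} (hu : ∀ a, φ (uu a) = ψ (uu a))
    (hv : ∀ a, φ (vv a) = ψ (vv a)) : φ = ψ := by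
  have key : ∀ a b c d h, b ≠ 0 → φ (sm a b c d h) = ψ (sm a b c d h) := by
    intro a b c d h hb
    have : sm a b c d h = vv ((d - 1) / b) * uu b * vv ((a - 1) / b) := by
      rw [vv, uu, vv, sm_mul, sm_mul, sm_inj]
      refine ⟨?_, ?_, ?_, ?_⟩ <;> field_simp <;>
        first | ring1 | linear_combination h | linear_combination -h
    rw [this]
    simp only [map_mul, hu, hv]
  ext g
  obtain ⟨a, b, c, d, h, rfl⟩ := sm_surj g
  by_cases hb : b = 0
  · subst hb
    have ha : a ≠ 0 := by rintro rfl; simp at h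
    have e : sm a 0 c d h = sm a a c (c + d) (by linear_combination h) * uu (-1) := by
      rw [uu, sm_mul, sm_inj]
      refine ⟨?_, ?_, ?_, ?_⟩ <;> ring
    rw [e, map_mul, map_mul, hu, key _ _ _ _ _ ha]
  · exact key _ _ _ _ _ hb

/-- An automorphism fixing `v(1)` and sending `u(1)` to some `u(n)` is a field automorphism. It
preserves the two unitriangular groups, which are the centralizers of these elements, and the
relations between `u` and `v` show that the resulting maps `F → F` coincide and are multiplicative. -/
lemma exists_field_aut [Finite F] {x : MulAut (P2 F)} (h1 : x (pr (vv 1)) = pr (vv 1)) {n : F}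
    (hn : n ≠ 0) (h2 : x (pr (uu 1)) = pr (uu n)) : ∃ σ : F ≃+* F, Rep x 1 σ := by
  have hv : ∀ a : F, ∃ b, x (pr (vv a)) = pr (vv b) := by
    intro a
    obtain ⟨M, hM⟩ := pr_surj (x (pr (vv a)))
    have hc : pr M * pr (vv 1) = pr (vv 1) * pr M := by
      rw [hM, ← h1, ← map_mul, ← map_mul, ← map_mul, ← map_mul, ← vv_add, ← vv_add, add_comm]
    obtain ⟨e1, e2⟩ := comm_vv one_ne_zero hc
    rw [← hM]
    obtain ⟨a, b, c, d, hd, rfl⟩ := sm_surj M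
    simp only [sm_val, of_apply, cons_val] at e1 e2
    subst e1 e2
    refine ⟨a * c, (pr_eq _ _).2 ?_⟩
    have : (a - 1) * (a + 1) = 0 := by linear_combination hd
    rcases mul_eq_zero.1 this with h | h
    · left
      rw [vv, sm_inj]
      refine ⟨by linear_combination h, rfl, by linear_combination -c * h, by linear_combination h⟩
    · right
      rw [vv, sm_neg, sm_inj]
      refine ⟨by linear_combination h, by ring, by linear_combination c * h,
        by linear_combination h⟩
  have hu : ∀ a : F, ∃ b, x (pr (uu a)) = pr (uu b) := by
    intro a
    obtain ⟨M, hM⟩ := pr_surj (x (pr (uu a)))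
    have hc : pr M * pr (uu n) = pr (uu n) * pr M := by
      rw [hM, ← h2, ← map_mul, ← map_mul, ← map_mul, ← map_mul, ← uu_add, ← uu_add, add_comm]
    obtain ⟨e1, e2⟩ := comm_uu hn hc
    rw [← hM]
    obtain ⟨a, b, c, d, hd, rfl⟩ := sm_surj M
    simp only [sm_val, of_apply, cons_val] at e1 e2
    subst e1 e2
    refine ⟨a * b, (pr_eq _ _).2 ?_⟩
    have : (a - 1) * (a + 1) = 0 := by linear_combination hd
    rcases mul_eq_zero.1 this with h | h
    · left
      rw [uu, sm_inj]
      refine ⟨by linear_combination h, by linear_combination -b * h, rfl, by linear_combination h⟩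
    · right
      rw [uu, sm_neg, sm_inj]
      refine ⟨by linear_combination h, by linear_combination b * h, by ring,
        by linear_combination h⟩
  choose f hf using hv
  choose k hk using hu
  have f_add : ∀ a b, f (a + b) = f a + f b := by
    intro a b
    apply pr_vv_inj
    rw [← hf, vv_add, vv_add, map_mul, map_mul, map_mul, hf, hf]
  have f_one : f 1 = 1 := pr_vv_inj (by rw [← hf, h1])
  have f_inj : Function.Injective f := by
    intro a b h
    apply pr_vv_inj
    apply x.injective
    rw [hf, hf, h]
  have k_inj : Function.Injective k := by
    intro a b h
    apply pr_uu_inj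
    apply x.injective
    rw [hk, hk, h]
  have f_zero : f 0 = 0 := by have := f_add 0 0; simpa using this
  have k_zero : k 0 = 0 := pr_uu_inj (by rw [← hk, uu_zero, map_one, map_one])
  have f_neg : ∀ a, f (-a) = -f a := by
    intro a
    have := f_add a (-a)
    rw [add_neg_cancel, f_zero] at this
    linear_combination -this
  have f_ne : ∀ a, a ≠ 0 → f a ≠ 0 := fun a ha h => ha (f_inj (h.trans f_zero.symm))
  have k_ne : ∀ a, a ≠ 0 → k a ≠ 0 := fun a ha h => ha (k_inj (h.trans k_zero.symm))
  -- The braid relation between `v(a)` and `u(-1/a)` determines `k (-1/a)`.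
  have braid : ∀ a, a ≠ 0 → f a * k (-a⁻¹) = -1 := by
    intro a ha
    have e : vv a * uu (-a⁻¹) * vv a = uu (-a⁻¹) * vv a * uu (-a⁻¹) := by
      simp only [uu, vv, sm_mul, sm_inj]
      refine ⟨?_, ?_, ?_, ?_⟩ <;> field_simp <;> ring
    have e2 := congrArg (fun z => x (pr z)) e
    simp only [map_mul, hf, hk] at e2
    simp only [← map_mul] at e2
    rw [pr_eq] at e2
    have hs := f_ne a ha
    have ht := k_ne (-a⁻¹) (neg_ne_zero.2 (inv_ne_zero ha))
    generalize f a = s at *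
    generalize k (-a⁻¹) = t at *
    simp only [uu, vv, sm_mul, sm_neg, sm_inj] at e2
    rcases e2 with ⟨-, e2, -, -⟩ | ⟨e1, e2, -, -⟩
    · apply mul_left_cancel₀ ht
      linear_combination -e2
    · have e3 : t * (3 + s * t) = 0 := by linear_combination e2
      have e4 : s * t = -3 := by
        have := (mul_eq_zero.1 e3).resolve_left ht
        linear_combination this
      have e5 : (4 : F) = 0 := by linear_combination -e1 + 2 * e4
      have e6 : (2 : F) = 0 := by
        have : (2 : F) * 2 = 0 := by linear_combination e5
        simpa using this
      linear_combination e4 - e6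
  -- Conjugation by the Weyl element `v(a) u(-1/a) v(a)` sends `u(b)` to `v(-a² b)`.
  have hua : ∀ a b, a ≠ 0 → f (a ^ 2 * b) = f a ^ 2 * k b := by
    intro a b ha
    have e : vv a * uu (-a⁻¹) * vv a * uu b = vv (-(a ^ 2 * b)) * (vv a * uu (-a⁻¹) * vv a) := by
      simp only [uu, vv, sm_mul, sm_inj]
      refine ⟨?_, ?_, ?_, ?_⟩ <;> field_simp <;> ring
    have e2 := congrArg (fun z => x (pr z)) e
    simp only [map_mul, hf, hk] at e2
    rw [f_neg] at e2
    have hs := f_ne a ha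
    have e3 := braid a ha
    have e4 : vv (f a) * uu (k (-a⁻¹)) * vv (f a) * uu (k b) =
        vv (-(f a ^ 2 * k b)) * (vv (f a) * uu (k (-a⁻¹)) * vv (f a)) := by
      have : k (-a⁻¹) = -(f a)⁻¹ := by
        apply mul_left_cancel₀ hs
        rw [e3]; field_simp
      rw [this]
      simp only [uu, vv, sm_mul, sm_inj]
      refine ⟨?_, ?_, ?_, ?_⟩ <;> field_simp <;> ring
    have e5 := congrArg pr e4
    simp only [map_mul] at e5
    have e6 := mul_right_cancel (e2.symm.trans e5)
    have := pr_vv_inj e6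
    linear_combination -this
  have hfk : ∀ b, k b = f b := by
    intro b
    have := hua 1 b one_ne_zero
    rw [f_one] at this
    simpa using this.symm
  have sq : ∀ a b, f (a ^ 2 * b) = f a ^ 2 * f b := by
    intro a b
    by_cases ha : a = 0
    · simp [ha, f_zero]
    · rw [hua a b ha, hfk]
  have f_mul : ∀ a b, f (a * b) = f a * f b := by
    intro a b
    by_cases h2 : (2 : F) = 0
    · have : Fintype F := Fintype.ofFinite F
      have hch : ringChar F = 2 := by
        have : ringChar F ∣ 2 := ringChar.dvd (by exact_mod_cast h2)
        rcases (Nat.dvd_prime Nat.prime_two).1 this with h | h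
        · exact absurd h (CharP.ringChar_ne_one)
        · exact h
      obtain ⟨z, rfl⟩ := FiniteField.isSquare_of_char_two hch a
      have e := sq z 1
      rw [← pow_two, sq z b]
      rw [mul_one, f_one, mul_one] at e
      rw [e]
    · have e := sq (a + 1) b
      rw [show (a + 1) ^ 2 * b = a ^ 2 * b + (a * b + a * b) + b by ring, f_add, f_add, f_add, sq,
        f_add, f_one] at e
      apply mul_left_cancel₀ h2
      linear_combination e
  let fh : F →+* F :=
    { toFun := f, map_one' := f_one, map_zero' := f_zero, map_add' := f_add, map_mul' := f_mul }
  let σ : F ≃+* F := RingEquiv.ofBijective fh ⟨f_inj, Finite.surjective_of_injective f_inj⟩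
  have hσ : ∀ a, σ a = f a := fun a => rfl
  refine ⟨σ, by simp, fun g h e => ?_⟩
  have hext : x.toMonoidHom.comp pr =
      (pr : S2 F →* P2 F).comp (Matrix.SpecialLinearGroup.map (σ : F →+* F)) := by
    apply hom_ext
    · intro a
      change x (pr (uu a)) = pr _
      rw [hk, hfk]
      congr 1
      apply Subtype.ext
      apply m2_ext <;> simp [uu, hσ, f_one, f_zero]
    · intro a
      change x (pr (vv a)) = pr _
      rw [hf]
      congr 1
      apply Subtype.ext
      apply m2_ext <;> simp [vv, hσ, f_one, f_zero]
  have e1 := DFunLike.congr_fun hext g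
  change x (pr g) = pr _ at e1
  rw [e1]
  congr 1
  apply Subtype.ext
  rw [Matrix.mul_one, Matrix.one_mul] at e
  exact e.symm

/-- Every automorphism of `PSL₂(F)`, for a finite field `F`, is induced by a semilinear map: the
images of `v(1)` and `u(1)` are noncommuting transvections, and a change of basis turns them into
`v(1)` and some `u(n)`. -/
theorem exists_rep [Finite F] (x : MulAut (P2 F)) : ∃ P σ, Rep x P σ := by
  obtain ⟨p, hp⟩ := CharP.exists F
  have : Fact p.Prime := ⟨CharP.char_is_prime F p⟩
  have hvne : pr (vv (1 : F)) ≠ 1 := by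
    intro h
    rw [← map_one pr, ← vv_zero] at h
    exact one_ne_zero (pr_vv_inj h)
  have hune : pr (uu (1 : F)) ≠ 1 := by
    intro h
    rw [← map_one pr, ← uu_zero] at h
    exact one_ne_zero (pr_uu_inj h)
  have hvp : pr (vv (1 : F)) ^ p = 1 := by
    rw [← map_pow, vv_pow, CharP.cast_eq_zero, zero_mul, vv_zero, map_one]
  have hup : pr (uu (1 : F)) ^ p = 1 := by
    rw [← map_pow, uu_pow, CharP.cast_eq_zero, zero_mul, uu_zero, map_one]
  obtain ⟨N₀, hN₀⟩ := pr_surj (x (pr (vv 1)))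
  obtain ⟨N, hN, hns, htr⟩ := exists_trace_two (p := p) (N := N₀)
    (by rw [hN₀]; simpa using hvne) (by rw [hN₀, ← map_pow, hvp, map_one])
  obtain ⟨Q, hQ, e⟩ := normal_form hns 1
  have hy1 : ((psl Q hQ)⁻¹ * x) (pr (vv 1)) = pr (vv 1) := by
    rw [MulAut.mul_apply, MulAut.inv_apply, MulEquiv.symm_apply_eq, ← hN₀, ← hN]
    refine ((rep_psl Q hQ).2 _ _ ?_).symm
    rw [e, htr, N.2]
    congr 1
    apply m2_ext <;> simp [vv] <;> norm_num
  generalize hy : (psl Q hQ)⁻¹ * x = y at hy1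
  have hxy : x = psl Q hQ * y := by rw [← hy]; group
  obtain ⟨M₀, hM₀⟩ := pr_surj (y (pr (uu 1)))
  obtain ⟨M, hM, hns', htr'⟩ := exists_trace_two (p := p) (N := M₀)
    (by rw [hM₀]; simpa using hune) (by rw [hM₀, ← map_pow, hup, map_one])
  have hcom : pr M * pr (vv 1) ≠ pr (vv 1) * pr M := by
    intro h
    rw [hM, hM₀, ← hy1, ← map_mul y, ← map_mul y] at h
    have := (comm_vv one_ne_zero (y.injective h)).1
    simp [uu] at this
  obtain ⟨n, hn, z, hz⟩ : ∃ n : F, n ≠ 0 ∧ ∃ z : F, M * vv z = vv z * uu n := by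
    obtain ⟨a, b, c, d, hd, rfl⟩ := sm_surj M
    simp only [sm_val, Matrix.trace_fin_two_of] at htr'
    obtain rfl : d = 2 - a := by linear_combination htr'
    have hb : b ≠ 0 := by
      rintro rfl
      have h1 : (a - 1) ^ 2 = 0 := by linear_combination -hd
      have h2 : a = 1 := by
        have := pow_eq_zero_iff two_ne_zero |>.1 h1
        linear_combination this
      subst h2
      apply hcom
      rw [← map_mul, ← map_mul]
      congr 1
      rw [vv, sm_mul, sm_mul, sm_inj]
      refine ⟨?_, ?_, ?_, ?_⟩ <;> ring
    refine ⟨b, hb, (1 - a) / b, ?_⟩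
    simp only [vv, uu, sm_mul, sm_inj]
    refine ⟨?_, ?_, ?_, ?_⟩ <;> field_simp <;>
      first | ring1 | linear_combination hd | linear_combination -hd
  have hw1 : ((MulAut.conj (pr (vv z)))⁻¹ * y) (pr (vv 1)) = pr (vv 1) := by
    rw [MulAut.mul_apply, MulAut.inv_apply, MulEquiv.symm_apply_eq, hy1, MulAut.conj_apply,
      ← map_inv, ← map_mul, ← map_mul, eq_comm]
    congr 1
    rw [mul_inv_eq_iff_eq_mul, ← vv_add, ← vv_add, add_comm]
  have hw2 : ((MulAut.conj (pr (vv z)))⁻¹ * y) (pr (uu 1)) = pr (uu n) := by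
    rw [MulAut.mul_apply, MulAut.inv_apply, MulEquiv.symm_apply_eq, ← hM₀, ← hM,
      MulAut.conj_apply, ← map_inv, ← map_mul, ← map_mul]
    congr 1
    rw [eq_mul_inv_iff_mul_eq, hz]
  obtain ⟨σ, hσ⟩ := exists_field_aut hw1 hn hw2
  have h3 := (rep_psl Q hQ).mul ((rep_conj (vv z)).mul hσ)
  have hx' : x = psl Q hQ * (MulAut.conj (pr (vv z)) * ((MulAut.conj (pr (vv z)))⁻¹ * y)) := by
    rw [mul_inv_cancel_left, hxy]
  rw [hx']
  exact ⟨_, _, h3⟩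

end ESec
end PSLBeta

/-! ### Field automorphisms -/

namespace PSLBeta

section FSec
variable {F : Type} [Field F]

lemma rep_one : Rep (1 : MulAut (P2 F)) 1 (1 : RingAut F) := by
  refine ⟨by simp, fun g h e => ?_⟩
  have e' : h.1 * 1 = 1 * g.1 := e
  rw [Matrix.mul_one, Matrix.one_mul] at e'
  rw [Subtype.ext e']
  rfl

/-- A semilinear map inducing the trivial automorphism has trivial `σ` and scalar matrix. -/
lemma trivial_of_rep_one {P : M2 F} {τ : F ≃+* F} (h : Rep 1 P τ) :
    (∀ a, τ a = a) ∧ ∃ p : F, p ≠ 0 ∧ P = p • (1 : M2 F) := by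
  have hP := h.1
  have key : ∀ g : S2 F, g.1 * P = P * g.1.map τ ∨ -(g.1 * P) = P * g.1.map τ := by
    intro g
    obtain ⟨k, hk⟩ := exists_conj hP τ g
    have := h.2 g k hk
    rw [MulAut.one_apply, pr_eq] at this
    rcases this with rfl | rfl
    · exact Or.inl hk
    · right
      rw [← hk, Matrix.SpecialLinearGroup.coe_neg, Matrix.neg_mul, neg_neg]
  obtain ⟨p, q, r, s, rfl⟩ : ∃ a b c d, P = !![a, b; c, d] := ⟨_, _, _, _, Matrix.eta_fin_two P⟩
  rw [Matrix.det_fin_two_of] at hP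
  have hu : ∀ a, a * r = 0 ∧ a * s = p * τ a := by
    intro a
    have h00 := key (uu a)
    rw [← Matrix.ext_iff, ← Matrix.ext_iff] at h00
    simp [Fin.forall_fin_two, uu, Matrix.mul_apply, Fin.sum_univ_two] at h00
    grind
  have hv : ∀ a, a * q = 0 := by
    intro a
    have h00 := key (vv a)
    rw [← Matrix.ext_iff, ← Matrix.ext_iff] at h00
    simp [Fin.forall_fin_two, vv, Matrix.mul_apply, Fin.sum_univ_two] at h00
    grind
  have hr : r = 0 := by simpa using (hu 1).1
  have hs : s = p := by simpa using (hu 1).2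
  have hq : q = 0 := by simpa using hv 1
  subst hr hs hq
  have hs0 : s ≠ 0 := by rintro rfl; simp at hP
  refine ⟨fun a => mul_left_cancel₀ hs0 (by rw [← (hu a).2, mul_comm]), s, hs0, ?_⟩
  apply m2_ext <;> simp

/-- The matrix `P σ(P) ⋯ σⁿ⁻¹(P)` of the `n`-th power of the semilinear map `v ↦ P σ(v)`. -/
def semiPow (σ : RingAut F) (P : M2 F) : ℕ → M2 F
  | 0 => 1
  | n + 1 => P * (semiPow σ P n).map σ

/-- The partial norm `k σ(k) ⋯ σⁿ⁻¹(k)`. -/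
def semiNorm (σ : RingAut F) (k : F) : ℕ → F
  | 0 => 1
  | n + 1 => k * σ (semiNorm σ k n)

lemma rep_pow {x : MulAut (P2 F)} {P : M2 F} {σ : RingAut F} (hx : Rep x P σ) (n : ℕ) :
    Rep (x ^ n) (semiPow σ P n) (σ ^ n : RingAut F) := by
  induction n with
  | zero => rw [pow_zero, pow_zero]; exact rep_one
  | succ n ih => rw [pow_succ', pow_succ']; exact hx.mul ih

lemma semiPow_succ (σ : RingAut F) (P : M2 F) (n : ℕ) :
    semiPow σ P (n + 1) = semiPow σ P n * P.map (σ ^ n : RingAut F) := by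
  induction n with
  | zero =>
    simp only [semiPow, pow_zero]
    have h1 : (1 : M2 F).map σ = 1 := by apply m2_ext <;> simp
    have h2 : P.map (1 : RingAut F) = P := by ext; rfl
    rw [h1, h2, Matrix.mul_one, Matrix.one_mul]
  | succ n ih =>
    change P * (semiPow σ P (n + 1)).map σ =
      P * (semiPow σ P n).map σ * P.map (σ ^ (n + 1) : RingAut F)
    rw [ih, map_mul', ← Matrix.mul_assoc, pow_succ']
    rfl

lemma semiNorm_mul (σ : RingAut F) (k l : F) (n : ℕ) :
    semiNorm σ (k * l) n = semiNorm σ k n * semiNorm σ l n := by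
  induction n with
  | zero => simp [semiNorm]
  | succ n ih => simp only [semiNorm, ih, map_mul]; ring

lemma semiNorm_one (σ : RingAut F) (n : ℕ) : semiNorm σ 1 n = 1 := by
  induction n with
  | zero => simp [semiNorm]
  | succ n ih => simp [semiNorm, ih]

lemma semiNorm_pow (σ : RingAut F) (k : F) (n j : ℕ) :
    semiNorm σ (k ^ j) n = semiNorm σ k n ^ j := by
  induction j with
  | zero => simp [semiNorm_one]
  | succ j ih => rw [pow_succ, semiNorm_mul, ih, pow_succ]

lemma semiNorm_fixed (σ : RingAut F) {k : F} (hk : σ k = k) (n : ℕ) :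
    semiNorm σ k n = k ^ n := by
  induction n with
  | zero => simp [semiNorm]
  | succ n ih => simp only [semiNorm, ih, map_pow, hk]; ring

lemma semiPow_smul (σ : RingAut F) (k : F) (P : M2 F) (n : ℕ) :
    semiPow σ (k • P) n = semiNorm σ k n • semiPow σ P n := by
  induction n with
  | zero => simp [semiPow, semiNorm]
  | succ n ih =>
    rw [semiPow, ih, semiPow, semiNorm]
    have : (semiNorm σ k n • semiPow σ P n).map σ =
        σ (semiNorm σ k n) • (semiPow σ P n).map σ := by
      ext; simp
    rw [this, Matrix.smul_mul, Matrix.mul_smul, smul_smul]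

lemma det_semiPow (σ : RingAut F) (P : M2 F) (n : ℕ) :
    (semiPow σ P n).det = semiNorm σ P.det n := by
  induction n with
  | zero => simp [semiPow, semiNorm]
  | succ n ih => rw [semiPow, semiNorm, Matrix.det_mul, det_map, ih]

/-- Every fixed element of an involutory automorphism of a finite field is a norm. -/
lemma exists_norm_two [Finite F] {σ : RingAut F} (hσ : σ ≠ 1) (h2 : ∀ a, σ (σ a) = a) {c : F}
    (hc : σ c = c) : ∃ k, k * σ k = c := by
  have : Fintype F := Fintype.ofFinite F
  by_cases hch : (2 : F) = 0
  · have hr : ringChar F = 2 := by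
      have : ringChar F ∣ 2 := ringChar.dvd (by exact_mod_cast hch)
      rcases (Nat.dvd_prime Nat.prime_two).1 this with h | h
      · exact absurd h (CharP.ringChar_ne_one)
      · exact h
    obtain ⟨k, hk⟩ := FiniteField.isSquare_of_char_two hr c
    have e : (σ k - k) ^ 2 = 0 := by
      have := congrArg σ hk
      rw [hc, map_mul] at this
      linear_combination -this + hk + (k ^ 2 - k * σ k) * hch
    have e1 : σ k = k := by
      have := pow_eq_zero_iff two_ne_zero |>.1 e
      linear_combination this
    exact ⟨k, by rw [e1, ← hk]⟩
  · obtain ⟨b, hb⟩ : ∃ b, σ b ≠ b := by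
      by_contra! h
      exact hσ (RingEquiv.ext h)
    set β := b - σ b with hβ
    have hβ0 : β ≠ 0 := fun h => hb (by linear_combination -h)
    have hσβ : σ β = -β := by rw [hβ, map_sub, h2]; ring
    let K : Subfield F := RingHom.eqLocusField (σ : F →+* F) (RingHom.id F)
    have memK : ∀ {z}, z ∈ K ↔ σ z = z := Iff.rfl
    have : Fintype K := Fintype.ofFinite K
    have hδ : β ^ 2 ∈ K := by rw [memK, map_pow, hσβ]; ring
    obtain ⟨u, v, huv⟩ := exists_norm (F := K) (by
      intro h; apply hch; have h' := congrArg K.subtype h; rwa [map_ofNat, map_zero] at h') (δ := ⟨β ^ 2, hδ⟩)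
      (by intro h; exact pow_ne_zero 2 hβ0 (congrArg Subtype.val h)) ⟨c, hc⟩
    have e : (u : F) ^ 2 - β ^ 2 * (v : F) ^ 2 = c := congrArg Subtype.val huv
    refine ⟨u + v * β, ?_⟩
    have eu : σ (u : F) = u := u.2
    have ev : σ (v : F) = v := v.2
    rw [map_add, map_mul, eu, ev, hσβ]
    linear_combination e

/-- A fixed vector of a semilinear map of finite order outside the kernel of a given functional:
the average `∑ X^i (l • v)` is fixed, and independence of characters provides the scalar `l`. -/
lemma exists_fixed {σ : RingAut F} {P : M2 F} (he : 0 < orderOf σ)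
    (hP : semiPow σ P (orderOf σ) = 1) (r : Fin 2 → F) (hr : r ≠ 0) :
    ∃ w : Fin 2 → F, P *ᵥ (fun i => σ (w i)) = w ∧ r ⬝ᵥ w ≠ 0 := by
  set e := orderOf σ with he'
  obtain ⟨j, hj⟩ : ∃ j, r j ≠ 0 := by
    by_contra! h
    exact hr (funext h)
  let a : ℕ → F → Fin 2 → F := fun i l => ((σ ^ i : RingAut F) l) • (semiPow σ P i).col j
  have hfix : ∀ l, P *ᵥ (fun m => σ ((∑ i ∈ Finset.range e, a i l) m)) =
      ∑ i ∈ Finset.range e, a i l := by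
    intro l
    have step : ∀ i, P *ᵥ (fun m => σ (a i l m)) = a (i + 1) l := by
      intro i
      ext m
      simp only [a, Matrix.mulVec, dotProduct, Fin.sum_univ_two, Pi.smul_apply, Matrix.col_apply,
        smul_eq_mul, map_mul, semiPow, Matrix.mul_apply, Matrix.map_apply, pow_succ',
        RingAut.mul_apply]
      ring
    have hsum : (fun m => σ ((∑ i ∈ Finset.range e, a i l) m)) =
        ∑ i ∈ Finset.range e, fun m => σ (a i l m) := by
      ext m
      simp [Finset.sum_apply]
    rw [hsum, Matrix.mulVec_sum]
    simp only [step]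
    have h0 : a e l = a 0 l := by
      simp only [a, hP, semiPow]
      rw [he', pow_orderOf_eq_one, pow_zero]
    have h1 := Finset.sum_range_succ (fun i => a i l) e
    rw [Finset.sum_range_succ', h0] at h1
    exact add_right_cancel h1
  by_contra! hno
  let χ : Fin e → (F →* F) := fun i => ((σ ^ (i : ℕ) : RingAut F) : F →* F)
  have hχ : Function.Injective χ := by
    intro i i' h
    have : (σ ^ (i : ℕ) : RingAut F) = σ ^ (i' : ℕ) := by
      ext z
      exact DFunLike.congr_fun h z
    exact Fin.ext (pow_injOn_Iio_orderOf (x := σ) i.2 i'.2 this)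
  have hli := (linearIndependent_monoidHom F F).comp χ hχ
  rw [Fintype.linearIndependent_iff] at hli
  have := hli (fun i => r ⬝ᵥ (semiPow σ P i).col j) (by
    ext l
    have h := hno _ (hfix l)
    rw [dotProduct_sum] at h
    rw [Finset.sum_apply, Pi.zero_apply, ← h, Finset.sum_range]
    refine Finset.sum_congr rfl fun i _ => ?_
    simp only [a, dotProduct_smul, Pi.smul_apply, smul_eq_mul]
    exact mul_comm _ _) ⟨0, he⟩
  apply hj
  have h3 : (semiPow σ P 0).col j = Pi.single j 1 := by
    ext m
    simp [semiPow, Matrix.one_apply, Pi.single_apply]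
  simpa [h3] using this

/-- Hilbert's theorem 90: an automorphism of prime order inducing a nontrivial field
automorphism is conjugate to a pure field automorphism: the semilinear map is rescaled so that its `e`-th power is `1`,
and then has a basis of fixed vectors. -/
lemma hilbert90 [Finite F] {x : MulAut (P2 F)} {P : M2 F} {σ : RingAut F} {s m : ℕ}
    (hx : Rep x P σ) (hσ : σ ≠ 1) (hp : (orderOf x).Prime)
    (hb : orderOf σ = orderOf x → ∀ y : MulAut (P2 F), Rep y 1 σ → betaLE y s m) :
    betaLE x s m := by
  have h1 := rep_pow hx (orderOf x)
  rw [pow_orderOf_eq_one] at h1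
  obtain ⟨hτ, c, hc0, hc⟩ := trivial_of_rep_one h1
  have hσe : σ ^ orderOf x = 1 := RingEquiv.ext hτ
  have := Fact.mk hp
  have hord : orderOf σ = orderOf x := orderOf_eq_prime hσe hσ
  generalize orderOf x = e at *
  -- Comparing `P σ(c) = c P` gives that `c` is fixed by `σ`.
  have hcfix : σ c = c := by
    have h2 := semiPow_succ σ P e
    rw [semiPow, hc, hσe] at h2
    have e1 : (c • (1 : M2 F)).map σ = σ c • (1 : M2 F) := by apply m2_ext <;> simp
    have e2 : P.map (1 : RingAut F) = P := by ext; rfl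
    rw [e1, e2, Matrix.mul_smul, Matrix.smul_mul, Matrix.mul_one, Matrix.one_mul] at h2
    by_contra hne
    apply hx.1
    have h3 : (σ c - c) • P = 0 := by rw [sub_smul, h2, sub_self]
    have h4 : P = 0 := (smul_eq_zero.1 h3).resolve_left (sub_ne_zero.2 hne)
    rw [h4]; simp
  obtain ⟨k, hk⟩ : ∃ k, semiNorm σ k e = c := by
    rcases hp.eq_two_or_odd' with rfl | ⟨j, hj⟩
    · obtain ⟨k, hk⟩ := exists_norm_two hσ (fun a => by
        have := DFunLike.congr_fun hσe a
        rwa [pow_two] at this) hcfix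
      exact ⟨k, by simpa [semiNorm] using hk⟩
    · -- Taking determinants, `c²` is the norm of `det P`, while `cᵉ` is the norm of `c`.
      have h2 : semiNorm σ P.det e = c ^ 2 := by
        rw [← det_semiPow, hc]; simp
      have h3 : semiNorm σ (P.det⁻¹) e * c ^ 2 = 1 := by
        rw [← h2, ← semiNorm_mul, inv_mul_cancel₀ hx.1, semiNorm_one]
      refine ⟨c * (P.det⁻¹) ^ j, ?_⟩
      rw [semiNorm_mul, semiNorm_pow, semiNorm_fixed σ hcfix]
      have : c ^ e = c * (c ^ 2) ^ j := by rw [hj, ← pow_mul]; ring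
      rw [this, mul_assoc, ← mul_pow, mul_comm (c ^ 2), h3, one_pow, mul_one]
  have hk0 : k ≠ 0 := by
    rintro rfl
    apply hc0
    rw [← hk]
    obtain ⟨n, rfl⟩ : ∃ n, e = n + 1 := ⟨e - 1, by have := hp.pos; omega⟩
    simp [semiNorm]
  have hx' := hx.smul (inv_ne_zero hk0)
  have hP1 : semiPow σ (k⁻¹ • P) e = 1 := by
    rw [semiPow_smul, hc, smul_smul, ← hk, ← semiNorm_mul, inv_mul_cancel₀ hk0, semiNorm_one,
      one_smul]
  rw [← hord] at hP1
  have hpos : 0 < orderOf σ := hord ▸ hp.pos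
  -- Two independent fixed vectors form a basis in which the semilinear map is `σ` itself.
  obtain ⟨w, hw, hw1⟩ := exists_fixed hpos hP1 ![1, 0] (by simp)
  have hw0 : w 0 ≠ 0 := by simpa [dotProduct, Fin.sum_univ_two] using hw1
  obtain ⟨z, hz, hz1⟩ := exists_fixed hpos hP1 ![-w 1, w 0] (by simp [hw0])
  refine betaLE_rep hx' (Q := !![w 0, z 0; w 1, z 1]) (P' := 1) ?_ ?_ (hb hord)
  · rw [Matrix.det_fin_two_of]
    simp [dotProduct, Fin.sum_univ_two] at hz1
    intro h; apply hz1; linear_combination h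
  · rw [Matrix.mul_one]
    generalize k⁻¹ • P = P₁ at hw hz
    have a0 := congrFun hw 0
    have a1 := congrFun hw 1
    have b0 := congrFun hz 0
    have b1 := congrFun hz 1
    simp only [Matrix.mulVec, dotProduct, Fin.sum_univ_two] at a0 a1 b0 b1
    apply m2_ext <;> simpa [Matrix.mul_apply, Fin.sum_univ_two]

/-- By telescoping, `k σ²ⁿ⁺¹(k)` has the form `a σ(a)`; if `σ` has order `2 * n + 1`, this makes `k²` of
that form. -/
lemma exists_mul_map (σ : RingAut F) {k : F} (hk : k ≠ 0) (n : ℕ) :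
    ∃ a, a * σ a = k * (σ ^ (2 * n + 1) : RingAut F) k := by
  induction n with
  | zero => exact ⟨k, by simp⟩
  | succ n ih =>
    obtain ⟨a, ha⟩ := ih
    have h1 : (σ ^ (2 * n + 1) : RingAut F) k ≠ 0 := fun h => hk ((map_eq_zero_iff _ (RingEquiv.injective _)).1 h)
    have h2 : (σ ^ (2 * n + 2) : RingAut F) k ≠ 0 := fun h => hk ((map_eq_zero_iff _ (RingEquiv.injective _)).1 h)
    have e1 : σ ((σ ^ (2 * n + 1) : RingAut F) k) = (σ ^ (2 * n + 2) : RingAut F) k := by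
      rw [pow_succ' σ (2 * n + 1)]; rfl
    have e2 : σ ((σ ^ (2 * n + 2) : RingAut F) k) = (σ ^ (2 * (n + 1) + 1) : RingAut F) k := by
      rw [show 2 * (n + 1) + 1 = (2 * n + 2) + 1 by ring, pow_succ' σ (2 * n + 2)]; rfl
    refine ⟨a * (σ ^ (2 * n + 2) : RingAut F) k / (σ ^ (2 * n + 1) : RingAut F) k, ?_⟩
    rw [map_div₀, map_mul, e1, e2]
    field_simp
    linear_combination (σ ^ (2 * (n + 1) + 1) : RingAut F) k * ha

lemma exists_beta {σ : RingAut F} (hσ : σ ≠ 1) : ∃ b, σ b - b ≠ 0 := by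
  by_contra! h
  exact hσ (RingEquiv.ext fun b => by simpa [sub_eq_zero] using h b)

lemma field_apply {y : MulAut (P2 F)} {σ : RingAut F} (hy : Rep y 1 σ) {a b c d : F}
    (h : a * d - b * c = 1) : y (pr (sm a b c d h)) =
      pr (sm (σ a) (σ b) (σ c) (σ d) (by rw [← map_mul, ← map_mul, ← map_sub, h, map_one])) := by
  apply hy.2
  rw [Matrix.mul_one, Matrix.one_mul]
  apply m2_ext <;> simp

lemma field_uu {y : MulAut (P2 F)} {σ : RingAut F} (hy : Rep y 1 σ) (b : F) :
    (pr (uu b))⁻¹ * y (pr (uu b)) = pr (uu (σ b - b)) := by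
  rw [uu, field_apply hy, ← map_inv, ← map_mul]
  congr 1
  rw [sm_inv, sm_mul, uu, sm_inj]
  simp
  ring

/-- For a field automorphism, some `g⁻¹ σ(g)` is a nontrivial transvection, and `lemmaC` applies to
it. -/
lemma betaLE_four_field [Fintype F] {y : MulAut (P2 F)} {σ : RingAut F} {s : ℕ} (hs : s.Prime)
    (hodd : Odd s) (hd : s ∣ Nat.card (P2 F)) (hσ : σ ≠ 1) (hy : Rep y 1 σ) : betaLE y s 4 := by
  obtain ⟨c, hc, -⟩ := exists_good hs hodd hd
  obtain ⟨b, hb⟩ := exists_beta hσ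
  refine betaLE_double (m := 2) (pr (uu b)) ?_
  rw [field_uu hy]
  refine lemmaC hs (rep_conj _) (Or.inl (by simpa [uu] using hb)) hc ?_
  by_cases h2 : (2 : F) = 0
  · left
    intro h
    exact hc.1 (pow_eq_zero_iff two_ne_zero |>.1 (by linear_combination h + 2 * h2))
  · right
    simp only [uu, sm_val, Matrix.trace_fin_two_of]
    rwa [one_add_one_eq_two]

/-- For a field automorphism, three conjugates give a transvection `u(t)` with `t = σ(b) - b` and an
element `Y = g⁻¹ σ(g)`. If `r` is the lower left entry of `Y`, then `Y u(t) Y⁻¹ u(t)` has trace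
`2 - (r t)²`, and `g` is chosen with `(r t)² = 1`, giving an element of order `3`. -/
lemma betaLE_three_field {y : MulAut (P2 F)} {σ : RingAut F} {e : ℕ} (he : e.Prime)
    (hσe : σ ^ e = 1) (hσ : σ ≠ 1) (hy : Rep y 1 σ) : betaLE y 3 3 := by
  obtain ⟨b, hb⟩ := exists_beta hσ
  obtain ⟨a, c, ha, hac⟩ : ∃ a c, a ≠ 0 ∧ ((a * σ c - c * σ a) * (σ b - b)) ^ 2 = 1 := by
    rcases he.eq_two_or_odd' with rfl | ⟨n, rfl⟩
    · have h2 : σ (σ b) = b := by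
        have := DFunLike.congr_fun hσe b
        rwa [pow_two] at this
      refine ⟨1, b / (σ b - b) ^ 2, one_ne_zero, ?_⟩
      have : (b - σ b) ^ 2 = (σ b - b) ^ 2 := by ring
      rw [map_one, map_div₀, map_pow, map_sub, h2, this]
      field_simp
    · obtain ⟨a, ha⟩ := exists_mul_map σ (inv_ne_zero hb) n
      rw [hσe, RingAut.one_apply] at ha
      refine ⟨a, a * b, ?_, ?_⟩
      · rintro rfl
        simp [hb] at ha
      · have : (a * σ (a * b) - a * b * σ a) * (σ b - b) = (a * σ a) * (σ b - b) ^ 2 := by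
          rw [map_mul]; ring
        rw [this, ha]
        field_simp
  set t := σ b - b with ht
  have hdet : a * a⁻¹ - 0 * c = 1 := by rw [mul_inv_cancel₀ ha]; ring
  obtain ⟨p, q, r, s, hY, hYe⟩ : ∃ p q r s h,
      (pr (sm a 0 c a⁻¹ hdet))⁻¹ * y (pr (sm a 0 c a⁻¹ hdet)) = pr (sm p q r s h) ∧
        (r * t) ^ 2 = 1 := by
    rw [field_apply hy, ← map_inv, ← map_mul, sm_inv, sm_mul]
    refine ⟨_, _, _, _, _, rfl, ?_⟩
    linear_combination hac
  have hr : r ≠ 0 := by rintro rfl; simp at hYe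
  have hW : (sm p q r s hY * uu t * (sm p q r s hY)⁻¹ * uu t).1 =
      !![1 - p * r * t, (1 - p * r * t) * t + p ^ 2 * t;
        -(r ^ 2 * t), 1 + p * r * t - r ^ 2 * t ^ 2] := by
    rw [uu, sm_inv, sm_mul, sm_mul, sm_mul, sm_val]
    apply m2_ext <;> simp <;> grind
  refine betaLE_of_good Nat.prime_three ![1, pr (uu b), pr (sm a 0 c a⁻¹ hdet)]
    (sm p q r s hY * uu t * (sm p q r s hY)⁻¹ * uu t) ?_ ?_ ?_
  · right; left
    rw [hW]
    simp [hr, hb]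
  · apply pow_three_of_trace_one
    rw [hW, Matrix.trace_fin_two_of]
    linear_combination -hYe.2
  · set K := Subgroup.closure (Set.range fun i =>
      autConj y (![1, pr (uu b), pr (sm a 0 c a⁻¹ hdet)] i)) with hK
    have m0 : autConj y 1 ∈ K := Subgroup.subset_closure ⟨0, rfl⟩
    have m1 : autConj y (pr (uu b)) ∈ K := Subgroup.subset_closure ⟨1, rfl⟩
    have m2 : autConj y (pr (sm a 0 c a⁻¹ hdet)) ∈ K := Subgroup.subset_closure ⟨2, rfl⟩
    rw [autConj_one] at m0
    have mu : MulAut.conj (pr (uu t)) ∈ K := by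
      rw [ht, ← field_uu hy, ← autConj_mul_inv]
      exact mul_mem m1 (inv_mem m0)
    have mY : MulAut.conj (pr (sm p q r s hY)) ∈ K := by
      rw [← hYe.1, ← autConj_mul_inv]
      exact mul_mem m2 (inv_mem m0)
    simp only [map_mul, map_inv]
    exact mul_mem (mul_mem (mul_mem mY mu) (inv_mem mY)) mu

end FSec
end PSLBeta

theorem statement_15 (q : ℕ) (hq : IsPrimePow q) (hq4 : 4 ≤ q)
    (F : Type) [Field F] [Fintype F] (hF : Fintype.card F = q)
    (x : MulAut (Matrix.ProjectiveSpecialLinearGroup (Fin 2) F))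
    (hx : (orderOf x).Prime)
    (r : ℕ) (hr : r.Prime) (hrodd : Odd r)
    (s : ℕ) (hs : s.Prime)
    (hsL : s ∣ Nat.card (Matrix.ProjectiveSpecialLinearGroup (Fin 2) F))
    (hsr : r ∣ Nat.card (Matrix.ProjectiveSpecialLinearGroup (Fin 2) F) → s = r)
    (hsr' : ¬ r ∣ Nat.card (Matrix.ProjectiveSpecialLinearGroup (Fin 2) F) → r < s) :
    betaLE x s (if r = 3 then 3 else r - 1) := by
  obtain ⟨P, σ, hrep⟩ := PSLBeta.exists_rep x
  have hr3 : r ≠ 3 → 4 ≤ r - 1 := by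
    intro h
    have := hr.two_le
    obtain ⟨j, rfl⟩ := hrodd
    omega
  have hs3 : r = 3 → s = 3 := by
    rintro rfl
    exact hsr PSLBeta.three_dvd
  have hrs : r ≤ s := by
    by_cases h : r ∣ Nat.card (Matrix.ProjectiveSpecialLinearGroup (Fin 2) F)
    · exact (hsr h).ge
    · exact (hsr' h).le
  have hodd : Odd s := by
    refine hs.odd_of_ne_two ?_
    have := hr.two_le
    obtain ⟨j, rfl⟩ := hrodd
    omega
  by_cases hσ : σ = (1 : RingAut F)
  · subst hσ
    have hP : PSLBeta.NS P := by
      by_contra hNS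
      simp only [PSLBeta.NS, not_or, not_not] at hNS
      obtain ⟨h01, h10, h00⟩ := hNS
      have hPs : P = P 0 0 • (1 : Matrix (Fin 2) (Fin 2) F) := by
        apply PSLBeta.m2_ext <;> simp [h01, h10, h00]
      have hp0 : P 0 0 ≠ 0 := by
        intro h
        apply hrep.1
        rw [hPs, h, zero_smul]
        simp
      have h1 : PSLBeta.Rep 1 P (1 : RingAut F) := by
        rw [hPs]
        exact PSLBeta.rep_one.smul hp0
      rw [hrep.ext h1, orderOf_one] at hx
      exact Nat.not_prime_one hx
    split_ifs with h3
    · rw [hs3 h3]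
      exact PSLBeta.betaLE_three_refl (hF ▸ hq4) hrep hP
    · exact PSLBeta.betaLE_mono (hr3 h3) (by norm_num)
        (PSLBeta.betaLE_four_refl hs hodd hsL (by have := hr3 h3; omega) hrep hP)
  · refine PSLBeta.hilbert90 hrep hσ hx fun hord y hy => ?_
    split_ifs with h3
    · rw [hs3 h3]
      exact PSLBeta.betaLE_three_field hx (hord ▸ pow_orderOf_eq_one σ) hσ hy
    · exact PSLBeta.betaLE_mono (hr3 h3) (by norm_num)
        (PSLBeta.betaLE_four_field hs hodd hsL hσ hy)
end
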